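/- With pinning ε=(π_i ε)_{i∈V}, all of the following limits as ε↓0 exist and satisfy: 0 < lim_{ε↓0} E_{μ^ε}[O^π_xy · 1{R(T)={x}}] = lim_{ε↓0} E_{μ^{ε_xδ_x}}[O^π_xy · √(π_x e^{t_x}/Σ_{i∈V} π_i e^{t_i}) · Π_{i∈V∖{x}} e^{−½επ_i e^{t_i}}] ≤ lim_{ε↓0} E_{μ^{ε_xδ_x}}[O^π_xy] ≤ min{1/π_x, 1/π_y}. -/

import Mathlib

/-!
Every expectation below is an integral over `(t, s)`, and the pinning is removed by following the zero
mode. In the coordinates `t = c + û`, `s = a + e^{-c} v̂`, where `û` and `v̂` vanish at `x`, the density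
with a tree weight but without pinning splits into a factor in `c = t_x` and a factor in `(û, v̂)`
(`lintegral_cv`, `lintegral_freeDens`). In all three expectations only the spanning trees with the single
root `x` contribute; such a tree carries one factor `π_x ε e^{t_x}`. Writing `t_x = r - log ε`, this `ε`
is absorbed, the pinning factors converge to functions of `e^r` and `a`, and dominated convergence gives
the limits (`tendsto_rescaled`, `tendsto_expect`). The zero mode then integrates to
`π_x / ∑ π_i e^{û_i}`, both for the full pinning (`lintegral_zeroMode_eq`) and for the pinning at `x`
with the square root weight (`lintegral_zeroMode_sqrt`), and to `1` for the pinning at `x` alone. So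
`L₁ = L₂ ≤ L₃`, where `L₃` is the integral of `e^{û_y} / (π_x + π_y e^{û_y})` against the measure pinned
at `x` (`t_x = s_x = 0`).

The domination and the upper bound both rest on the fact that this pinned measure has total mass at most
one (`mass_le_one`; equality holds but is not needed). The sum over trees is at most the determinant of
the reduced Laplacian (`treeSum_le_det`), and the Gaussian integral over `s` leaves its square root. The
change of variables from `û` to the diagonal `b` of the Schrödinger operator `H_b = b - W` solving
`H_b e^û = η` turns the remaining integral into one of `Hdens`, which is integrated one coordinate of `b`
at a time: a Schur complement reduces the last coordinate to an inverse Gaussian integral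
(`lintegral_Hdens_le`, `lintegral_invGauss_le`). Since the observable is at most `1 / π_y`, so is `L₃`.
It is also at most `e^{û_y} / π_x`, and the integral of `e^{û_y}` is at most the mass of the measure
pinned at `y` (`lintegral_tilt_le`); this gives `L₃ ≤ 1 / π_x`.
-/

open MeasureTheory Real Filter
open scoped BigOperators

attribute [local instance] Classical.propDecidable

namespace H22

variable {V : Type*} [Fintype V] [DecidableEq V]

/-- The augmented graph `Γ_ρ`: add an extra vertex `ρ` (encoded by `none`)
joined to every vertex of the original graph. -/
def aug (G : SimpleGraph V) : SimpleGraph (Option V) :=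
  SimpleGraph.fromRel (fun a b =>
    match a, b with
    | some i, some j => G.Adj i j
    | _, _ => True)

/-- `T` is (the edge set of) a spanning tree of `G`. -/
def IsSpanningTree {α : Type*} (G : SimpleGraph α) (T : Finset (Sym2 α)) : Prop :=
  ↑T ⊆ G.edgeSet ∧ (SimpleGraph.fromEdgeSet (↑T : Set (Sym2 α))).IsTree

/-- The finset of all spanning trees of `G`. -/
noncomputable def STrees {α : Type*} [Fintype α] [DecidableEq α] (G : SimpleGraph α) :
    Finset (Finset (Sym2 α)) :=
  Finset.univ.filter (fun T => IsSpanningTree G T)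

/-- Extension of a vector `t : V → ℝ` to `Option V` by `t_ρ := 0`. -/
def extV (t : V → ℝ) : Option V → ℝ := fun a => Option.elim a 0 t

/-- Lift of a (symmetrized) function of two vertices to unordered pairs. -/
noncomputable def esym {α : Type*} (f : α → α → ℝ) : Sym2 α → ℝ :=
  Sym2.lift ⟨fun a b => (f a b + f b a) / 2, fun a b => by ring⟩

/-- Combined edge weights on the augmented graph: `β` on edges of `Γ`,
`ε_i` on the edge `i ∼ ρ`. -/
def bres (β : V → V → ℝ) (ε : V → ℝ) : Option V → Option V → ℝ := fun a b =>
  match a, b with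
  | some i, some j => β i j
  | some i, none => ε i
  | none, some j => ε j
  | none, none => 0

/-- `B_{ij}(t,s) = cosh(t_i - t_j) + ½ (s_i - s_j)² e^{t_i+t_j}` on the augmented graph. -/
noncomputable def Bfun (t s : V → ℝ) (a b : Option V) : ℝ :=
  Real.cosh (extV t a - extV t b) +
    (1 / 2) * (extV s a - extV s b) ^ 2 * Real.exp (extV t a + extV t b)

/-- Weight `β_{ij} e^{t_i+t_j}` of an edge of the augmented graph. -/
noncomputable def treeW (β : V → V → ℝ) (ε : V → ℝ) (t : V → ℝ) : Sym2 (Option V) → ℝ :=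
  esym (fun a b => bres β ε a b * Real.exp (extV t a + extV t b))

/-- Gibbs factor `e^{-β_{ij}(B_{ij}(t,s)-1)}` of an edge of the augmented graph. -/
noncomputable def gibbs (β : V → V → ℝ) (ε : V → ℝ) (t s : V → ℝ) : Sym2 (Option V) → ℝ :=
  esym (fun a b => Real.exp (-(bres β ε a b * (Bfun t s a b - 1))))

/-- The density of the measure `μ^ε` with respect to
(Lebesgue on `ℝ^V × ℝ^V`) × (counting measure on spanning trees). -/
noncomputable def dens (G : SimpleGraph V) (β : V → V → ℝ) (ε : V → ℝ)
    (t s : V → ℝ) (T : Finset (Sym2 (Option V))) : ℝ :=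
  (∏ j, Real.exp (-t j) / (2 * Real.pi)) *
  (∏ e ∈ Finset.univ.filter (fun e : Sym2 (Option V) => e ∈ (aug G).edgeSet),
      gibbs β ε t s e) *
  (∏ e ∈ T, treeW β ε t e)

/-- Expectation of an observable `f(t,s,T)` under the measure `μ^ε`. -/
noncomputable def expect (G : SimpleGraph V) (β : V → V → ℝ) (ε : V → ℝ)
    (f : (V → ℝ) → (V → ℝ) → Finset (Sym2 (Option V)) → ℝ) : ℝ :=
  ∑ T ∈ STrees (aug G), ∫ p : (V → ℝ) × (V → ℝ), dens G β ε p.1 p.2 T * f p.1 p.2 T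

/-- The weighted graph Laplacian `A(t)` of `Γ`. -/
noncomputable def Amat (G : SimpleGraph V) (β : V → V → ℝ) (t : V → ℝ) : Matrix V V ℝ :=
  Matrix.of fun i j =>
    if i = j then ∑ k ∈ Finset.univ.filter (fun k => G.Adj k j), β k j * Real.exp (t k + t j)
    else if G.Adj i j then -(β i j * Real.exp (t i + t j)) else 0

/-- The pinning diagonal matrix `ε̂(t) = diag(ε_i e^{t_i})`. -/
noncomputable def epsHat (ε : V → ℝ) (t : V → ℝ) : Matrix V V ℝ :=
  Matrix.diagonal fun i => ε i * Real.exp (t i)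

/-- The Green's function `G^ε_{xy} = e^{t_x+t_y} (A(t)+ε̂(t))⁻¹_{xy}`. -/
noncomputable def Gfun (G : SimpleGraph V) (β : V → V → ℝ) (ε : V → ℝ)
    (t : V → ℝ) (x y : V) : ℝ :=
  Real.exp (t x + t y) * (Amat G β t + epsHat ε t)⁻¹ x y

/-- The edge `i ∼ ρ` of the augmented graph. -/
def rootEdge (i : V) : Sym2 (Option V) := s(some i, none)

/-- The set of roots `R(T) = {i ∈ V : (i ∼ ρ) ∈ T}`. -/
noncomputable def roots (T : Finset (Sym2 (Option V))) : Finset V :=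
  Finset.univ.filter fun i => rootEdge i ∈ T

/-- The forest `F(T) = T ∩ E`: edges of `T` not incident to `ρ`. -/
noncomputable def forestOf (T : Finset (Sym2 (Option V))) : Finset (Sym2 (Option V)) :=
  T.filter fun e => ¬ ((none : Option V) ∈ e)

/-- `x ↔_T y`: `x` and `y` are connected in `T` through a path not using `ρ`. -/
def connIn (T : Finset (Sym2 (Option V))) (x y : V) : Prop :=
  (SimpleGraph.fromEdgeSet (↑(forestOf T) : Set (Sym2 (Option V)))).Reachable (some x) (some y)

/-- The observable `O^π_{xy}`. -/
noncomputable def obs (pv : V → ℝ) (x y : V) (t : V → ℝ)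
    (T : Finset (Sym2 (Option V))) : ℝ :=
  Real.exp (t x + t y) / (pv x * Real.exp (t x) + pv y * Real.exp (t y)) *
    (if rootEdge x ∈ T ∧ connIn T x y then 1 else 0)

/-- The pinning `ε = (π_i ε)_{i ∈ V}`. -/
def pinOf (pv : V → ℝ) (ε : ℝ) : V → ℝ := fun i => pv i * ε

/-- The pinning `c δ_x` concentrated at the single vertex `x`. -/
def singlePin (x : V) (c : ℝ) : V → ℝ := fun i => if i = x then c else 0

end H22

open scoped Topology

namespace H22

/-! ### One-dimensional integrals -/

lemma lintegral_gauss : ∫⁻ z : ℝ, ENNReal.ofReal (exp (-(z ^ 2 / 2))) = ENNReal.ofReal √(2 * π) := by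
  have h := integral_gaussian (1 / 2 : ℝ)
  have hi := integrable_exp_neg_mul_sq (b := (1 / 2 : ℝ)) (by norm_num)
  rw [show (2 * π) = π / (1 / 2) by ring, ← h, ofReal_integral_eq_lintegral_ofReal hi]
  · refine lintegral_congr fun z => ?_
    congr 2; ring
  · exact Eventually.of_forall fun z => (exp_pos _).le

/-- Substitution `c = e^r`. -/
lemma lintegral_Ioi_exp_subst (g : ℝ → ENNReal) :
    ∫⁻ c in Set.Ioi (0 : ℝ), g c = ∫⁻ r : ℝ, ENNReal.ofReal (exp r) * g (exp r) := by
  have h := lintegral_image_eq_lintegral_abs_deriv_mul (s := Set.univ) (f := exp) (f' := exp)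
    MeasurableSet.univ (fun r _ => (Real.hasDerivAt_exp r).hasDerivWithinAt)
    (Real.exp_injective.injOn) g
  simpa [Set.image_univ, Real.range_exp, abs_of_pos, exp_pos] using h

/-- For `k > 0`, the symmetrised substitution `y = e^{r/2} - k e^{-r/2}` turns the integral into a
Gaussian one. -/
lemma lintegral_cosh_aux {k : ℝ} (hk : 0 < k) :
    ∫⁻ r : ℝ, ENNReal.ofReal (exp (-(exp r + k ^ 2 * exp (-r)) / 2) * exp (r / 2))
      ≤ ENNReal.ofReal (√(2 * π) * exp (-k)) := by
  set F : ℝ → ENNReal := fun r =>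
    ENNReal.ofReal (exp (-(exp r + k ^ 2 * exp (-r)) / 2) * exp (r / 2)) with hF
  set F' : ℝ → ENNReal := fun r =>
    ENNReal.ofReal (exp (-(exp r + k ^ 2 * exp (-r)) / 2) * (k * exp (-r / 2))) with hF'
  have hmF : Measurable F := by fun_prop
  have hkk : exp (log k) = k := exp_log hk
  have e1 : ∫⁻ r, F' r = ∫⁻ r, F r := by
    rw [← lintegral_sub_left_eq_self F (2 * log k)]
    refine lintegral_congr fun r => ?_
    have h1 : exp (2 * log k - r) = k ^ 2 * exp (-r) := by
      rw [sub_eq_add_neg, exp_add, two_mul, exp_add, hkk]; ring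
    have h2 : k ^ 2 * exp (-(2 * log k - r)) = exp r := by
      rw [show -(2 * log k - r) = r - log k - log k by ring, exp_sub, exp_sub, hkk]
      field_simp
    have h3 : exp ((2 * log k - r) / 2) = k * exp (-r / 2) := by
      rw [show (2 * log k - r) / 2 = log k + -r / 2 by ring, exp_add, hkk]
    simp only [hF, hF', h1, h2, h3]
    rw [add_comm (exp r)]
  set Y : ℝ → ℝ := fun r => exp (r / 2) - k * exp (-r / 2) with hY
  set Y' : ℝ → ℝ := fun r => (exp (r / 2) + k * exp (-r / 2)) / 2 with hY'
  have hd : ∀ r, HasDerivAt Y (Y' r) r := by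
    intro r
    have h1 : HasDerivAt (fun r : ℝ => exp (r / 2)) (exp (r / 2) * (1 / 2)) r :=
      ((hasDerivAt_id r).div_const 2).exp
    have h2 : HasDerivAt (fun r : ℝ => exp (-r / 2)) (exp (-r / 2) * (-1 / 2)) r :=
      ((hasDerivAt_id r).neg.div_const 2).exp
    exact (h1.fun_sub (h2.const_mul k)).congr_deriv (by simp only [hY']; ring)
  have hpos : ∀ r, 0 < Y' r := fun r => by simp only [hY']; positivity
  have hmono : StrictMono Y := strictMono_of_hasDerivAt_pos hd hpos
  have h := lintegral_image_eq_lintegral_abs_deriv_mul (s := Set.univ) (f := Y) (f' := Y')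
    MeasurableSet.univ (fun r _ => (hd r).hasDerivWithinAt) hmono.injective.injOn
    (fun z => ENNReal.ofReal (exp (-(z ^ 2 / 2))))
  have h' : ∫⁻ r, ENNReal.ofReal (Y' r * exp (-(Y r ^ 2 / 2))) ≤ ENNReal.ofReal √(2 * π) := by
    rw [← lintegral_gauss]
    refine le_trans (le_of_eq ?_) (setLIntegral_le_lintegral (Y '' Set.univ) _)
    rw [h, Measure.restrict_univ]
    refine lintegral_congr fun r => ?_
    rw [abs_of_pos (hpos r), ENNReal.ofReal_mul (hpos r).le]
  have h2 : ∫⁻ r, (F r + F' r) =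
      ENNReal.ofReal (2 * exp (-k)) * ∫⁻ r, ENNReal.ofReal (Y' r * exp (-(Y r ^ 2 / 2))) := by
    rw [← lintegral_const_mul _ (by fun_prop)]
    refine lintegral_congr fun r => ?_
    simp only [hF, hF']
    rw [← ENNReal.ofReal_add (by positivity) (by positivity), ← ENNReal.ofReal_mul (by positivity)]
    congr 1
    have h3 : Y r ^ 2 = exp r + k ^ 2 * exp (-r) - 2 * k := by
      simp only [hY]
      have a1 : exp (r / 2) ^ 2 = exp r := by rw [← exp_nat_mul]; congr 1; push_cast; ring
      have a2 : exp (-r / 2) ^ 2 = exp (-r) := by rw [← exp_nat_mul]; congr 1; push_cast; ring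
      have a3 : exp (r / 2) * exp (-r / 2) = 1 := by rw [← exp_add]; simp; ring
      linear_combination a1 + k ^ 2 * a2 - 2 * k * a3
    have h4 : exp (-(exp r + k ^ 2 * exp (-r)) / 2) = exp (-k) * exp (-(Y r ^ 2 / 2)) := by
      rw [h3, ← exp_add]; congr 1; ring
    rw [h4]; simp only [hY']; ring
  have h5 : 2 * ∫⁻ r, F r ≤ 2 * ENNReal.ofReal (√(2 * π) * exp (-k)) := by
    calc 2 * ∫⁻ r, F r = ∫⁻ r, (F r + F' r) := by
          rw [lintegral_add_left hmF, e1, two_mul]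
      _ ≤ ENNReal.ofReal (2 * exp (-k)) * ENNReal.ofReal √(2 * π) := by
          rw [h2]; gcongr
      _ = _ := by
          rw [ENNReal.ofReal_mul (by norm_num), ENNReal.ofReal_mul (by positivity), mul_assoc,
            mul_comm (ENNReal.ofReal (exp (-k)))]
          simp
  exact (ENNReal.mul_le_mul_iff_right (by simp) (by simp)).1 h5

/-- The normalising constant of the inverse Gaussian type density `c^{-1/2} e^{-(c + θ²/c)/2}`
is `√(2π) e^{-|θ|}`; the upper bound with `-θ` in place of `-|θ|` is all that is needed. -/
lemma lintegral_invGauss_le (θ : ℝ) :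
    ∫⁻ c in Set.Ioi (0 : ℝ), ENNReal.ofReal (exp (-(c + θ ^ 2 / c) / 2) / √c)
      ≤ ENNReal.ofReal (√(2 * π) * exp (-θ)) := by
  have key : ∫⁻ c in Set.Ioi (0 : ℝ), ENNReal.ofReal (exp (-(c + θ ^ 2 / c) / 2) / √c) =
      ∫⁻ r : ℝ, ENNReal.ofReal (exp (-(exp r + θ ^ 2 * exp (-r)) / 2) * exp (r / 2)) := by
    rw [lintegral_Ioi_exp_subst]
    refine lintegral_congr fun r => ?_
    rw [← ENNReal.ofReal_mul (exp_pos _).le]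
    congr 1
    have h1 : √(exp r) = exp (r / 2) := by rw [Real.exp_half]
    have h2 : exp r = exp (r / 2) * exp (r / 2) := by rw [← exp_add]; congr 1; ring
    rw [h1, Real.exp_neg, ← div_eq_mul_inv]
    nth_rewrite 1 [h2]
    field_simp
  rw [key]
  rcases eq_or_ne θ 0 with h0 | h0
  · subst h0
    have h := lintegral_image_eq_lintegral_abs_deriv_mul (s := Set.univ) (f := fun r => exp (r / 2))
      (f' := fun r => exp (r / 2) * (1 / 2))
      MeasurableSet.univ (fun r _ => (((hasDerivAt_id r).div_const 2).exp).hasDerivWithinAt)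
      (fun a _ b _ hab => by have := Real.exp_injective hab; linarith)
      (fun z => ENNReal.ofReal (2 * exp (-(1 / 2) * z ^ 2)))
    have him : (fun r : ℝ => exp (r / 2)) '' Set.univ = Set.Ioi 0 := by
      ext z; constructor
      · rintro ⟨r, -, rfl⟩; exact exp_pos _
      · intro hz; exact ⟨2 * log z, trivial, by simp [exp_log hz]⟩
    rw [him, Measure.restrict_univ] at h
    refine le_of_eq ?_
    calc _ = _ := ?_
      _ = _ := h.symm
      _ = _ := ?_
    · refine lintegral_congr fun r => ?_
      rw [← ENNReal.ofReal_mul (abs_nonneg _), abs_of_pos (by positivity)]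
      congr 1
      have h2 : exp r = exp (r / 2) ^ 2 := by rw [sq, ← exp_add]; congr 1; ring
      rw [h2]
      have h3 : -(exp (r / 2) ^ 2 + 0 ^ 2 * exp (-r)) / 2 = -(1 / 2) * exp (r / 2) ^ 2 := by ring
      rw [h3]; ring
    · rw [← ofReal_integral_eq_lintegral_ofReal]
      · rw [integral_const_mul, integral_gaussian_Ioi]
        congr 1
        rw [show π / (1 / 2) = 2 * π by ring]; simp; ring
      · exact ((integrable_exp_neg_mul_sq (b := (1 / 2 : ℝ)) (by norm_num)).const_mul 2).integrableOn
      · exact Eventually.of_forall fun z => by positivity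
  · have h := lintegral_cosh_aux (abs_pos.2 h0)
    rw [sq_abs] at h
    refine h.trans (ENNReal.ofReal_le_ofReal ?_)
    gcongr
    exact le_abs_self θ

/-! ### The Gaussian integral of a positive definite form -/

open scoped MatrixOrder Matrix.Norms.L2Operator in
lemma exists_factor {ι : Type*} [Fintype ι] [DecidableEq ι] {A : Matrix ι ι ℝ} (hA : A.PosDef) :
    ∃ B : Matrix ι ι ℝ, A = B.transpose * B := by
  obtain ⟨B, hB⟩ := CStarAlgebra.nonneg_iff_eq_star_mul_self.mp hA.posSemidef.nonneg
  exact ⟨B, by rw [hB, Matrix.star_eq_conjTranspose, Matrix.conjTranspose_eq_transpose_of_trivial]⟩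

lemma lintegral_gauss_pi {ι : Type*} [Fintype ι] :
    ∫⁻ v : ι → ℝ, ENNReal.ofReal (exp (-(∑ i, v i ^ 2) / 2))
      = ENNReal.ofReal (√(2 * π) ^ Fintype.card ι) := by
  have h1 : ∀ v : ι → ℝ, exp (-(∑ i, v i ^ 2) / 2) = ∏ i, exp (-(1 / 2) * v i ^ 2) := by
    intro v
    rw [← exp_sum, ← Finset.mul_sum]; congr 1; ring
  have hi := integrable_exp_neg_mul_sq (b := (1 / 2 : ℝ)) (by norm_num)
  have hint : Integrable (fun v : ι → ℝ => ∏ i, exp (-(1 / 2) * v i ^ 2)) volume :=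
    Integrable.fintype_prod (fun _ => hi)
  simp_rw [h1]
  rw [← ofReal_integral_eq_lintegral_ofReal hint
    (Eventually.of_forall fun v => by positivity)]
  rw [integral_fintype_prod_volume_eq_prod (fun _ z => exp (-(1 / 2) * z ^ 2))]
  rw [integral_gaussian, Finset.prod_const, Finset.card_univ]
  congr 3; ring

lemma lintegral_gauss_posDef {ι : Type*} [Fintype ι] [DecidableEq ι] {A : Matrix ι ι ℝ}
    (hA : A.PosDef) :
    ∫⁻ v : ι → ℝ, ENNReal.ofReal (exp (-(v ⬝ᵥ A.mulVec v) / 2))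
      = ENNReal.ofReal (√(2 * π) ^ Fintype.card ι / √A.det) := by
  obtain ⟨B, hB⟩ := exists_factor hA
  have hdet : A.det = B.det ^ 2 := by rw [hB, Matrix.det_mul, Matrix.det_transpose, sq]
  have hB0 : B.det ≠ 0 := by
    intro h
    have := hA.det_pos
    rw [hdet, h] at this
    norm_num at this
  have hq : ∀ v, v ⬝ᵥ A.mulVec v = ∑ i, (B.toLin' v) i ^ 2 := by
    intro v
    rw [hB, ← Matrix.mulVec_mulVec, Matrix.dotProduct_mulVec, Matrix.vecMul_transpose,
      Matrix.toLin'_apply]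
    simp [dotProduct, sq]
  have hm := Real.map_matrix_volume_pi_eq_smul_volume_pi hB0
  have hmeas : Measurable (Matrix.toLin' B) := (LinearMap.continuous_of_finiteDimensional _).measurable
  have := lintegral_map (μ := volume) (g := Matrix.toLin' B)
    (f := fun v : ι → ℝ => ENNReal.ofReal (exp (-(∑ i, v i ^ 2) / 2))) (by fun_prop) hmeas
  simp_rw [hq]
  rw [← this, hm, lintegral_smul_measure, lintegral_gauss_pi, smul_eq_mul,
    ← ENNReal.ofReal_mul (abs_nonneg _), hdet, Real.sqrt_sq_eq_abs, abs_inv]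
  congr 1; field_simp

/-! ### The random Schrödinger operator integral -/

/-- The Schrödinger operator `H_b = diag(b) - W`. -/
noncomputable def Hop {ι : Type*} [DecidableEq ι] (W : Matrix ι ι ℝ) (b : ι → ℝ) : Matrix ι ι ℝ :=
  Matrix.diagonal b - W

/-- The density `exp (-(⟨1, H 1⟩ + ⟨η, H⁻¹ η⟩ - 2 ⟨η, 1⟩) / 2) / √(det H)`, where `H = H_b`. -/
noncomputable def Hdens {ι : Type*} [Fintype ι] [DecidableEq ι] (W : Matrix ι ι ℝ) (η b : ι → ℝ) : ℝ :=
  exp (-((∑ i, ∑ j, Hop W b i j) + η ⬝ᵥ (Hop W b)⁻¹.mulVec η - 2 * ∑ i, η i) / 2) / √(Hop W b).det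

lemma solve_eq {ι : Type*} [Fintype ι] [DecidableEq ι] {H : Matrix ι ι ℝ} (hH : H.PosDef)
    {p η : ι → ℝ} (h : H.mulVec p = η) : H⁻¹.mulVec η = p := by
  have : IsUnit H.det := isUnit_iff_ne_zero.2 hH.det_pos.ne'
  rw [← h, Matrix.mulVec_mulVec, Matrix.nonsing_inv_mul _ this, Matrix.one_mulVec]

lemma solve_spec {ι : Type*} [Fintype ι] [DecidableEq ι] {H : Matrix ι ι ℝ} (hH : H.PosDef)
    (η : ι → ℝ) : H.mulVec (H⁻¹.mulVec η) = η := by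
  have : IsUnit H.det := isUnit_iff_ne_zero.2 hH.det_pos.ne'
  rw [Matrix.mulVec_mulVec, Matrix.mul_nonsing_inv _ this, Matrix.one_mulVec]

lemma det_schur {m : ℕ} (H : Matrix (Fin (m + 1)) (Fin (m + 1)) ℝ) (hs : H.IsSymm)
    (H' : Matrix (Fin m) (Fin m) ℝ) (hH' : H'.PosDef) (hsub : ∀ i j, H i.succ j.succ = H' i j) :
    H.det = H'.det * (H 0 0 - (fun j => H 0 (Fin.succ j)) ⬝ᵥ
      H'⁻¹.mulVec (fun j => H 0 (Fin.succ j))) := by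
  set w : Fin m → ℝ := fun j => H 0 (Fin.succ j) with hw
  let e : Unit ⊕ Fin m ≃ Fin (m + 1) :=
    { toFun := Sum.elim (fun _ => 0) Fin.succ
      invFun := Fin.cons (Sum.inl ()) Sum.inr
      left_inv := by rintro (i | i) <;> simp
      right_inv := by intro i; refine Fin.cases ?_ (fun j => ?_) i <;> simp }
  have hb : H.submatrix e e = Matrix.fromBlocks (Matrix.of fun _ _ => H 0 0)
      (Matrix.of fun _ j => w j) (Matrix.of fun i _ => w i) H' := by
    ext (i | i) (j | j)
    · simp [e]
    · simp [e, hw]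
    · simp [e, hw, hs.apply]
    · simp [e, hsub]
  have : Invertible H' := by
    exact Matrix.invertibleOfIsUnitDet _ (isUnit_iff_ne_zero.2 hH'.det_pos.ne')
  rw [← Matrix.det_submatrix_equiv_self e, hb, Matrix.det_fromBlocks₂₂, Matrix.det_unique (n := Unit)]
  congr 1
  simp only [Matrix.sub_apply, Matrix.of_apply, Matrix.invOf_eq_nonsing_inv]
  congr 1
  rw [Matrix.mul_assoc, Matrix.mul_apply]
  simp only [dotProduct, Matrix.mulVec, Matrix.mul_apply, Matrix.of_apply]

/-- Eliminating the index `0` by a Schur complement: the density factorises into the density for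
the remaining indices, with `η` shifted by the row `w` of `W`, and a one-dimensional density in the
Schur complement `c`. -/
lemma Hdens_succ {m : ℕ} (W : Matrix (Fin (m + 1)) (Fin (m + 1)) ℝ) (hW : W.IsSymm)
    (η : Fin (m + 1) → ℝ) (b' : Fin m → ℝ)
    (hH' : (Hop (W.submatrix Fin.succ Fin.succ) b').PosDef) :
    ∃ θ q : ℝ, ∀ b0 : ℝ, (Hop W (Fin.cons b0 b')).PosDef → 0 < b0 - q ∧
      Hdens W η (Fin.cons b0 b') =
        Hdens (W.submatrix Fin.succ Fin.succ) (fun j => η j.succ + W 0 j.succ) b' * exp θ *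
          (exp (-((b0 - q) + θ ^ 2 / (b0 - q)) / 2) / √(b0 - q)) := by
  set W' := W.submatrix Fin.succ Fin.succ with hW'
  set H' := Hop W' b' with hH'd
  set w : Fin m → ℝ := fun j => W 0 j.succ with hw
  set η' : Fin m → ℝ := fun j => η j.succ with hη'
  set qv := H'⁻¹.mulVec w with hqv
  set pv := H'⁻¹.mulVec η' with hpv
  have hsymm : H'.transpose = H' := by
    have := hH'.isHermitian.eq
    rwa [Matrix.conjTranspose_eq_transpose_of_trivial] at this
  have hHq : H'.mulVec qv = w := solve_spec hH' w
  have hHp : H'.mulVec pv = η' := solve_spec hH' η'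
  refine ⟨η 0 + w ⬝ᵥ pv, W 0 0 + w ⬝ᵥ qv, fun b0 hH => ?_⟩
  set H := Hop W (Fin.cons b0 b' : Fin (m + 1) → ℝ) with hHd
  set c := b0 - (W 0 0 + w ⬝ᵥ qv) with hc
  set θ := η 0 + w ⬝ᵥ pv with hθ
  have h00 : H 0 0 = b0 - W 0 0 := by simp [hHd, Hop]
  have h0s : ∀ j, H 0 (Fin.succ j) = -w j := by
    intro j; simp [hHd, Hop, hw, Matrix.diagonal_apply_ne _ (Fin.succ_ne_zero j).symm]
  have hs0 : ∀ j, H (Fin.succ j) 0 = -w j := by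
    intro j
    have := hW.apply (Fin.succ j) 0
    simp [hHd, Hop, hw, this]
  have hss : ∀ i j, H (Fin.succ i) (Fin.succ j) = H' i j := by
    intro i j
    simp [hHd, hH'd, Hop, hW', Matrix.diagonal_apply]
  have hHs : H.IsSymm := by
    have := hH.isHermitian.eq
    rw [Matrix.conjTranspose_eq_transpose_of_trivial] at this
    exact this
  have hdet : H.det = H'.det * c := by
    rw [det_schur H hHs H' hH' hss, h00]
    congr 1
    have : (fun j => H 0 (Fin.succ j)) = -w := by ext j; simp [h0s]
    rw [this, Matrix.mulVec_neg, dotProduct_neg, neg_dotProduct, neg_neg, ← hqv, hc]; ring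
  have hcpos : 0 < c := by
    have h1 := hH.det_pos
    rw [hdet] at h1
    exact (pos_iff_pos_of_mul_pos h1).1 hH'.det_pos
  refine ⟨hcpos, ?_⟩
  have hwp : w ⬝ᵥ pv = η' ⬝ᵥ qv := by
    calc w ⬝ᵥ pv = H'.mulVec qv ⬝ᵥ pv := by rw [hHq]
      _ = Matrix.vecMul pv H' ⬝ᵥ qv := by rw [dotProduct_comm, Matrix.dotProduct_mulVec]
      _ = H'.mulVec pv ⬝ᵥ qv := by rw [← Matrix.mulVec_transpose, hsymm]
      _ = η' ⬝ᵥ qv := by rw [hHp]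
  have hsol : H⁻¹.mulVec η = Fin.cons (θ / c) (fun j => pv j + θ / c * qv j) := by
    apply solve_eq hH
    ext i
    refine Fin.cases ?_ (fun i => ?_) i
    · simp only [Matrix.mulVec, dotProduct, Fin.sum_univ_succ, Fin.cons_zero, Fin.cons_succ, h00, h0s]
      have e1 : ∑ j, -w j * (pv j + θ / c * qv j) = -(w ⬝ᵥ pv) - θ / c * (w ⬝ᵥ qv) := by
        simp only [dotProduct, Finset.mul_sum, ← Finset.sum_neg_distrib, ← Finset.sum_sub_distrib]
        exact Finset.sum_congr rfl fun j _ => by ring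
      rw [e1]
      have : (b0 - W 0 0) = c + w ⬝ᵥ qv := by rw [hc]; ring
      rw [this]
      field_simp
      rw [hθ]; ring
    · simp only [Matrix.mulVec, dotProduct, Fin.sum_univ_succ, Fin.cons_zero, Fin.cons_succ, hs0, hss]
      have e1 : ∑ j, H' i j * (pv j + θ / c * qv j) = H'.mulVec pv i + θ / c * H'.mulVec qv i := by
        simp only [Matrix.mulVec, dotProduct, Finset.mul_sum, ← Finset.sum_add_distrib]
        exact Finset.sum_congr rfl fun j _ => by ring
      rw [e1, hHp, hHq]; simp only [hη']; ring
  have hquad : η ⬝ᵥ H⁻¹.mulVec η = η' ⬝ᵥ pv + θ ^ 2 / c := by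
    rw [hsol]
    simp only [dotProduct, Fin.sum_univ_succ, Fin.cons_zero, Fin.cons_succ]
    have e1 : ∑ j, η (Fin.succ j) * (pv j + θ / c * qv j) = η' ⬝ᵥ pv + θ / c * (η' ⬝ᵥ qv) := by
      simp only [dotProduct, Finset.mul_sum, ← Finset.sum_add_distrib]
      exact Finset.sum_congr rfl fun j _ => by simp only [hη']; ring
    change η 0 * (θ / c) + ∑ j, η (Fin.succ j) * (pv j + θ / c * qv j) = η' ⬝ᵥ pv + θ ^ 2 / c
    rw [e1, ← hwp, hθ]; ring
  have hquad' : (fun j => η j.succ + W 0 j.succ) ⬝ᵥ H'⁻¹.mulVec (fun j => η j.succ + W 0 j.succ) =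
      η' ⬝ᵥ pv + w ⬝ᵥ qv + 2 * (w ⬝ᵥ pv) := by
    have : (fun j => η j.succ + W 0 j.succ) = η' + w := rfl
    rw [this, Matrix.mulVec_add, ← hpv, ← hqv, add_dotProduct, dotProduct_add, dotProduct_add, ← hwp]
    ring
  have hone : ∑ i, ∑ j, H i j = (∑ i, ∑ j, H' i j) - 2 * ∑ j, w j + (c + w ⬝ᵥ qv) := by
    simp only [Fin.sum_univ_succ, h00, h0s, hs0, hss, Finset.sum_add_distrib, Finset.sum_neg_distrib]
    rw [hc]; ring
  unfold Hdens
  rw [← hHd, ← hH'd, hquad, hquad', hone, hdet, Real.sqrt_mul hH'.det_pos.le, mul_div_assoc', 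
    div_mul_eq_mul_div, ← exp_add, div_mul_eq_mul_div, div_div, ← exp_add]
  congr 2
  have : ∑ j : Fin m, (η j.succ + W 0 j.succ) = (∑ j : Fin m, η j.succ) + ∑ j, w j :=
    Finset.sum_add_distrib
  rw [this, Fin.sum_univ_succ]
  linear_combination -hθ

/-- The total mass of `Hdens` over the positive definite region is at most `√(2π)^m`, by integrating
out one coordinate of `b` at a time. -/
lemma lintegral_Hdens_le (m : ℕ) : ∀ (W : Matrix (Fin m) (Fin m) ℝ) (_ : W.IsSymm) (η : Fin m → ℝ),
    ∫⁻ b, {b | (Hop W b).PosDef}.indicator (fun b => ENNReal.ofReal (Hdens W η b)) b ≤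
      ENNReal.ofReal (√(2 * π) ^ m) := by
  induction m with
  | zero =>
    intro W _ η
    refine (lintegral_mono (Set.indicator_le_self _ _)).trans ?_
    simp [Hdens, lintegral_unique, volume_pi]
  | succ m ih =>
    intro W hW η
    set W' := W.submatrix Fin.succ Fin.succ with hW'
    set D : Set (Fin (m + 1) → ℝ) := {b | (Hop W b).PosDef} with hD
    set D' : Set (Fin m → ℝ) := {b | (Hop W' b).PosDef} with hD'
    have hsub : ∀ b0 b', (Fin.cons b0 b' : Fin (m + 1) → ℝ) ∈ D → b' ∈ D' := by
      intro b0 b' h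
      have h1 : (Hop W (Fin.cons b0 b')).submatrix Fin.succ Fin.succ = Hop W' b' := by
        ext i j; simp [Hop, hW', Matrix.diagonal_apply]
      have h2 := Matrix.PosDef.submatrix h (Fin.succ_injective m)
      rw [h1] at h2; exact h2
    set f : (Fin (m + 1) → ℝ) → ENNReal := D.indicator fun b => ENNReal.ofReal (Hdens W η b) with hf
    have hin : ∀ b', ∫⁻ b0 : ℝ, f (Fin.cons b0 b') ≤ D'.indicator (fun b' =>
        ENNReal.ofReal √(2 * π) *
          ENNReal.ofReal (Hdens W' (fun j => η j.succ + W 0 j.succ) b')) b' := by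
      intro b'
      by_cases hb : b' ∈ D'
      · obtain ⟨θ, q, h⟩ := Hdens_succ W hW η b' hb
        rw [Set.indicator_of_mem hb]
        have hnn : 0 ≤ Hdens W' (fun j => η j.succ + W 0 j.succ) b' := by unfold Hdens; positivity
        set A := Hdens W' (fun j => η j.succ + W 0 j.succ) b' with hA
        set g : ℝ → ENNReal := (Set.Ioi (0 : ℝ)).indicator fun c =>
          ENNReal.ofReal (exp (-(c + θ ^ 2 / c) / 2) / √c) with hg
        calc ∫⁻ b0 : ℝ, f (Fin.cons b0 b')
            ≤ ∫⁻ b0 : ℝ, ENNReal.ofReal (A * exp θ) * g (b0 - q) := by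
              refine lintegral_mono fun b0 => ?_
              by_cases hb0 : (Fin.cons b0 b' : Fin (m + 1) → ℝ) ∈ D
              · obtain ⟨h1, h2⟩ := h b0 hb0
                simp only [hf, hg]
                rw [Set.indicator_of_mem hb0, Set.indicator_of_mem (Set.mem_Ioi.2 h1), h2,
                  ENNReal.ofReal_mul (by positivity)]
              · simp only [hf]; rw [Set.indicator_of_notMem hb0]; exact zero_le
          _ = ENNReal.ofReal (A * exp θ) * ∫⁻ c in Set.Ioi 0,
                ENNReal.ofReal (exp (-(c + θ ^ 2 / c) / 2) / √c) := by
              rw [lintegral_const_mul' _ _ ENNReal.ofReal_ne_top, lintegral_sub_right_eq_self g q, hg,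
                lintegral_indicator measurableSet_Ioi]
          _ ≤ ENNReal.ofReal (A * exp θ) * ENNReal.ofReal (√(2 * π) * exp (-θ)) := by
              gcongr; exact lintegral_invGauss_le θ
          _ = _ := by
              rw [← ENNReal.ofReal_mul (by positivity), ← ENNReal.ofReal_mul (by positivity)]
              congr 1
              rw [exp_neg]; field_simp
      · have : ∀ b0 : ℝ, f (Fin.cons b0 b') = 0 := fun b0 =>
          Set.indicator_of_notMem (fun h => hb (hsub b0 b' h)) _
        simp [this]
    set e := (MeasurableEquiv.piFinSuccAbove (fun _ : Fin (m + 1) => ℝ) 0) with he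
    have hmp := ((volume_preserving_piFinSuccAbove (fun _ : Fin (m + 1) => ℝ) 0).symm).comp
      (Measure.measurePreserving_swap (μ := (volume : Measure (Fin m → ℝ))) (ν := (volume : Measure ℝ)))
    have hcons : ∀ z : (Fin m → ℝ) × ℝ, e.symm (Prod.swap z) = Fin.cons z.2 z.1 := by
      intro z; simp [he, MeasurableEquiv.piFinSuccAbove, Fin.insertNthEquiv]
    calc ∫⁻ b, f b = ∫⁻ z : (Fin m → ℝ) × ℝ, f (e.symm (Prod.swap z)) := by
          refine (hmp.lintegral_comp_emb ?_ f).symm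
          exact e.symm.measurableEmbedding.comp MeasurableEquiv.prodComm.measurableEmbedding
      _ = ∫⁻ z : (Fin m → ℝ) × ℝ, f (Fin.cons z.2 z.1) := by simp_rw [hcons]
      _ ≤ ∫⁻ b' : Fin m → ℝ, ∫⁻ b0 : ℝ, f (Fin.cons b0 b') := lintegral_prod_le _
      _ ≤ ∫⁻ b', ENNReal.ofReal √(2 * π) * D'.indicator (fun b' =>
          ENNReal.ofReal (Hdens W' (fun j => η j.succ + W 0 j.succ) b')) b' := by
          refine lintegral_mono fun b' => (hin b').trans (le_of_eq ?_)
          by_cases hb : b' ∈ D'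
          · rw [Set.indicator_of_mem hb, Set.indicator_of_mem hb]
          · rw [Set.indicator_of_notMem hb, Set.indicator_of_notMem hb, mul_zero]
      _ = ENNReal.ofReal √(2 * π) * ∫⁻ b', D'.indicator (fun b' =>
          ENNReal.ofReal (Hdens W' (fun j => η j.succ + W 0 j.succ) b')) b' :=
          lintegral_const_mul' _ _ ENNReal.ofReal_ne_top
      _ ≤ ENNReal.ofReal √(2 * π) * ENNReal.ofReal (√(2 * π) ^ m) := by
          gcongr
          exact ih W' (hW.submatrix _) _
      _ = _ := by rw [← ENNReal.ofReal_mul (by positivity), pow_succ' (√(2 * π))]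

/-! ### Products and sums over the edges of the augmented graph -/

lemma sum_adj_eq {α : Type*} [Fintype α] [DecidableEq α] (H : SimpleGraph α) (F : Sym2 α → ℝ) :
    ∑ a, ∑ b, (if H.Adj a b then F s(a, b) else 0)
      = 2 * ∑ e ∈ Finset.univ.filter (fun e : Sym2 α => e ∈ H.edgeSet), F e := by
  rw [← Fintype.sum_prod_type' (fun a b => if H.Adj a b then F s(a, b) else 0),
    ← Finset.sum_filter,
    ← Finset.sum_fiberwise_of_maps_to (g := fun z : α × α => s(z.1, z.2))
      (t := Finset.univ.filter (fun e : Sym2 α => e ∈ H.edgeSet)) (by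
        intro z hz; simpa using hz), Finset.mul_sum]
  refine Finset.sum_congr rfl fun e he => ?_
  induction e using Sym2.ind with
  | _ a b =>
    have hab : H.Adj a b := by simpa using he
    have : (Finset.univ.filter (fun z : α × α => H.Adj z.1 z.2)).filter
        (fun z : α × α => s(z.1, z.2) = s(a, b)) = {(a, b), (b, a)} := by
      ext ⟨c, d⟩
      simp only [Finset.mem_filter, Finset.mem_univ, true_and, Sym2.eq_iff, Finset.mem_insert,
        Finset.mem_singleton, Prod.mk.injEq]
      constructor
      · rintro ⟨_, h⟩; exact h
      · rintro (⟨rfl, rfl⟩ | ⟨rfl, rfl⟩)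
        · exact ⟨hab, Or.inl ⟨rfl, rfl⟩⟩
        · exact ⟨hab.symm, Or.inr ⟨rfl, rfl⟩⟩
    rw [this, Finset.sum_pair (by simp [hab.ne]), Sym2.eq_swap (a := b), two_mul]

/-- The weights `β`, set to `0` off the edges of `G`. -/
noncomputable def wt {V : Type*} (G : SimpleGraph V) (β : V → V → ℝ) (i j : V) : ℝ :=
  if G.Adj i j then β i j else 0

/-- The interaction energy `∑_{i∼j} β_ij (B_ij - 1)` of `G`, written as half a sum over ordered pairs. -/
noncomputable def energy {V : Type*} [Fintype V] (G : SimpleGraph V) (β : V → V → ℝ) (t s : V → ℝ) : ℝ :=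
  1 / 2 * ∑ i, ∑ j, wt G β i j *
    (cosh (t i - t j) - 1 + 1 / 2 * (s i - s j) ^ 2 * exp (t i + t j))

@[simp] lemma aug_some_some {V : Type*} (G : SimpleGraph V) (i j : V) :
    (aug G).Adj (some i) (some j) ↔ G.Adj i j := by
  simp only [aug, SimpleGraph.fromRel_adj, ne_eq, Option.some.injEq]
  constructor
  · rintro ⟨_, h | h⟩
    exacts [h, h.symm]
  · intro h; exact ⟨h.ne, Or.inl h⟩

@[simp] lemma aug_some_none {V : Type*} (G : SimpleGraph V) (i : V) :
    (aug G).Adj (some i) none := by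
  simp [aug, SimpleGraph.fromRel_adj]

@[simp] lemma aug_none_some {V : Type*} (G : SimpleGraph V) (i : V) :
    (aug G).Adj none (some i) := (aug_some_none G i).symm

lemma wt_symm {V : Type*} (G : SimpleGraph V) (β : V → V → ℝ) (hβ : ∀ i j, β i j = β j i) (i j : V) :
    wt G β i j = wt G β j i := by
  simp [wt, G.adj_comm, hβ i j]

lemma wt_nonneg {V : Type*} (G : SimpleGraph V) (β : V → V → ℝ)
    (hβpos : ∀ i j, G.Adj i j → 0 < β i j) (i j : V) : 0 ≤ wt G β i j := by
  unfold wt; split_ifs with h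
  exacts [(hβpos i j h).le, le_rfl]

lemma prod_gibbs {V : Type*} [Fintype V] [DecidableEq V] (G : SimpleGraph V) (β : V → V → ℝ)
    (hβ : ∀ i j, β i j = β j i) (ε t s : V → ℝ) :
    ∏ e ∈ Finset.univ.filter (fun e : Sym2 (Option V) => e ∈ (aug G).edgeSet), gibbs β ε t s e
      = exp (-energy G β t s - ∑ i, ε i * (cosh (t i) - 1 + 1 / 2 * s i ^ 2 * exp (t i))) := by
  set h : Option V → Option V → ℝ := fun a b => bres β ε a b * (Bfun t s a b - 1) with hh
  have hsym : ∀ a b, h a b = h b a := by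
    intro a b
    have h1 : bres β ε a b = bres β ε b a := by
      rcases a with _ | a <;> rcases b with _ | b <;> first | rfl | exact hβ _ _
    have h2 : Bfun t s a b = Bfun t s b a := by
      unfold Bfun
      rw [← cosh_neg, neg_sub, add_comm (extV t a), ← neg_sub (extV s b), neg_sq]
    simp only [hh, h1, h2]
  have he : ∀ a b, esym h s(a, b) = h a b := by
    intro a b
    change (h a b + h b a) / 2 = _
    rw [hsym b a]; ring
  have hg : ∀ e, gibbs β ε t s e = exp (-esym h e) := by
    intro e
    induction e using Sym2.ind with
    | _ a b =>
      rw [he]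
      change (exp (-h a b) + exp (-h b a)) / 2 = _
      rw [hsym b a]; ring
  simp_rw [hg]
  rw [← exp_sum, Finset.sum_neg_distrib]
  congr 1
  have h1 := sum_adj_eq (aug G) (esym h)
  simp_rw [he, Fintype.sum_option] at h1
  simp only [SimpleGraph.irrefl, if_false, aug_some_some, aug_some_none, aug_none_some, if_true,
    zero_add, Finset.sum_add_distrib] at h1
  have h2 : ∀ i, h none (some i) = ε i * (cosh (t i) - 1 + 1 / 2 * s i ^ 2 * exp (t i)) := by
    intro i
    simp [hh, bres, Bfun, extV]; ring_nf; simp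
  have h3 : ∀ i, h (some i) none = ε i * (cosh (t i) - 1 + 1 / 2 * s i ^ 2 * exp (t i)) := by
    intro i; rw [hsym, h2]
  have h4 : ∀ i j, (if G.Adj i j then h (some i) (some j) else 0) = wt G β i j *
    (cosh (t i - t j) - 1 + 1 / 2 * (s i - s j) ^ 2 * exp (t i + t j)) := by
    intro i j
    simp only [hh, bres, Bfun, extV, wt, Option.elim]
    split_ifs <;> ring
  simp_rw [h2, h3, h4] at h1
  unfold energy
  linarith

lemma treeW_some_some {V : Type*} (β : V → V → ℝ)
    (hβ : ∀ i j, β i j = β j i) (ε t : V → ℝ) (i j : V) :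
    treeW β ε t s(some i, some j) = β i j * exp (t i + t j) := by
  change (β i j * exp (t i + t j) + β j i * exp (t j + t i)) / 2 = _
  rw [hβ j i, add_comm (t j)]; ring

lemma treeW_rootEdge {V : Type*} (β : V → V → ℝ) (ε t : V → ℝ) (i : V) :
    treeW β ε t (rootEdge i) = ε i * exp (t i) := by
  change (ε i * exp (t i + 0) + ε i * exp (0 + t i)) / 2 = _
  rw [add_zero, zero_add]; ring

/-! ### Spanning trees with a single root -/

lemma isSpanningTree_iff {α : Type*} [Fintype α] [DecidableEq α] (G : SimpleGraph α)
    (T : Finset (Sym2 α)) : IsSpanningTree G T ↔ (↑T ⊆ G.edgeSet ∧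
      (SimpleGraph.fromEdgeSet (↑T : Set (Sym2 α))).Connected ∧ T.card + 1 = Fintype.card α) := by
  unfold IsSpanningTree
  refine and_congr_right fun h => ?_
  have hE : (SimpleGraph.fromEdgeSet (↑T : Set (Sym2 α))).edgeSet = ↑T := by
    rw [SimpleGraph.edgeSet_fromEdgeSet, sdiff_eq_left, Set.disjoint_left]
    exact fun e he hd => G.not_isDiag_of_mem_edgeSet (h he) hd
  rw [SimpleGraph.isTree_iff_connected_and_card, hE, Nat.card_eq_fintype_card, Nat.card_eq_fintype_card,
    ← Fintype.card_coe]
  rfl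

/-- A spanning tree is recorded by the map sending each vertex other than `o` to the next vertex on the
way to `o`; the distance to `o` decreases along this map. -/
lemma tree_parent_aux {α : Type*} [Fintype α] [DecidableEq α] (G : SimpleGraph α)
    (T : Finset (Sym2 α)) (hT : IsSpanningTree G T) (o : α) :
    ∃ (p : α → α) (d : α → ℕ), (∀ a, a ≠ o → G.Adj a (p a) ∧ d (p a) < d a) ∧
      T = (Finset.univ.erase o).image (fun a => s(a, p a)) ∧
      Set.InjOn (fun a => s(a, p a)) {a | a ≠ o} := by
  obtain ⟨hsub, hconn, hcard⟩ := (isSpanningTree_iff G T).1 hT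
  set H := SimpleGraph.fromEdgeSet (↑T : Set (Sym2 α)) with hH
  have hex : ∀ a, ∃ b, a ≠ o → H.Adj a b ∧ H.dist b o < H.dist a o := by
    intro a
    by_cases ha : a = o
    · exact ⟨a, fun h => absurd ha h⟩
    obtain ⟨w, hw⟩ := hconn.exists_walk_length_eq_dist a o
    cases w with
    | nil => exact absurd rfl ha
    | cons h q =>
      refine ⟨_, fun _ => ⟨h, ?_⟩⟩
      rw [← hw, SimpleGraph.Walk.length_cons]
      exact Nat.lt_succ_of_le (SimpleGraph.dist_le q)
  choose p hp using hex
  have hmem : ∀ a, a ≠ o → s(a, p a) ∈ T := by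
    intro a ha
    have := (hp a ha).1
    rw [hH, SimpleGraph.fromEdgeSet_adj] at this
    exact_mod_cast this.1
  have hinj : Set.InjOn (fun a => s(a, p a)) {a | a ≠ o} := by
    intro a ha b hb hab
    rcases Sym2.eq_iff.1 hab with ⟨h, _⟩ | ⟨h1, h2⟩
    · exact h
    · have ha' := (hp a ha).2
      have hb' := (hp b hb).2
      rw [h2] at ha'; rw [← h1] at hb'
      omega
  refine ⟨p, fun a => H.dist a o, fun a ha => ⟨?_, (hp a ha).2⟩, ?_, hinj⟩
  · exact hsub (hmem a ha)
  · symm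
    apply Finset.eq_of_subset_of_card_le
    · intro e he
      obtain ⟨a, ha, rfl⟩ := Finset.mem_image.1 he
      exact hmem a (Finset.ne_of_mem_erase ha)
    · rw [Finset.card_image_of_injOn (by
        intro a ha b hb hab; exact hinj (by simpa using ha) (by simpa using hb) hab),
        Finset.card_erase_of_mem (Finset.mem_univ _),
        Finset.card_univ]
      omega

/-- The spanning trees of the augmented graph whose only root is `x`. -/
noncomputable def treesAt {V : Type*} [Fintype V] [DecidableEq V] (G : SimpleGraph V) (x : V) :
    Finset (Finset (Sym2 (Option V))) :=
  (STrees (aug G)).filter fun T => roots T = {x}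

lemma mem_treesAt {V : Type*} [Fintype V] [DecidableEq V] {G : SimpleGraph V} {x : V}
    {T : Finset (Sym2 (Option V))} :
    T ∈ treesAt G x ↔ IsSpanningTree (aug G) T ∧ roots T = {x} := by
  simp [treesAt, STrees]

/-- Orienting a tree with the single root `x` towards `x`. -/
lemma tree_parent {V : Type*} [Fintype V] [DecidableEq V] {G : SimpleGraph V} {x : V}
    {T : Finset (Sym2 (Option V))} (hT : T ∈ treesAt G x) :
    ∃ (f : {i // i ≠ x} → V) (d : V → ℕ), (∀ i, G.Adj i.1 (f i)) ∧ (∀ i, d (f i) < d i.1) ∧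
      T = insert (rootEdge x) (Finset.univ.image fun i => s(some i.1, some (f i))) ∧
      Function.Injective (fun i : {i // i ≠ x} => s(some i.1, some (f i))) := by
  obtain ⟨hT, hr⟩ := mem_treesAt.1 hT
  obtain ⟨p, d, hp, hTp, hinj⟩ := tree_parent_aux (aug G) T hT none
  have hroot : ∀ i, rootEdge i ∈ T ↔ i = x := by
    intro i
    have : i ∈ roots T ↔ i = x := by rw [hr]; simp
    simpa [roots] using this
  have hpx : p (some x) = none := by
    have := (hroot x).2 rfl
    rw [hTp, rootEdge] at this
    obtain ⟨a, ha, h⟩ := Finset.mem_image.1 this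
    rcases Sym2.eq_iff.1 h with ⟨rfl, h⟩ | ⟨h1, h2⟩
    · exact h
    · exact absurd h1 (Finset.ne_of_mem_erase ha)
  have hpi : ∀ i : {i // i ≠ x}, ∃ j, p (some i.1) = some j := by
    intro i
    rcases hpi : p (some i.1) with _ | j
    · exfalso
      apply i.2
      apply (hroot i).1
      rw [hTp]
      exact Finset.mem_image.2 ⟨some i.1, by simp, by rw [hpi]; rfl⟩
    · exact ⟨j, rfl⟩
  choose f hf using hpi
  refine ⟨f, fun i => d (some i), fun i => ?_, fun i => ?_, ?_, ?_⟩
  · have := (hp (some i.1) (by simp)).1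
    rw [hf] at this; simpa using this
  · have := (hp (some i.1) (by simp)).2
    rwa [hf] at this
  · rw [hTp]
    ext e
    simp only [Finset.mem_image, Finset.mem_erase, Finset.mem_univ, and_true, Finset.mem_insert,
      true_and]
    constructor
    · rintro ⟨a, ha, rfl⟩
      rcases a with _ | a
      · exact absurd rfl ha
      · by_cases hax : a = x
        · left; rw [hax, hpx]; rfl
        · right; exact ⟨⟨a, hax⟩, by rw [← hf]⟩
    · rintro (rfl | ⟨i, rfl⟩)
      · exact ⟨some x, by simp, by rw [hpx]; rfl⟩
      · exact ⟨some i.1, by simp, by rw [hf]⟩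
  · intro i j hij
    have := hinj (x₁ := some i.1) (x₂ := some j.1) (by simp) (by simp) (by
      simp only [hf]; exact hij)
    exact Subtype.ext (Option.some.inj this)

lemma rootEdge_notMem_image {V : Type*} [Fintype V] [DecidableEq V] {x z : V}
    (f : {i // i ≠ x} → V) :
    rootEdge z ∉ Finset.univ.image fun i : {i // i ≠ x} => s(some i.1, some (f i)) := by
  intro h
  obtain ⟨i, _, hi⟩ := Finset.mem_image.1 h
  simp [rootEdge] at hi

lemma forestOf_eq {V : Type*} [Fintype V] [DecidableEq V] {x : V}
    {T : Finset (Sym2 (Option V))} (f : {i // i ≠ x} → V)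
    (hT : T = insert (rootEdge x) (Finset.univ.image fun i => s(some i.1, some (f i)))) :
    forestOf T = Finset.univ.image fun i => s(some i.1, some (f i)) := by
  subst hT
  ext e
  simp only [forestOf, Finset.mem_filter, Finset.mem_insert]
  constructor
  · rintro ⟨rfl | h, h2⟩
    · simp [rootEdge] at h2
    · exact h
  · intro h
    refine ⟨Or.inr h, ?_⟩
    obtain ⟨i, _, rfl⟩ := Finset.mem_image.1 h
    simp

/-- In a tree with one root, all vertices of `V` communicate without passing through `ρ`. -/
lemma connIn_of_treesAt {V : Type*} [Fintype V] [DecidableEq V] {G : SimpleGraph V} {x : V}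
    {T : Finset (Sym2 (Option V))} (hT : T ∈ treesAt G x) (z : V) : connIn T x z := by
  obtain ⟨f, d, hadj, hd, hTf, -⟩ := tree_parent hT
  unfold connIn
  rw [forestOf_eq f hTf]
  have : ∀ (n : ℕ) (z : V), d z ≤ n → (SimpleGraph.fromEdgeSet (↑(Finset.univ.image
      fun i : {i // i ≠ x} => s(some i.1, some (f i))) : Set (Sym2 (Option V)))).Reachable
        (some x) (some z) := by
    intro n
    induction n with
    | zero =>
      intro z hz
      by_cases h : z = x
      · rw [h]
      · have := hd ⟨z, h⟩
        simp only at this; omega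
    | succ n ih =>
      intro z hz
      by_cases h : z = x
      · rw [h]
      · have h1 := hd ⟨z, h⟩
        refine (ih (f ⟨z, h⟩) (by simp only at h1; omega)).trans (SimpleGraph.Adj.reachable ?_)
        rw [SimpleGraph.fromEdgeSet_adj]
        refine ⟨?_, by simpa using (hadj ⟨z, h⟩).ne'⟩
        rw [Sym2.eq_swap]
        simp only [Finset.coe_image, Finset.coe_univ, Set.image_univ, Set.mem_range]
        exact ⟨⟨z, h⟩, rfl⟩
  exact this _ z le_rfl

lemma roots_nonempty {V : Type*} [Fintype V] [DecidableEq V] {G : SimpleGraph V} [Nonempty V]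
    {T : Finset (Sym2 (Option V))} (hT : IsSpanningTree (aug G) T) : (roots T).Nonempty := by
  obtain ⟨p, d, hp, hTp, -⟩ := tree_parent_aux (aug G) T hT none
  by_contra hne
  rw [Finset.not_nonempty_iff_eq_empty] at hne
  have hns : ∀ i, p (some i) ≠ none := by
    intro i hi
    have : i ∈ roots T := by
      simp only [roots, Finset.mem_filter, Finset.mem_univ, true_and]
      rw [hTp]
      exact Finset.mem_image.2 ⟨some i, by simp, by rw [hi]; rfl⟩
    simp [hne] at this
  have : ∀ (n : ℕ) (i : V), d (some i) ≤ n → False := by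
    intro n
    induction n with
    | zero =>
      intro i hi
      have := (hp (some i) (by simp)).2
      omega
    | succ n ih =>
      intro i hi
      obtain ⟨j, hj⟩ := Option.ne_none_iff_exists'.1 (hns i)
      have := (hp (some i) (by simp)).2
      rw [hj] at this
      exact ih j (by omega)
  exact this _ (Classical.arbitrary V) le_rfl

/-- Moving the single root of a tree from `x` to `z`. -/
lemma swap_mem {V : Type*} [Fintype V] [DecidableEq V] {G : SimpleGraph V} {x : V}
    {T : Finset (Sym2 (Option V))} (hT : T ∈ treesAt G x) (z : V) :
    insert (rootEdge z) (forestOf T) ∈ treesAt G z ∧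
      forestOf (insert (rootEdge z) (forestOf T)) = forestOf T := by
  have hF : T = insert (rootEdge x) (forestOf T) := by
    obtain ⟨f, d, -, -, hTf, -⟩ := tree_parent hT
    rw [forestOf_eq f hTf, ← hTf]
  have hnr : ∀ z, rootEdge z ∉ forestOf T := by
    intro z h
    simp [forestOf, rootEdge] at h
  have hconn := connIn_of_treesAt hT
  obtain ⟨hsub, -, hcard⟩ := (isSpanningTree_iff _ T).1 (mem_treesAt.1 hT).1
  refine ⟨mem_treesAt.2 ⟨(isSpanningTree_iff _ _).2 ⟨?_, ?_, ?_⟩, ?_⟩, ?_⟩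
  · intro e he
    rcases Finset.mem_insert.1 (Finset.mem_coe.1 he) with rfl | he
    · simp [rootEdge]
    · exact hsub (Finset.mem_filter.1 he).1
  · have hle : SimpleGraph.fromEdgeSet (↑(forestOf T) : Set (Sym2 (Option V))) ≤
        SimpleGraph.fromEdgeSet (↑(insert (rootEdge z) (forestOf T)) : Set (Sym2 (Option V))) := by
      intro a b hab
      rw [SimpleGraph.fromEdgeSet_adj] at hab ⊢
      exact ⟨by rw [Finset.coe_insert]; exact Set.mem_insert_of_mem _ hab.1, hab.2⟩
    have hzn : (SimpleGraph.fromEdgeSet (↑(insert (rootEdge z) (forestOf T)) :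
        Set (Sym2 (Option V)))).Reachable (some z) none := by
      apply SimpleGraph.Adj.reachable
      rw [SimpleGraph.fromEdgeSet_adj]
      exact ⟨by simp [rootEdge], by simp⟩
    have hto : ∀ a, (SimpleGraph.fromEdgeSet (↑(insert (rootEdge z) (forestOf T)) :
        Set (Sym2 (Option V)))).Reachable a none := by
      rintro (_ | i)
      · exact SimpleGraph.Reachable.refl _
      · exact (((hconn i).mono hle).symm.trans ((hconn z).mono hle)).trans hzn
    have : Nonempty (Option V) := ⟨none⟩
    exact ⟨fun a b => (hto a).trans (hto b).symm⟩
  · rw [Finset.card_insert_of_notMem (hnr z)]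
    rw [hF, Finset.card_insert_of_notMem (hnr x)] at hcard
    exact hcard
  · ext i
    simp only [roots, Finset.mem_filter, Finset.mem_univ, true_and, Finset.mem_insert,
      Finset.mem_singleton, hnr i, or_false]
    simp [rootEdge]
  · ext e
    simp only [forestOf, Finset.mem_filter, Finset.mem_insert]
    constructor
    · rintro ⟨rfl | h, h2⟩
      · simp [rootEdge] at h2
      · exact h
    · intro h; exact ⟨Or.inr h, h.2⟩

lemma treesAt_nonempty {V : Type*} [Fintype V] [DecidableEq V] {G : SimpleGraph V}
    (hG : G.Connected) (x : V) : (treesAt G x).Nonempty := by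
  set K : SimpleGraph (Option V) := SimpleGraph.fromRel (fun a b =>
    match a, b with
    | some i, some j => G.Adj i j
    | some i, none => i = x
    | _, _ => False) with hK
  have hKadj : ∀ i j, K.Adj (some i) (some j) ↔ G.Adj i j := by
    intro i j
    simp only [hK, SimpleGraph.fromRel_adj, ne_eq, Option.some.injEq, G.adj_comm j i, or_self]
    exact ⟨fun h => h.2, fun h => ⟨h.ne, h⟩⟩
  have hKn : ∀ i, K.Adj (some i) none ↔ i = x := by
    intro i
    simp [hK, SimpleGraph.fromRel_adj]
  have hto : ∀ a, K.Reachable a none := by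
    rintro (_ | i)
    · exact SimpleGraph.Reachable.refl _
    · have h1 : K.Reachable (some i) (some x) := by
        have := (hG.preconnected i x).map
          (⟨some, fun {a b} h => (hKadj a b).2 h⟩ : G →g K)
        exact this
      exact h1.trans ((hKn x).2 rfl).reachable
  have : Nonempty (Option V) := ⟨none⟩
  have hKc : K.Connected := ⟨fun a b => (hto a).trans (hto b).symm⟩
  obtain ⟨T, hle, hT⟩ := hKc.exists_isTree_le
  have hKaug : K ≤ aug G := by
    rintro (_ | i) (_ | j) h
    · exact absurd h (K.irrefl)
    · simp
    · simp
    · simpa using (hKadj i j).1 h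
  have hfe : SimpleGraph.fromEdgeSet (↑(T.edgeFinset) : Set (Sym2 (Option V))) = T := by
    rw [SimpleGraph.coe_edgeFinset, SimpleGraph.fromEdgeSet_edgeSet]
  have hsp : IsSpanningTree (aug G) T.edgeFinset := by
    refine ⟨?_, by rw [hfe]; exact hT⟩
    rw [SimpleGraph.coe_edgeFinset]
    exact SimpleGraph.edgeSet_mono (hle.trans hKaug)
  refine ⟨T.edgeFinset, mem_treesAt.2 ⟨hsp, ?_⟩⟩
  have : Nonempty V := ⟨x⟩
  obtain ⟨i, hi⟩ := roots_nonempty hsp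
  have hsubx : ∀ i ∈ roots T.edgeFinset, i = x := by
    intro i hi
    simp only [roots, Finset.mem_filter, Finset.mem_univ, true_and, SimpleGraph.mem_edgeFinset,
      rootEdge, SimpleGraph.mem_edgeSet] at hi
    exact (hKn i).1 (hle hi)
  refine Finset.eq_singleton_iff_unique_mem.2 ⟨?_, hsubx⟩
  rwa [hsubx i hi] at hi

/-! ### The matrix-tree inequality -/

/-- The matrix of the equation `v i = v (f i)` on the vertices other than `x`, with `v x = 0`. -/
noncomputable def parMat {V : Type*} [DecidableEq V] {x : V} (f : {i // i ≠ x} → V) :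
    Matrix {i // i ≠ x} {i // i ≠ x} ℝ :=
  Matrix.of fun i j => (if i = j then 1 else 0) - (if f i = j.1 then 1 else 0)

lemma det_parMat_of_depth {V : Type*} [Fintype V] [DecidableEq V] {x : V} (f : {i // i ≠ x} → V)
    (d : V → ℕ) (hd : ∀ i : {i // i ≠ x}, d (f i) < d i.1) : (parMat f).det = 1 := by
  have hbt : (parMat f).BlockTriangular (fun i => OrderDual.toDual (d i.1)) := by
    intro i j hij
    have hij : d i.1 < d j.1 := hij
    have h1 : i ≠ j := by rintro rfl; exact lt_irrefl _ hij
    have h2 : f i ≠ j.1 := by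
      intro h
      have := hd i
      rw [h] at this; omega
    simp [parMat, h1, h2]
  rw [hbt.det]
  refine Finset.prod_eq_one fun a _ => ?_
  convert Matrix.det_one (n := {i : {i // i ≠ x} // OrderDual.toDual (d i.1) = a}) (R := ℝ)
  ext i j
  have h2 : f i.1 ≠ j.1.1 := by
    intro h
    have h3 := hd i.1
    rw [h] at h3
    have h4 : d i.1.1 = d j.1.1 := OrderDual.toDual.injective (i.2.trans j.2.symm)
    omega
  simp [Matrix.toSquareBlock, Matrix.toSquareBlockProp, parMat, h2, Matrix.one_apply, Subtype.ext_iff]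

/-- If some vertex never reaches `x` along `f`, the indicator of all such vertices lies in the kernel. -/
lemma det_parMat_nonneg {V : Type*} [Fintype V] [DecidableEq V] {x : V} (f : {i // i ≠ x} → V) :
    0 ≤ (parMat f).det := by
  set F : V → V := fun v => if h : v = x then x else f ⟨v, h⟩ with hF
  have hFi : ∀ i : {i // i ≠ x}, F i.1 = f i := by
    intro i; simp [hF, i.2]
  by_cases hr : ∀ v, ∃ n, F^[n] v = x
  · rw [det_parMat_of_depth f (fun v => Nat.find (hr v))]
    · norm_num
    · intro i
      have h1 := Nat.find_spec (hr i.1)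
      have h0 : Nat.find (hr i.1) ≠ 0 := by
        intro h
        rw [h] at h1
        exact i.2 h1
      obtain ⟨n, hn⟩ := Nat.exists_eq_succ_of_ne_zero h0
      rw [hn, Function.iterate_succ_apply, hFi] at h1
      rw [hn]
      exact Nat.lt_succ_of_le (Nat.find_min' _ h1)
  · push Not at hr
    obtain ⟨v, hv⟩ := hr
    have hvx : v ≠ x := hv 0
    refine ge_of_eq (Matrix.exists_mulVec_eq_zero_iff.1
      ⟨fun i : {i // i ≠ x} => if ∀ n, F^[n] i.1 ≠ x then (1 : ℝ) else 0, ?_, ?_⟩)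
    · intro h
      have := congrFun h ⟨v, hvx⟩
      simp only [Pi.zero_apply] at this
      rw [if_pos hv] at this
      norm_num at this
    · ext i
      have key : (∀ n, F^[n] i.1 ≠ x) ↔ ∀ n, F^[n] (f i) ≠ x := by
        constructor
        · intro h n
          have := h (n + 1)
          rwa [Function.iterate_succ_apply, hFi] at this
        · intro h n
          cases n with
          | zero => exact i.2
          | succ n => rw [Function.iterate_succ_apply, hFi]; exact h n
      simp only [Matrix.mulVec, dotProduct, parMat, Matrix.of_apply, sub_mul, Finset.sum_sub_distrib,
        ite_mul, one_mul, zero_mul, Finset.sum_ite_eq, Finset.mem_univ, if_true, Pi.zero_apply]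
      by_cases hfx : f i = x
      · have h1 : ¬ ∀ n, F^[n] i.1 ≠ x := by
          rw [key]; intro h; exact h 0 hfx
        rw [if_neg h1, Finset.sum_eq_zero]
        · norm_num
        · intro j _
          rw [if_neg]
          rw [hfx]; exact fun h => j.2 h.symm
      · rw [Finset.sum_eq_single ⟨f i, hfx⟩]
        · simp only [if_true, key]; ring
        · intro j _ hj
          rw [if_neg]
          intro h; exact hj (Subtype.ext h.symm)
        · simp

/-- The Laplacian of the conductances `c`, with the row and column of `x` removed. -/
noncomputable def lapAt {V : Type*} [Fintype V] [DecidableEq V] (c : V → V → ℝ) (x : V) :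
    Matrix {i // i ≠ x} {i // i ≠ x} ℝ :=
  Matrix.of fun i j => (if i = j then ∑ k, c i.1 k else 0) - c i.1 j.1

/-- Expanding the determinant of the reduced Laplacian along its rows. -/
lemma det_lapAt {V : Type*} [Fintype V] [DecidableEq V] (c : V → V → ℝ) (x : V) :
    (lapAt c x).det = ∑ f : {i // i ≠ x} → V, (∏ i, c i.1 (f i)) * (parMat f).det := by
  have hrow : lapAt c x = fun i => ∑ k : V, c i.1 k •
      (fun j : {i // i ≠ x} => (if i = j then (1 : ℝ) else 0) - (if k = j.1 then 1 else 0)) := by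
    ext i j
    simp only [lapAt, Matrix.of_apply, Finset.sum_apply, Pi.smul_apply, smul_eq_mul, mul_sub,
      Finset.sum_sub_distrib, mul_ite, mul_one, mul_zero, Finset.sum_ite_eq', Finset.mem_univ, if_true]
    congr 1
    split_ifs <;> simp
  have h := (Matrix.detRowAlternating (R := ℝ) (n := {i // i ≠ x})).toMultilinearMap.map_sum
    (fun i k => c i.1 k •
      (fun j : {i // i ≠ x} => (if i = j then (1 : ℝ) else 0) - (if k = j.1 then 1 else 0)))
  have h0 : (lapAt c x).det = (Matrix.detRowAlternating (R := ℝ)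
    (n := {i // i ≠ x})).toMultilinearMap (lapAt c x) := rfl
  rw [h0, hrow]
  refine h.trans (Finset.sum_congr rfl fun f _ => ?_)
  rw [MultilinearMap.map_smul_univ]
  rfl

/-- The parent maps in `S` are acyclic, so each contributes determinant `1`; the other terms of the
expansion of the determinant are nonnegative. -/
lemma sum_le_det_lapAt {V : Type*} [Fintype V] [DecidableEq V] (c : V → V → ℝ)
    (hc : ∀ i j, 0 ≤ c i j) (x : V) (S : Finset ({i // i ≠ x} → V))
    (hS : ∀ f ∈ S, ∃ d : V → ℕ, ∀ i : {i // i ≠ x}, d (f i) < d i.1) :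
    ∑ f ∈ S, ∏ i, c i.1 (f i) ≤ (lapAt c x).det := by
  rw [det_lapAt]
  calc ∑ f ∈ S, ∏ i, c i.1 (f i) = ∑ f ∈ S, (∏ i, c i.1 (f i)) * (parMat f).det := by
        refine Finset.sum_congr rfl fun f hf => ?_
        obtain ⟨d, hd⟩ := hS f hf
        rw [det_parMat_of_depth f d hd, mul_one]
    _ ≤ _ := Finset.sum_le_sum_of_subset_of_nonneg (Finset.subset_univ _) fun f _ _ =>
        mul_nonneg (Finset.prod_nonneg fun _ _ => hc _ _) (det_parMat_nonneg f)

/-- The parent map of a tree with the single root `x` (and a junk value for other edge sets). -/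
noncomputable def par {V : Type*} [Fintype V] [DecidableEq V] (G : SimpleGraph V) (x : V)
    (T : Finset (Sym2 (Option V))) : {i // i ≠ x} → V :=
  if h : T ∈ treesAt G x then (tree_parent h).choose else fun _ => x

lemma par_spec {V : Type*} [Fintype V] [DecidableEq V] {G : SimpleGraph V} {x : V}
    {T : Finset (Sym2 (Option V))} (hT : T ∈ treesAt G x) :
    ∃ (d : V → ℕ), (∀ i, G.Adj i.1 (par G x T i)) ∧ (∀ i, d (par G x T i) < d i.1) ∧
      T = insert (rootEdge x) (Finset.univ.image fun i => s(some i.1, some (par G x T i))) ∧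
      Function.Injective (fun i : {i // i ≠ x} => s(some i.1, some (par G x T i))) := by
  have := (tree_parent hT).choose_spec
  rw [par, dif_pos hT]
  exact this

/-- The conductances `β_ij e^{t_i + t_j}`. -/
noncomputable def cond {V : Type*} (G : SimpleGraph V) (β : V → V → ℝ) (t : V → ℝ) (i j : V) : ℝ :=
  wt G β i j * exp (t i + t j)

lemma prod_forest {V : Type*} [Fintype V] [DecidableEq V] {G : SimpleGraph V} {x : V}
    (β : V → V → ℝ) (hβ : ∀ i j, β i j = β j i) (ε t : V → ℝ)
    {T : Finset (Sym2 (Option V))} (hT : T ∈ treesAt G x) :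
    ∏ e ∈ forestOf T, treeW β ε t e = ∏ i, cond G β t i.1 (par G x T i) := by
  obtain ⟨d, hadj, hd, hTf, hinj⟩ := par_spec hT
  rw [forestOf_eq _ hTf, Finset.prod_image (fun i _ j _ h => hinj h)]
  refine Finset.prod_congr rfl fun i _ => ?_
  rw [treeW_some_some β hβ, cond, wt, if_pos (hadj i)]

lemma prod_tree {V : Type*} [Fintype V] [DecidableEq V] {G : SimpleGraph V} {x : V}
    (β : V → V → ℝ) (hβ : ∀ i j, β i j = β j i) (ε t : V → ℝ)
    {T : Finset (Sym2 (Option V))} (hT : T ∈ treesAt G x) :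
    ∏ e ∈ T, treeW β ε t e = ε x * exp (t x) * ∏ i, cond G β t i.1 (par G x T i) := by
  rw [← prod_forest β hβ ε t hT, ← treeW_rootEdge β ε t x]
  obtain ⟨d, hadj, hd, hTf, hinj⟩ := par_spec hT
  rw [← Finset.prod_insert, forestOf_eq _ hTf, ← hTf]
  simp [forestOf, rootEdge]

/-- The sum over spanning trees `T` of `G` of the product of the conductances of `T`; the trees are
represented by spanning trees of the augmented graph with the single root `x`. -/
noncomputable def treeSum {V : Type*} [Fintype V] [DecidableEq V] (G : SimpleGraph V)
    (β : V → V → ℝ) (x : V) (t : V → ℝ) : ℝ :=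
  ∑ T ∈ treesAt G x, ∏ i, cond G β t i.1 (par G x T i)

lemma cond_nonneg {V : Type*} (G : SimpleGraph V) (β : V → V → ℝ)
    (hβpos : ∀ i j, G.Adj i j → 0 < β i j) (t : V → ℝ) (i j : V) : 0 ≤ cond G β t i j :=
  mul_nonneg (wt_nonneg G β hβpos i j) (exp_pos _).le

/-- The inequality half of the matrix-tree theorem: distinct trees have distinct parent maps. -/
lemma treeSum_le_det {V : Type*} [Fintype V] [DecidableEq V] (G : SimpleGraph V)
    (β : V → V → ℝ) (hβpos : ∀ i j, G.Adj i j → 0 < β i j) (x : V) (t : V → ℝ) :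
    treeSum G β x t ≤ (lapAt (cond G β t) x).det := by
  have hinj : Set.InjOn (par G x) (treesAt G x) := by
    intro T hT T' hT' h
    obtain ⟨-, -, -, h1, -⟩ := par_spec hT
    obtain ⟨-, -, -, h2, -⟩ := par_spec hT'
    rw [h1, h2, h]
  have := sum_le_det_lapAt (cond G β t) (cond_nonneg G β hβpos t) x ((treesAt G x).image (par G x)) (by
    intro f hf
    obtain ⟨T, hT, rfl⟩ := Finset.mem_image.1 hf
    obtain ⟨d, -, hd, -⟩ := par_spec hT
    exact ⟨d, hd⟩)
  rwa [Finset.sum_image hinj] at this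

lemma treeSum_le_treeSum {V : Type*} [Fintype V] [DecidableEq V] (G : SimpleGraph V)
    (β : V → V → ℝ) (hβ : ∀ i j, β i j = β j i)
    (hβpos : ∀ i j, G.Adj i j → 0 < β i j) (x z : V) (t : V → ℝ) :
    treeSum G β x t ≤ treeSum G β z t := by
  have hx : treeSum G β x t = ∑ T ∈ treesAt G x, ∏ e ∈ forestOf T, treeW β 0 t e :=
    Finset.sum_congr rfl fun T hT => (prod_forest β hβ 0 t hT).symm
  have hz : treeSum G β z t = ∑ T ∈ treesAt G z, ∏ e ∈ forestOf T, treeW β 0 t e :=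
    Finset.sum_congr rfl fun T hT => (prod_forest β hβ 0 t hT).symm
  have hinj : Set.InjOn (fun T => insert (rootEdge z) (forestOf T))
      (↑(treesAt G x) : Set (Finset (Sym2 (Option V)))) := by
    intro T hT T' hT' h
    have h1 := (swap_mem hT z).2
    have h2 := (swap_mem hT' z).2
    simp only at h
    rw [h, h2] at h1
    obtain ⟨-, -, -, h3, -⟩ := par_spec hT
    obtain ⟨-, -, -, h4, -⟩ := par_spec hT'
    rw [← forestOf_eq _ h3] at h3
    rw [← forestOf_eq _ h4] at h4
    rw [h3, h4, h1]
  rw [hx, hz]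
  calc ∑ T ∈ treesAt G x, ∏ e ∈ forestOf T, treeW β 0 t e
      = ∑ T ∈ (treesAt G x).image (fun T => insert (rootEdge z) (forestOf T)),
          ∏ e ∈ forestOf T, treeW β 0 t e := by
        rw [Finset.sum_image hinj]
        exact Finset.sum_congr rfl fun T hT => by rw [(swap_mem hT z).2]
    _ ≤ _ := by
        refine Finset.sum_le_sum_of_subset_of_nonneg ?_ ?_
        · intro T hT
          obtain ⟨T', hT', rfl⟩ := Finset.mem_image.1 hT
          exact (swap_mem hT' z).1
        · intro T hT _
          rw [prod_forest β hβ 0 t hT]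
          exact Finset.prod_nonneg fun _ _ => cond_nonneg G β hβpos t _ _

/-! ### The reduced Laplacian and the Gaussian integral over `s` -/

/-- Extension of a vector on `V ∖ {x}` to `V` by the value `0` at `x`. -/
noncomputable def ext0 {V : Type*} [DecidableEq V] (x : V) (u : {i // i ≠ x} → ℝ) (v : V) : ℝ :=
  if h : v = x then 0 else u ⟨v, h⟩

@[simp] lemma ext0_self {V : Type*} [DecidableEq V] (x : V) (u : {i // i ≠ x} → ℝ) :
    ext0 x u x = 0 := by simp [ext0]

@[simp] lemma ext0_coe {V : Type*} [DecidableEq V] (x : V) (u : {i // i ≠ x} → ℝ) (i : {i // i ≠ x}) :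
    ext0 x u i.1 = u i := by simp [ext0, i.2]

lemma lapAt_quad {V : Type*} [Fintype V] [DecidableEq V] (c : V → V → ℝ) (hc : ∀ i j, c i j = c j i)
    (x : V) (v : {i // i ≠ x} → ℝ) :
    v ⬝ᵥ (lapAt c x).mulVec v
      = 1 / 2 * ∑ i, ∑ j, c i j * (ext0 x v i - ext0 x v j) ^ 2 := by
  have h1 : v ⬝ᵥ (lapAt c x).mulVec v
      = ∑ i, ext0 x v i * (ext0 x v i * ∑ k, c i k - ∑ j, c i j * ext0 x v j) := by
    rw [Fintype.sum_eq_add_sum_subtype_ne _ x]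
    simp only [ext0_self, ext0_coe, zero_mul, zero_add, dotProduct, Matrix.mulVec]
    refine Finset.sum_congr rfl fun i _ => ?_
    congr 1
    rw [Fintype.sum_eq_add_sum_subtype_ne (fun j => c i.1 j * ext0 x v j) x]
    simp only [ext0_self, ext0_coe, mul_zero, zero_add, lapAt, Matrix.of_apply, sub_mul,
      Finset.sum_sub_distrib, ite_mul, zero_mul, Finset.sum_ite_eq, Finset.mem_univ, if_true]
    ring
  have h2 : ∑ i, ∑ j, c i j * (ext0 x v i - ext0 x v j) ^ 2 =
      (∑ i, ∑ j, c i j * ext0 x v i ^ 2) + (∑ i, ∑ j, c i j * ext0 x v j ^ 2)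
        - 2 * ∑ i, ∑ j, c i j * (ext0 x v i * ext0 x v j) := by
    simp only [Finset.mul_sum, ← Finset.sum_add_distrib, ← Finset.sum_sub_distrib]
    exact Finset.sum_congr rfl fun i _ => Finset.sum_congr rfl fun j _ => by ring
  have h3 : ∑ i, ∑ j, c i j * ext0 x v j ^ 2 = ∑ i, ∑ j, c i j * ext0 x v i ^ 2 := by
    rw [Finset.sum_comm]
    exact Finset.sum_congr rfl fun i _ => Finset.sum_congr rfl fun j _ => by rw [hc]
  rw [h1, h2, h3]
  simp only [mul_sub, Finset.sum_sub_distrib, Finset.mul_sum, ← Finset.sum_add_distrib]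
  rw [← Finset.sum_sub_distrib, ← Finset.sum_sub_distrib]
  refine Finset.sum_congr rfl fun i _ => ?_
  rw [← Finset.sum_sub_distrib, ← Finset.sum_sub_distrib]
  exact Finset.sum_congr rfl fun j _ => by ring

lemma cond_symm {V : Type*} (G : SimpleGraph V) (β : V → V → ℝ) (hβ : ∀ i j, β i j = β j i)
    (t : V → ℝ) (i j : V) : cond G β t i j = cond G β t j i := by
  rw [cond, cond, wt_symm G β hβ, add_comm]

lemma lapAt_posDef {V : Type*} [Fintype V] [DecidableEq V] (G : SimpleGraph V) (hG : G.Connected)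
    (β : V → V → ℝ) (hβ : ∀ i j, β i j = β j i) (hβpos : ∀ i j, G.Adj i j → 0 < β i j)
    (t : V → ℝ) (x : V) : (lapAt (cond G β t) x).PosDef := by
  have hc := cond_symm G β hβ t
  apply Matrix.PosDef.of_dotProduct_mulVec_pos
  · ext i j
    simp only [Matrix.conjTranspose_apply, lapAt, Matrix.of_apply, star_trivial]
    rw [hc j.1 i.1]
    by_cases h : i = j
    · subst h; rfl
    · rw [if_neg h, if_neg (Ne.symm h)]
  · intro v hv
    rw [star_trivial, lapAt_quad _ hc]
    have hnn : ∀ i j, 0 ≤ cond G β t i j * (ext0 x v i - ext0 x v j) ^ 2 := fun i j =>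
      mul_nonneg (cond_nonneg G β hβpos t i j) (sq_nonneg _)
    by_contra hle
    have h0 : ∑ i, ∑ j, cond G β t i j * (ext0 x v i - ext0 x v j) ^ 2 = 0 :=
      le_antisymm (by linarith) (Finset.sum_nonneg fun i _ => Finset.sum_nonneg fun j _ => hnn i j)
    have h1 : ∀ i j, G.Adj i j → ext0 x v i = ext0 x v j := by
      intro i j hij
      have h2 := (Finset.sum_eq_zero_iff_of_nonneg (fun i _ => Finset.sum_nonneg fun j _ => hnn i j)).1
        h0 i (Finset.mem_univ _)
      have h3 := (Finset.sum_eq_zero_iff_of_nonneg (fun j _ => hnn i j)).1 h2 j (Finset.mem_univ _)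
      have h4 : 0 < cond G β t i j := by
        rw [cond, wt, if_pos hij]; exact mul_pos (hβpos i j hij) (exp_pos _)
      have h5 := (mul_eq_zero.1 h3).resolve_left h4.ne'
      have := pow_eq_zero_iff (two_ne_zero) |>.1 h5
      linarith
    have h2 : ∀ i, ext0 x v i = 0 := by
      intro i
      have hw : ∀ {a b : V}, G.Walk a b → ext0 x v a = ext0 x v b := by
        intro a b p
        induction p with
        | nil => rfl
        | cons h _ ih => rw [h1 _ _ h, ih]
      obtain ⟨p⟩ := hG.preconnected i x
      rw [hw p, ext0_self]
    apply hv
    ext i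
    rw [← ext0_coe x v i, h2]; rfl

lemma energy_split {V : Type*} [Fintype V] [DecidableEq V] (G : SimpleGraph V)
    (β : V → V → ℝ) (hβ : ∀ i j, β i j = β j i) (t : V → ℝ) (x : V) (v : {i // i ≠ x} → ℝ) :
    energy G β t (ext0 x v) = energy G β t 0 + (v ⬝ᵥ (lapAt (cond G β t) x).mulVec v) / 2 := by
  rw [lapAt_quad _ (cond_symm G β hβ t), energy, energy]
  have : ∑ i, ∑ j, wt G β i j *
      (cosh (t i - t j) - 1 + 1 / 2 * (ext0 x v i - ext0 x v j) ^ 2 * exp (t i + t j)) =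
      (∑ i, ∑ j, wt G β i j *
        (cosh (t i - t j) - 1 + 1 / 2 * ((0 : V → ℝ) i - (0 : V → ℝ) j) ^ 2 * exp (t i + t j))) +
      1 / 2 * ∑ i, ∑ j, cond G β t i j * (ext0 x v i - ext0 x v j) ^ 2 := by
    simp only [Finset.mul_sum, ← Finset.sum_add_distrib]
    refine Finset.sum_congr rfl fun i _ => Finset.sum_congr rfl fun j _ => ?_
    simp only [cond, Pi.zero_apply]; ring
  rw [this]; ring

/-- The pinned density of `(u, v)` with `t = û`, `s = v̂` vanishing at `x`, without a tree weight. -/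
noncomputable def pinDens {V : Type*} [Fintype V] [DecidableEq V] (G : SimpleGraph V)
    (β : V → V → ℝ) (x : V) (u v : {i // i ≠ x} → ℝ) : ℝ :=
  (∏ i, exp (-u i) / (2 * π)) * exp (-energy G β (ext0 x u) (ext0 x v))

/-- The `s`-integral is Gaussian and cancels the determinant coming from the sum over trees, up to a
square root. -/
lemma lintegral_s_le {V : Type*} [Fintype V] [DecidableEq V] (G : SimpleGraph V) (hG : G.Connected)
    (β : V → V → ℝ) (hβ : ∀ i j, β i j = β j i) (hβpos : ∀ i j, G.Adj i j → 0 < β i j)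
    (x : V) (u : {i // i ≠ x} → ℝ) :
    ∫⁻ v, ENNReal.ofReal (pinDens G β x u v * treeSum G β x (ext0 x u)) ≤
      ENNReal.ofReal ((√(2 * π) ^ Fintype.card {i // i ≠ x})⁻¹ * ((∏ i, exp (-u i)) *
        exp (-energy G β (ext0 x u) 0) * √(lapAt (cond G β (ext0 x u)) x).det)) := by
  have hA := lapAt_posDef G hG β hβ hβpos (ext0 x u) x
  set A := lapAt (cond G β (ext0 x u)) x with hAd
  have hdet := hA.det_pos
  have hD : treeSum G β x (ext0 x u) ≤ A.det := treeSum_le_det G β hβpos x _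
  set K := (∏ i, exp (-u i) / (2 * π)) * exp (-energy G β (ext0 x u) 0) with hK
  have hK0 : 0 ≤ K := by positivity
  calc ∫⁻ v, ENNReal.ofReal (pinDens G β x u v * treeSum G β x (ext0 x u))
      ≤ ∫⁻ v, ENNReal.ofReal (K * A.det) * ENNReal.ofReal (exp (-(v ⬝ᵥ A.mulVec v) / 2)) := by
        refine lintegral_mono fun v => ?_
        rw [← ENNReal.ofReal_mul (by positivity)]
        apply ENNReal.ofReal_le_ofReal
        rw [pinDens, energy_split G β hβ, ← hAd, neg_add, exp_add, ← mul_assoc, ← hK,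
          mul_right_comm, neg_div]
        gcongr
    _ = ENNReal.ofReal (K * A.det * (√(2 * π) ^ Fintype.card {i // i ≠ x} / √A.det)) := by
        rw [lintegral_const_mul' _ _ ENNReal.ofReal_ne_top, lintegral_gauss_posDef hA,
          ← ENNReal.ofReal_mul (by positivity)]
    _ = _ := by
        congr 1
        have h1 : A.det = √A.det * √A.det := (Real.mul_self_sqrt hdet.le).symm
        have h2 : √A.det ≠ 0 := (Real.sqrt_pos.2 hdet).ne'
        have h3 : (∏ i, exp (-u i) / (2 * π)) = (∏ i, exp (-u i)) *
            ((√(2 * π) ^ Fintype.card {i // i ≠ x})⁻¹ * (√(2 * π) ^ Fintype.card {i // i ≠ x})⁻¹) := by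
          rw [Finset.prod_div_distrib, Finset.prod_const, Finset.card_univ, ← mul_inv, ← mul_pow,
            Real.mul_self_sqrt (by positivity), div_eq_mul_inv]
        have h4 : √(2 * π) ^ Fintype.card {i // i ≠ x} ≠ 0 := by positivity
        rw [hK, h3]
        nth_rewrite 1 [h1]
        field_simp

/-! ### Changing variables to the random Schrödinger operator -/

lemma lintegral_Hdens_le' {ι : Type*} [Fintype ι] [DecidableEq ι] (W : Matrix ι ι ℝ) (hW : W.IsSymm)
    (η : ι → ℝ) :
    ∫⁻ b, {b | (Hop W b).PosDef}.indicator (fun b => ENNReal.ofReal (Hdens W η b)) b ≤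
      ENNReal.ofReal (√(2 * π) ^ Fintype.card ι) := by
  set e : Fin (Fintype.card ι) ≃ ι := (Fintype.equivFin ι).symm with he
  have hmp := volume_measurePreserving_piCongrLeft (fun _ : Fin (Fintype.card ι) => ℝ) e.symm
  have hap : ∀ b : ι → ℝ, MeasurableEquiv.piCongrLeft (fun _ : Fin (Fintype.card ι) => ℝ) e.symm b
      = b ∘ e := by
    intro b; ext i
    have := Equiv.piCongrLeft_apply_apply (fun _ : Fin (Fintype.card ι) => ℝ) e.symm b (e i)
    rw [Equiv.symm_apply_apply] at this
    exact this
  have hH : ∀ b : ι → ℝ, Hop (W.submatrix e e) (b ∘ e) = (Hop W b).submatrix e e := by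
    intro b; ext i j; simp [Hop, Matrix.diagonal_apply]
  have hPD : ∀ b : ι → ℝ, (Hop W b).PosDef → (Hop (W.submatrix e e) (b ∘ e)).PosDef := by
    intro b h; rw [hH]; exact h.submatrix e.injective
  have hd : ∀ b : ι → ℝ, Hdens (W.submatrix e e) (η ∘ e) (b ∘ e) = Hdens W η b := by
    intro b
    unfold Hdens
    rw [hH, Matrix.inv_submatrix_equiv, Matrix.det_submatrix_equiv_self]
    congr 3
    congr 1
    congr 1
    · rw [← e.sum_comp (fun i => ∑ j, Hop W b i j)]
      congr 1
      · refine Finset.sum_congr rfl fun i _ => ?_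
        rw [← e.sum_comp (fun j => Hop W b (e i) j)]; rfl
      · rw [Matrix.submatrix_mulVec_equiv, ← comp_equiv_dotProduct_comp_equiv _ _ e]
        simp [Function.comp_def]
    · rw [← e.sum_comp (fun j => η j)]; rfl
  refine le_trans ?_ (lintegral_Hdens_le _ (W.submatrix e e) (hW.submatrix e) (η ∘ e))
  rw [← hmp.lintegral_comp_emb (MeasurableEquiv.measurableEmbedding _)]
  refine lintegral_mono fun b => ?_
  rw [hap]
  by_cases hb : (Hop W b).PosDef
  · rw [Set.indicator_of_mem (show b ∈ {b | (Hop W b).PosDef} from hb),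
      Set.indicator_of_mem (show b ∘ e ∈ {b | (Hop (W.submatrix e e) b).PosDef} from hPD b hb), hd]
  · rw [Set.indicator_of_notMem (show b ∉ {b | (Hop W b).PosDef} from hb)]
    exact zero_le

/-- The weights between vertices other than `x`. -/
noncomputable def Wmat {V : Type*} (G : SimpleGraph V) (β : V → V → ℝ) (x : V) :
    Matrix {i // i ≠ x} {i // i ≠ x} ℝ :=
  Matrix.of fun i j => wt G β i.1 j.1

/-- The diagonal variables `b_i = ∑_k w_ik e^{u_k - u_i}` of the random Schrödinger operator. -/
noncomputable def bvar {V : Type*} [Fintype V] [DecidableEq V] (G : SimpleGraph V) (β : V → V → ℝ)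
    (x : V) (u : {i // i ≠ x} → ℝ) (i : {i // i ≠ x}) : ℝ :=
  ∑ k, wt G β i.1 k * exp (ext0 x u k - u i)

/-- The operator `H_b` at `b = b(u)`. -/
noncomputable def Hu {V : Type*} [Fintype V] [DecidableEq V] (G : SimpleGraph V) (β : V → V → ℝ)
    (x : V) (u : {i // i ≠ x} → ℝ) : Matrix {i // i ≠ x} {i // i ≠ x} ℝ :=
  Hop (Wmat G β x) (bvar G β x u)

lemma Hu_eq {V : Type*} [Fintype V] [DecidableEq V] (G : SimpleGraph V) (β : V → V → ℝ)
    (x : V) (u : {i // i ≠ x} → ℝ) :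
    Hu G β x u = Matrix.diagonal (fun i => exp (-u i)) * lapAt (cond G β (ext0 x u)) x *
      Matrix.diagonal (fun i => exp (-u i)) := by
  ext i j
  rw [Matrix.mul_diagonal, Matrix.diagonal_mul]
  simp only [Hu, Hop, Wmat, Matrix.sub_apply, Matrix.of_apply, lapAt, Matrix.diagonal_apply]
  have h1 : exp (-u i) * cond G β (ext0 x u) i.1 j.1 * exp (-u j) = wt G β i.1 j.1 := by
    simp only [cond, ext0_coe]
    rw [mul_comm (exp _), mul_assoc, mul_assoc, ← exp_add, ← exp_add]
    rw [show u i + u j + (-u i + -u j) = 0 by ring, exp_zero, mul_one]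
  rw [mul_sub, sub_mul, h1]
  congr 1
  by_cases h : i = j
  · subst h
    simp only [if_true, bvar, cond, Finset.mul_sum, Finset.sum_mul]
    refine Finset.sum_congr rfl fun k _ => ?_
    rw [mul_comm (exp _), mul_assoc, mul_assoc, ← exp_add, ← exp_add, ext0_coe]
    congr 2; ring
  · simp [h]

lemma Hu_posDef {V : Type*} [Fintype V] [DecidableEq V] (G : SimpleGraph V) (hG : G.Connected)
    (β : V → V → ℝ) (hβ : ∀ i j, β i j = β j i) (hβpos : ∀ i j, G.Adj i j → 0 < β i j)
    (x : V) (u : {i // i ≠ x} → ℝ) : (Hu G β x u).PosDef := by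
  have hA := lapAt_posDef G hG β hβ hβpos (ext0 x u) x
  have := hA.conjTranspose_mul_mul_same (B := Matrix.diagonal fun i => exp (-u i)) (by
    intro v w h
    ext i
    have := congrFun h i
    simp only [Matrix.mulVec_diagonal] at this
    exact mul_left_cancel₀ (exp_pos _).ne' this)
  rw [Matrix.diagonal_conjTranspose] at this
  rw [Hu_eq]
  exact this

lemma sqrt_det_lapAt {V : Type*} [Fintype V] [DecidableEq V] (G : SimpleGraph V)
    (β : V → V → ℝ) (x : V) (u : {i // i ≠ x} → ℝ) :
    (∏ i, exp (-u i)) * √(lapAt (cond G β (ext0 x u)) x).det = √(Hu G β x u).det := by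
  rw [Hu_eq, Matrix.det_mul, Matrix.det_mul, Matrix.det_diagonal, mul_right_comm, ← sq,
    Real.sqrt_mul (sq_nonneg _), Real.sqrt_sq (Finset.prod_nonneg fun _ _ => (exp_pos _).le)]

lemma Hu_exp {V : Type*} [Fintype V] [DecidableEq V] (G : SimpleGraph V) (β : V → V → ℝ)
    (x : V) (u : {i // i ≠ x} → ℝ) :
    (Hu G β x u).mulVec (fun i => exp (u i)) = fun i => wt G β i.1 x := by
  ext i
  simp only [Hu, Hop, Matrix.sub_mulVec, Pi.sub_apply, Matrix.mulVec_diagonal]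
  simp only [bvar, Finset.sum_mul, mul_assoc, ← exp_add, sub_add_cancel]
  rw [Fintype.sum_eq_add_sum_subtype_ne _ x]
  simp [Matrix.mulVec, dotProduct, Wmat]

/-- `b` determines `û`, since `e^û = H_b⁻¹ η`. -/
lemma bvar_injective {V : Type*} [Fintype V] [DecidableEq V] (G : SimpleGraph V) (hG : G.Connected)
    (β : V → V → ℝ) (hβ : ∀ i j, β i j = β j i) (hβpos : ∀ i j, G.Adj i j → 0 < β i j)
    (x : V) : Function.Injective (bvar G β x) := by
  intro u u' h
  have hH := Hu_posDef G hG β hβ hβpos x u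
  have h1 := solve_eq hH (Hu_exp G β x u)
  have h2 : (Hu G β x u).mulVec (fun i => exp (u' i)) = fun i => wt G β i.1 x := by
    have : Hu G β x u = Hu G β x u' := by rw [Hu, Hu, h]
    rw [this, Hu_exp]
  rw [solve_eq hH h2] at h1
  ext i
  exact (exp_injective (congrFun h1 i)).symm

/-- The Jacobian matrix of `b(u)`. -/
noncomputable def Jmat {V : Type*} [Fintype V] [DecidableEq V] (G : SimpleGraph V) (β : V → V → ℝ)
    (x : V) (u : {i // i ≠ x} → ℝ) : Matrix {i // i ≠ x} {i // i ≠ x} ℝ :=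
  -(Matrix.diagonal (fun i => exp (-u i)) * Hu G β x u * Matrix.diagonal (fun i => exp (u i)))

lemma bvar_hasFDerivAt {V : Type*} [Fintype V] [DecidableEq V] (G : SimpleGraph V) (β : V → V → ℝ)
    (x : V) (u : {i // i ≠ x} → ℝ) :
    HasFDerivAt (bvar G β x) (Matrix.toLin' (Jmat G β x u)).toContinuousLinearMap u := by
  rw [hasFDerivAt_pi']
  intro i
  have hext : ∀ k : V, HasFDerivAt (fun u : {i // i ≠ x} → ℝ => ext0 x u k)
      (if h : k = x then 0 else ContinuousLinearMap.proj (R := ℝ) (φ := fun _ => ℝ)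
        (⟨k, h⟩ : {i // i ≠ x})) u := by
    intro k
    by_cases h : k = x
    · simp only [ext0, h, dif_pos]; exact hasFDerivAt_const _ _
    · simp only [ext0, h, dif_neg, not_false_eq_true]
      exact (ContinuousLinearMap.proj (R := ℝ) (φ := fun _ => ℝ) (⟨k, h⟩ : {i // i ≠ x})).hasFDerivAt
  have hb := HasFDerivAt.fun_sum (u := Finset.univ) fun k (_ : k ∈ Finset.univ) =>
    (((hext k).sub (ContinuousLinearMap.proj (R := ℝ) (φ := fun _ => ℝ) i).hasFDerivAt).exp).const_mul
      (wt G β i.1 k)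
  refine hb.congr_fderiv ?_
  ext v
  have hv : ∀ k : V, (if h : k = x then (0 : ({i // i ≠ x} → ℝ) →L[ℝ] ℝ) else
      ContinuousLinearMap.proj (R := ℝ) (φ := fun _ => ℝ) (⟨k, h⟩ : {i // i ≠ x})) v = ext0 x v k := by
    intro k
    by_cases h : k = x <;> simp [ext0, h]
  simp only [sum_apply, smul_apply,
    sub_apply, hv, ContinuousLinearMap.proj_apply, smul_eq_mul,
    ContinuousLinearMap.comp_apply, LinearMap.coe_toContinuousLinearMap', Matrix.toLin'_apply]
  have hJ : (Jmat G β x u).mulVec v i = -(bvar G β x u i * v i) +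
      ∑ j : {i // i ≠ x}, wt G β i.1 j.1 * exp (u j - u i) * v j := by
    have : ∀ j, Jmat G β x u i j = -(if i = j then bvar G β x u i else 0) +
        wt G β i.1 j.1 * exp (u j - u i) := by
      intro j
      rw [Jmat, Matrix.neg_apply, Matrix.mul_diagonal, Matrix.diagonal_mul]
      simp only [Hu, Hop, Wmat, Matrix.sub_apply, Matrix.of_apply, Matrix.diagonal_apply]
      rw [sub_eq_add_neg (u j), exp_add]
      by_cases h : i = j
      · subst h
        simp only [if_true]
        have : exp (-u i) * exp (u i) = 1 := by rw [← exp_add]; simp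
        linear_combination (-bvar G β x u i) * this
      · simp only [h, if_false]; ring
    simp only [Matrix.mulVec, dotProduct, this, add_mul, Finset.sum_add_distrib]
    simp
  rw [hJ]
  simp only [Pi.sub_apply, ContinuousLinearMap.proj_apply, mul_sub, Finset.sum_sub_distrib]
  rw [Fintype.sum_eq_add_sum_subtype_ne (fun k => wt G β i.1 k * (exp (ext0 x u k - u i) *
    ext0 x v k)) x]
  simp only [ext0_self, ext0_coe, mul_zero, zero_add, bvar, Finset.sum_mul, mul_assoc]
  ring

/-- The density of `û` in terms of `b = b(û)`; the factor `det H_b` is the Jacobian of `û ↦ b`. -/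
lemma energy_eq {V : Type*} [Fintype V] [DecidableEq V] (G : SimpleGraph V) (hG : G.Connected)
    (β : V → V → ℝ) (hβ : ∀ i j, β i j = β j i) (hβpos : ∀ i j, G.Adj i j → 0 < β i j)
    (x : V) (u : {i // i ≠ x} → ℝ) :
    exp (-energy G β (ext0 x u) 0) * √(Hu G β x u).det = (Hu G β x u).det *
      Hdens (Wmat G β x) (fun i => wt G β i.1 x) (bvar G β x u) := by
  have hH := Hu_posDef G hG β hβ hβpos x u
  unfold Hdens
  change _ = (Hu G β x u).det * (exp (-((∑ i, ∑ j, Hu G β x u i j) +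
    (fun i : {i // i ≠ x} => wt G β i.1 x) ⬝ᵥ
    (Hu G β x u)⁻¹.mulVec (fun i => wt G β i.1 x) - 2 * ∑ i : {i // i ≠ x}, wt G β i.1 x) / 2) /
      √(Hu G β x u).det)
  rw [solve_eq hH (Hu_exp G β x u)]
  have hE : energy G β (ext0 x u) 0 = ((∑ i, ∑ j, Hu G β x u i j) +
    (fun i : {i // i ≠ x} => wt G β i.1 x) ⬝ᵥ (fun i => exp (u i))
      - 2 * ∑ i : {i // i ≠ x}, wt G β i.1 x) / 2 := by
    have h1 : ∑ i, ∑ j, Hu G β x u i j = (∑ i, bvar G β x u i) -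
        ∑ i : {i // i ≠ x}, ∑ j : {i // i ≠ x}, wt G β i.1 j.1 := by
      simp [Hu, Hop, Wmat, Matrix.diagonal_apply, Finset.sum_sub_distrib]
    have h2 : energy G β (ext0 x u) 0 = 1 / 2 * ((∑ i, ∑ j, wt G β i j *
        exp (ext0 x u j - ext0 x u i)) - ∑ i, ∑ j, wt G β i j) := by
      have h3 : ∑ i, ∑ j, wt G β i j * exp (ext0 x u j - ext0 x u i) =
          ∑ i, ∑ j, wt G β i j * exp (ext0 x u i - ext0 x u j) := by
        rw [Finset.sum_comm]
        exact Finset.sum_congr rfl fun i _ => Finset.sum_congr rfl fun j _ => by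
          rw [wt_symm G β hβ]
      have h4 : ∑ i, ∑ j, wt G β i j * exp (ext0 x u j - ext0 x u i) = 1 / 2 *
          ((∑ i, ∑ j, wt G β i j * exp (ext0 x u j - ext0 x u i)) +
          ∑ i, ∑ j, wt G β i j * exp (ext0 x u i - ext0 x u j)) := by
        rw [← h3]; ring
      rw [h4, energy]
      simp only [Finset.mul_sum, ← Finset.sum_add_distrib, ← Finset.sum_sub_distrib]
      refine Finset.sum_congr rfl fun i _ => Finset.sum_congr rfl fun j _ => ?_
      rw [cosh_eq, neg_sub]
      simp only [Pi.zero_apply]; ring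
    have h5 : wt G β x x = 0 := by simp [wt]
    rw [h2, h1, Fintype.sum_eq_add_sum_subtype_ne (fun i => ∑ j, wt G β i j *
        exp (ext0 x u j - ext0 x u i)) x, Fintype.sum_eq_add_sum_subtype_ne (fun i => ∑ j, wt G β i j) x,
      Fintype.sum_eq_add_sum_subtype_ne (fun j => wt G β x j * exp (ext0 x u j - ext0 x u x)) x,
      Fintype.sum_eq_add_sum_subtype_ne (fun j => wt G β x j) x]
    have h6 : ∀ i : {i // i ≠ x}, ∑ j, wt G β i.1 j = wt G β i.1 x +
        ∑ j : {i // i ≠ x}, wt G β i.1 j.1 := fun i => Fintype.sum_eq_add_sum_subtype_ne _ x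
    simp only [h6, h5, ext0_self, ext0_coe, Finset.sum_add_distrib, bvar, dotProduct, sub_zero,
      zero_mul, wt_symm G β hβ x]
    ring
  rw [hE, neg_div]
  have h1 : (Hu G β x u).det = √(Hu G β x u).det * √(Hu G β x u).det :=
    (Real.mul_self_sqrt hH.det_pos.le).symm
  have h2 : √(Hu G β x u).det ≠ 0 := (Real.sqrt_pos.2 hH.det_pos).ne'
  nth_rewrite 2 [h1]
  field_simp

/-- The total mass of the pinned measure is at most one. -/
lemma mass_le_one {V : Type*} [Fintype V] [DecidableEq V] (G : SimpleGraph V) (hG : G.Connected)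
    (β : V → V → ℝ) (hβ : ∀ i j, β i j = β j i) (hβpos : ∀ i j, G.Adj i j → 0 < β i j)
    (x : V) :
    ∫⁻ z : ({i // i ≠ x} → ℝ) × ({i // i ≠ x} → ℝ),
      ENNReal.ofReal (pinDens G β x z.1 z.2 * treeSum G β x (ext0 x z.1)) ≤ 1 := by
  set K := (√(2 * π) ^ Fintype.card {i // i ≠ x})⁻¹ with hK
  have hWs : (Wmat G β x).IsSymm := by
    ext i j; exact wt_symm G β hβ _ _
  set η : {i // i ≠ x} → ℝ := fun i => wt G β i.1 x with hη
  set D : Set ({i // i ≠ x} → ℝ) := {b | (Hop (Wmat G β x) b).PosDef} with hD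
  set g : ({i // i ≠ x} → ℝ) → ENNReal := fun b => ENNReal.ofReal (Hdens (Wmat G β x) η b) with hg
  have hfd : ∀ u ∈ Set.univ, HasFDerivWithinAt (bvar G β x)
      (Matrix.toLin' (Jmat G β x u)).toContinuousLinearMap Set.univ u :=
    fun u _ => (bvar_hasFDerivAt G β x u).hasFDerivWithinAt
  have hinj := (bvar_injective G hG β hβ hβpos x).injOn (s := Set.univ)
  have hdet : ∀ u, |((Matrix.toLin' (Jmat G β x u)).toContinuousLinearMap).det| =
      (Hu G β x u).det := by
    intro u
    have h1 : ((Matrix.toLin' (Jmat G β x u)).toContinuousLinearMap).det = (Jmat G β x u).det := by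
      rw [ContinuousLinearMap.det, LinearMap.coe_toContinuousLinearMap, LinearMap.det_toLin']
    have h2 : (∏ i, exp (-u i)) * ∏ i, exp (u i) = 1 := by
      rw [← Finset.prod_mul_distrib]
      exact Finset.prod_eq_one fun i _ => by rw [← exp_add]; simp
    rw [h1, Jmat, Matrix.det_neg, abs_mul, abs_pow, abs_neg, abs_one, one_pow, one_mul, Matrix.det_mul,
      Matrix.det_mul, Matrix.det_diagonal, Matrix.det_diagonal, mul_right_comm, h2, one_mul,
      abs_of_pos (Hu_posDef G hG β hβ hβpos x u).det_pos]
  calc _ ≤ ∫⁻ u, ∫⁻ v, ENNReal.ofReal (pinDens G β x u v * treeSum G β x (ext0 x u)) :=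
        lintegral_prod_le _
    _ ≤ ∫⁻ u, ENNReal.ofReal K * (ENNReal.ofReal
          |((Matrix.toLin' (Jmat G β x u)).toContinuousLinearMap).det| * g (bvar G β x u)) := by
        refine lintegral_mono fun u => (lintegral_s_le G hG β hβ hβpos x u).trans (le_of_eq ?_)
        rw [mul_right_comm, sqrt_det_lapAt, mul_comm (√_), energy_eq G hG β hβ hβpos,
          ENNReal.ofReal_mul (by positivity), hdet,
          ENNReal.ofReal_mul (Hu_posDef G hG β hβ hβpos x u).det_pos.le]
    _ = ENNReal.ofReal K * ∫⁻ b in bvar G β x '' Set.univ, g b := by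
        rw [lintegral_const_mul' _ _ ENNReal.ofReal_ne_top,
          lintegral_image_eq_lintegral_abs_det_fderiv_mul volume MeasurableSet.univ hfd hinj,
          Measure.restrict_univ]
    _ ≤ ENNReal.ofReal K * ∫⁻ b, D.indicator g b := by
        refine mul_le_mul' le_rfl ?_
        rw [← lintegral_indicator (measurable_image_of_fderivWithin MeasurableSet.univ hfd hinj)]
        refine lintegral_mono fun b => Set.indicator_le_indicator_of_subset ?_ (fun _ => zero_le) b
        rintro _ ⟨u, -, rfl⟩
        exact Hu_posDef G hG β hβ hβpos x u
    _ ≤ ENNReal.ofReal K * ENNReal.ofReal (√(2 * π) ^ Fintype.card {i // i ≠ x}) := by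
        refine mul_le_mul' le_rfl ?_
        exact lintegral_Hdens_le' _ hWs η
    _ = 1 := by
        rw [← ENNReal.ofReal_mul (by positivity), hK, inv_mul_cancel₀ (by positivity),
          ENNReal.ofReal_one]

/-! ### Separation of the zero mode -/

lemma lintegral_zeroMode {V : Type*} [Fintype V] [DecidableEq V] (x : V) (f : (V → ℝ) → ENNReal)
    (hf : Measurable f) :
    ∫⁻ t, f t = ∫⁻ c : ℝ, ∫⁻ u : {i // i ≠ x} → ℝ, f (fun i => c + ext0 x u i) := by
  have h1 := (volume_preserving_piEquivPiSubtypeProd (fun _ : V => ℝ) (fun i => i = x)).symm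
  rw [← h1.lintegral_comp_emb (MeasurableEquiv.measurableEmbedding _)]
  have hm : Measurable fun p : ({i // i = x} → ℝ) × ({i // ¬ i = x} → ℝ) =>
      f ((MeasurableEquiv.piEquivPiSubtypeProd (fun _ : V => ℝ) (fun i => i = x)).symm p) :=
    hf.comp (MeasurableEquiv.measurable _)
  rw [Measure.volume_eq_prod, lintegral_prod _ hm.aemeasurable]
  have h2 := (volume_preserving_funUnique {i // i = x} ℝ).symm
  trans ∫⁻ c : ℝ, ∫⁻ u : {i // ¬ i = x} → ℝ, f ((MeasurableEquiv.piEquivPiSubtypeProd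
    (fun _ : V => ℝ) (fun i => i = x)).symm ((MeasurableEquiv.funUnique {i // i = x} ℝ).symm c, u))
  · symm
    convert h2.lintegral_comp_emb (MeasurableEquiv.measurableEmbedding _) (fun b =>
      ∫⁻ u : {i // ¬ i = x} → ℝ, f ((MeasurableEquiv.piEquivPiSubtypeProd
        (fun _ : V => ℝ) (fun i => i = x)).symm (b, u)))
    rfl
  refine lintegral_congr fun c => ?_
  rw [← lintegral_add_left_eq_self _ (fun _ => c)]
  refine lintegral_congr fun u => ?_
  congr 1
  ext i
  by_cases h : i = x
  · subst h; simp [MeasurableEquiv.piEquivPiSubtypeProd, MeasurableEquiv.funUnique,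
      Equiv.piEquivPiSubtypeProd, ext0]
  · simp [MeasurableEquiv.piEquivPiSubtypeProd, Equiv.piEquivPiSubtypeProd, ext0, h]

/-- Scaling of Lebesgue measure by `e^{-c}`. -/
lemma lintegral_smul_eq {ι : Type*} [Fintype ι] (c : ℝ) (f : (ι → ℝ) → ENNReal) :
    ∫⁻ v, f v = ENNReal.ofReal (exp (-(Fintype.card ι * c))) * ∫⁻ v, f (exp (-c) • v) := by
  have hc : exp (-c) ≠ 0 := (exp_pos _).ne'
  have h := Measure.map_addHaar_smul (volume : Measure (ι → ℝ)) hc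
  have h2 : ∫⁻ v, f (exp (-c) • v) = ∫⁻ v, f v ∂(Measure.map (exp (-c) • ·) volume) :=
    ((MeasurableEquiv.smul₀ (exp (-c)) hc).measurableEmbedding.lintegral_map f).symm
  rw [h2, h, lintegral_smul_measure, smul_eq_mul, ← mul_assoc, ← ENNReal.ofReal_mul (exp_pos _).le,
    abs_of_pos (by positivity), Module.finrank_pi, ← Real.exp_nat_mul, ← exp_neg, ← exp_add]
  simp

lemma measurable_ext0 {V : Type*} [DecidableEq V] (x : V) (i : V) :
    Measurable fun u : {i // i ≠ x} → ℝ => ext0 x u i := by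
  unfold ext0
  by_cases h : i = x
  · simp [h]
  · simp only [h, dif_neg, not_false_eq_true]; exact measurable_pi_apply _

lemma measurable_ext0' {V : Type*} [DecidableEq V] (x : V) :
    Measurable fun u : {i // i ≠ x} → ℝ => ext0 x u :=
  measurable_pi_lambda _ fun i => measurable_ext0 x i

/-- Coordinates `t = c + û`, `s = a + e^{-c} v̂`, in which the zero modes `c = t_x` and `a = s_x`
decouple from the translation invariant part of the density. -/
lemma lintegral_cv {V : Type*} [Fintype V] [DecidableEq V] (x : V)
    (F : (V → ℝ) × (V → ℝ) → ENNReal) (hF : Measurable F) :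
    ∫⁻ p, F p = ∫⁻ w : ℝ × ℝ, ∫⁻ z : ({i // i ≠ x} → ℝ) × ({i // i ≠ x} → ℝ),
      ENNReal.ofReal (exp (-(Fintype.card {i // i ≠ x} * w.1))) *
        F (fun i => w.1 + ext0 x z.1 i, fun i => w.2 + exp (-w.1) * ext0 x z.2 i) := by
  have he := measurable_ext0 x
  rw [Measure.volume_eq_prod, lintegral_prod _ hF.aemeasurable,
    lintegral_zeroMode x _ hF.lintegral_prod_right', Measure.volume_eq_prod, lintegral_prod]
  swap
  · refine Measurable.aemeasurable (Measurable.lintegral_prod_right' (f := fun (q : (ℝ × ℝ) ×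
      (({i // i ≠ x} → ℝ) × ({i // i ≠ x} → ℝ))) => ENNReal.ofReal (exp (-(Fintype.card {i // i ≠ x} * q.1.1))) *
        F (fun i => q.1.1 + ext0 x q.2.1 i, fun i => q.1.2 + exp (-q.1.1) * ext0 x q.2.2 i)) ?_)
    refine Measurable.mul (by fun_prop) (hF.comp (Measurable.prodMk ?_ ?_))
    · refine measurable_pi_lambda _ fun i => ?_
      have := (he i).comp (f := fun q : (ℝ × ℝ) × (({i // i ≠ x} → ℝ) × ({i // i ≠ x} → ℝ)) => q.2.1) (by fun_prop)
      simp only [Function.comp_def] at this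
      fun_prop
    · refine measurable_pi_lambda _ fun i => ?_
      have := (he i).comp (f := fun q : (ℝ × ℝ) × (({i // i ≠ x} → ℝ) × ({i // i ≠ x} → ℝ)) => q.2.2) (by fun_prop)
      simp only [Function.comp_def] at this
      fun_prop
  refine lintegral_congr fun c => ?_
  have key : ∀ u : {i // i ≠ x} → ℝ, ∫⁻ s, F (fun i => c + ext0 x u i, s) =
      ∫⁻ a, ∫⁻ v, ENNReal.ofReal (exp (-(Fintype.card {i // i ≠ x} * c))) *
        F (fun i => c + ext0 x u i, fun i => a + exp (-c) * ext0 x v i) := by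
    intro u
    rw [lintegral_zeroMode x (fun s => F (fun i => c + ext0 x u i, s)) (hF.comp measurable_prodMk_left)]
    refine lintegral_congr fun a => ?_
    rw [lintegral_smul_eq c, lintegral_const_mul' _ _ ENNReal.ofReal_ne_top]
    congr 1
    refine lintegral_congr fun v => ?_
    congr 2
    ext i
    by_cases h : i = x <;> simp [ext0, h]
  simp_rw [key]
  have hmeas : Measurable fun q : (({i // i ≠ x} → ℝ) × ℝ) × ({i // i ≠ x} → ℝ) =>
      ENNReal.ofReal (exp (-(Fintype.card {i // i ≠ x} * c))) *
        F (fun i => c + ext0 x q.1.1 i, fun i => q.1.2 + exp (-c) * ext0 x q.2 i) := by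
    refine Measurable.mul (by fun_prop) (hF.comp (Measurable.prodMk ?_ ?_))
    · refine measurable_pi_lambda _ fun i => ?_
      have := (he i).comp (f := fun q : (({i // i ≠ x} → ℝ) × ℝ) × ({i // i ≠ x} → ℝ) => q.1.1) (by fun_prop)
      simp only [Function.comp_def] at this
      fun_prop
    · refine measurable_pi_lambda _ fun i => ?_
      have := (he i).comp (f := fun q : (({i // i ≠ x} → ℝ) × ℝ) × ({i // i ≠ x} → ℝ) => q.2) (by fun_prop)
      simp only [Function.comp_def] at this
      fun_prop
  rw [lintegral_lintegral_swap hmeas.lintegral_prod_right'.aemeasurable]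
  refine lintegral_congr fun a => ?_
  rw [Measure.volume_eq_prod, lintegral_prod]
  exact (hmeas.comp (f := fun z : ({i // i ≠ x} → ℝ) × ({i // i ≠ x} → ℝ) => ((z.1, a), z.2)) (by fun_prop)).aemeasurable

/-! ### The measure in the new coordinates -/

lemma continuous_energy {V : Type*} [Fintype V] [DecidableEq V] (G : SimpleGraph V)
    (β : V → V → ℝ) : Continuous fun p : (V → ℝ) × (V → ℝ) => energy G β p.1 p.2 := by
  unfold energy; fun_prop

lemma continuous_cond {V : Type*} [Fintype V] [DecidableEq V] (G : SimpleGraph V)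
    (β : V → V → ℝ) (i j : V) : Continuous fun t : V → ℝ => cond G β t i j := by
  unfold cond; fun_prop

lemma measurable_pinDens {V : Type*} [Fintype V] [DecidableEq V] (G : SimpleGraph V)
    (β : V → V → ℝ) (x : V) :
    Measurable fun z : ({i // i ≠ x} → ℝ) × ({i // i ≠ x} → ℝ) => pinDens G β x z.1 z.2 := by
  unfold pinDens
  have := (continuous_energy G β).measurable.comp (((measurable_ext0' x).comp measurable_fst).prodMk
    ((measurable_ext0' x).comp measurable_snd))
  simp only [Function.comp_def] at this
  fun_prop

lemma pinDens_pos {V : Type*} [Fintype V] [DecidableEq V] (G : SimpleGraph V)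
    (β : V → V → ℝ) (x : V) (u v : {i // i ≠ x} → ℝ) : 0 < pinDens G β x u v := by
  unfold pinDens
  have : ∀ i, 0 < exp (-u i) / (2 * π) := fun i => by positivity
  exact mul_pos (Finset.prod_pos fun i _ => this i) (exp_pos _)

/-- The product of the conductances `β_ij e^{t_i+t_j}` over the non-root edges of `T`. -/
noncomputable def treeProd {V : Type*} [Fintype V] [DecidableEq V] (G : SimpleGraph V)
    (β : V → V → ℝ) (x : V) (T : Finset (Sym2 (Option V))) (t : V → ℝ) : ℝ :=
  ∏ i : {i // i ≠ x}, cond G β t i.1 (par G x T i)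

lemma treeProd_pos {V : Type*} [Fintype V] [DecidableEq V] (G : SimpleGraph V)
    (β : V → V → ℝ) (hβpos : ∀ i j, G.Adj i j → 0 < β i j) (x : V)
    {T : Finset (Sym2 (Option V))} (hT : T ∈ treesAt G x) (t : V → ℝ) :
    0 < treeProd G β x T t := by
  obtain ⟨d, h, -⟩ := par_spec hT
  refine Finset.prod_pos fun i _ => ?_
  unfold cond wt
  rw [if_pos (h i)]
  exact mul_pos (hβpos _ _ (h i)) (exp_pos _)

/-- Weights of degree `2 (|V| - 1)` in `e^t`, such as products of conductances over spanning trees. -/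
def Homog {V : Type*} [Fintype V] [DecidableEq V] (x : V) (W : (V → ℝ) → ℝ) : Prop :=
  ∀ (c : ℝ) (t : V → ℝ), W (fun i => c + t i) =
    exp (2 * Fintype.card {i // i ≠ x} * c) * W t

lemma homog_treeProd {V : Type*} [Fintype V] [DecidableEq V] (G : SimpleGraph V)
    (β : V → V → ℝ) (x z : V) (T : Finset (Sym2 (Option V))) : Homog x (treeProd G β z T) := by
  intro c t
  have hc : Fintype.card {i // i ≠ x} = Fintype.card {i // i ≠ z} := by
    simp [Fintype.card_subtype_compl]
  unfold treeProd
  rw [hc]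
  have : ∀ i j, cond G β (fun i => c + t i) i j = exp (2 * c) * cond G β t i j := by
    intro i j
    unfold cond
    rw [show c + t i + (c + t j) = 2 * c + (t i + t j) by ring, exp_add]; ring
  simp_rw [this]
  rw [Finset.prod_mul_distrib, Finset.prod_const, ← exp_nat_mul, Finset.card_univ]
  congr 2; ring

lemma treeSum_eq {V : Type*} [Fintype V] [DecidableEq V] (G : SimpleGraph V)
    (β : V → V → ℝ) (x : V) (t : V → ℝ) :
    treeSum G β x t = ∑ T ∈ treesAt G x, treeProd G β x T t := rfl

lemma homog_treeSum {V : Type*} [Fintype V] [DecidableEq V] (G : SimpleGraph V)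
    (β : V → V → ℝ) (x z : V) : Homog x (treeSum G β z) := by
  intro c t
  simp only [treeSum_eq]
  rw [Finset.mul_sum]
  exact Finset.sum_congr rfl fun T _ => homog_treeProd G β x z T c t

lemma measurable_treeProd {V : Type*} [Fintype V] [DecidableEq V] (G : SimpleGraph V)
    (β : V → V → ℝ) (x : V) (T : Finset (Sym2 (Option V))) : Measurable (treeProd G β x T) := by
  unfold treeProd
  exact Finset.measurable_prod _ fun i _ => (continuous_cond G β _ _).measurable

lemma measurable_treeSum {V : Type*} [Fintype V] [DecidableEq V] (G : SimpleGraph V)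
    (β : V → V → ℝ) (x : V) : Measurable (treeSum G β x) := by
  simp only [funext (treeSum_eq G β x)]
  exact Finset.measurable_sum _ fun T _ => measurable_treeProd G β x T

lemma energy_shift {V : Type*} [Fintype V] [DecidableEq V] (G : SimpleGraph V)
    (β : V → V → ℝ) (c a : ℝ) (t s : V → ℝ) :
    energy G β (fun i => c + t i) (fun i => a + exp (-c) * s i) = energy G β t s := by
  unfold energy
  congr 1
  refine Finset.sum_congr rfl fun i _ => Finset.sum_congr rfl fun j _ => ?_
  have h1 : c + t i - (c + t j) = t i - t j := by ring
  have h2 : exp (c + t i + (c + t j)) = exp c ^ 2 * exp (t i + t j) := by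
    rw [show c + t i + (c + t j) = c + c + (t i + t j) by ring, exp_add, exp_add]; ring
  have h3 : exp (-c) * exp c = 1 := by rw [← exp_add]; simp
  rw [h1, h2]
  congr 2
  linear_combination (1 / 2 * (s i - s j) ^ 2 * exp (t i + t j) * (exp (-c) * exp c + 1)) * h3

/-- The unpinned density with tree weight `W`. -/
noncomputable def freeDens {V : Type*} [Fintype V] [DecidableEq V] (G : SimpleGraph V)
    (β : V → V → ℝ) (W : (V → ℝ) → ℝ) (p : (V → ℝ) × (V → ℝ)) : ℝ :=
  (∏ j, exp (-p.1 j) / (2 * π)) * exp (-energy G β p.1 p.2) * W p.1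

lemma measurable_freeDens {V : Type*} [Fintype V] [DecidableEq V] (G : SimpleGraph V)
    (β : V → V → ℝ) (W : (V → ℝ) → ℝ) (hWm : Measurable W) : Measurable (freeDens G β W) := by
  unfold freeDens
  have := (continuous_energy G β).measurable
  fun_prop

lemma freeDens_shift {V : Type*} [Fintype V] [DecidableEq V] (G : SimpleGraph V)
    (β : V → V → ℝ) (x : V) (W : (V → ℝ) → ℝ) (hW : Homog x W) (c a : ℝ)
    (u v : {i // i ≠ x} → ℝ) :
    exp (-(Fintype.card {i // i ≠ x} * c)) *
        freeDens G β W (fun i => c + ext0 x u i, fun i => a + exp (-c) * ext0 x v i) =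
      exp (-c) / (2 * π) * (pinDens G β x u v * W (ext0 x u)) := by
  unfold freeDens pinDens
  simp only
  rw [energy_shift, hW, Fintype.prod_eq_mul_prod_subtype_ne _ x]
  simp only [ext0_self, ext0_coe, add_zero]
  have h1 : ∀ i, exp (-(c + u i)) / (2 * π) = exp (-c) * (exp (-u i) / (2 * π)) := by
    intro i; rw [neg_add, exp_add]; ring
  simp_rw [h1]
  rw [Finset.prod_mul_distrib, Finset.prod_const, ← exp_nat_mul, Finset.card_univ]
  generalize (Fintype.card {i // i ≠ x} : ℝ) = m
  have h2 : exp (-(m * c)) * exp (m * -c) * exp (2 * m * c) = 1 := by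
    rw [← exp_add, ← exp_add, exp_eq_one_iff]; ring
  linear_combination (exp (-c) / (2 * π) * ((∏ i, exp (-u i) / (2 * π)) *
    exp (-energy G β (ext0 x u) (ext0 x v))) * W (ext0 x u)) * h2

lemma lintegral_freeDens {V : Type*} [Fintype V] [DecidableEq V] (G : SimpleGraph V)
    (β : V → V → ℝ) (x : V) (W : (V → ℝ) → ℝ) (hW : Homog x W) (hWm : Measurable W)
    (F : (V → ℝ) × (V → ℝ) → ENNReal) (hF : Measurable F) :
    ∫⁻ p, ENNReal.ofReal (freeDens G β W p) * F p =
      ∫⁻ w : ℝ × ℝ, ∫⁻ z : ({i // i ≠ x} → ℝ) × ({i // i ≠ x} → ℝ),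
        ENNReal.ofReal (exp (-w.1) / (2 * π)) *
          ENNReal.ofReal (pinDens G β x z.1 z.2 * W (ext0 x z.1)) *
        F (fun i => w.1 + ext0 x z.1 i, fun i => w.2 + exp (-w.1) * ext0 x z.2 i) := by
  rw [lintegral_cv x (fun p => ENNReal.ofReal (freeDens G β W p) * F p)
    ((measurable_freeDens G β W hWm).ennreal_ofReal.mul hF)]
  refine lintegral_congr fun w => lintegral_congr fun z => ?_
  rw [← mul_assoc, ← ENNReal.ofReal_mul (exp_pos _).le, freeDens_shift G β x W hW,
    ENNReal.ofReal_mul (by positivity)]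

lemma measurable_pinW {V : Type*} [Fintype V] [DecidableEq V] (G : SimpleGraph V)
    (β : V → V → ℝ) (x : V) (W : (V → ℝ) → ℝ) (hWm : Measurable W) :
    Measurable fun z : ({i // i ≠ x} → ℝ) × ({i // i ≠ x} → ℝ) =>
      pinDens G β x z.1 z.2 * W (ext0 x z.1) :=
  (measurable_pinDens G β x).mul (hWm.comp ((measurable_ext0' x).comp measurable_fst))

/-- Moving the pinning from `x` to `y`: testing the unpinned measure, weighted by `e^{t_y}`, against a
probability density in `(t_x, s_x)` gives the left-hand side when the zero mode at `x` is separated,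
and at most the total mass of the measure pinned at `y` when the zero mode at `y` is separated. -/
lemma lintegral_tilt_le {V : Type*} [Fintype V] [DecidableEq V] (G : SimpleGraph V)
    (hG : G.Connected) (β : V → V → ℝ) (hβ : ∀ i j, β i j = β j i)
    (hβpos : ∀ i j, G.Adj i j → 0 < β i j) (x y : V) :
    ∫⁻ z : ({i // i ≠ x} → ℝ) × ({i // i ≠ x} → ℝ),
      ENNReal.ofReal (pinDens G β x z.1 z.2 * treeSum G β x (ext0 x z.1)) *
        ENNReal.ofReal (exp (ext0 x z.1 y)) ≤ 1 := by
  set ψ : ℝ × ℝ → ENNReal := (Set.Icc (0 : ℝ) 1 ×ˢ Set.Icc (0 : ℝ) 1).indicator 1 with hψ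
  have hψm : Measurable ψ := measurable_one.indicator (measurableSet_Icc.prod measurableSet_Icc)
  have hψ1 : ∫⁻ w, ψ w = 1 := by
    rw [hψ, lintegral_indicator_one (measurableSet_Icc.prod measurableSet_Icc),
      Measure.volume_eq_prod, Measure.prod_prod]
    simp
  set W := treeSum G β x with hWdef
  have hW0 : ∀ z t, 0 ≤ treeSum G β z t := fun z t => Finset.sum_nonneg fun T _ =>
    Finset.prod_nonneg fun i _ => cond_nonneg G β hβpos _ _ _
  set F : (V → ℝ) × (V → ℝ) → ENNReal := fun p => ENNReal.ofReal (exp (p.1 y)) * ψ (p.1 x, p.2 x)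
    with hF
  have hFm : Measurable F := by
    refine Measurable.mul (by fun_prop) (hψm.comp (by fun_prop))
  have hx := lintegral_freeDens G β x W (homog_treeSum G β x x) (measurable_treeSum G β x) F hFm
  have hy := lintegral_freeDens G β y W (homog_treeSum G β y x) (measurable_treeSum G β x) F hFm
  rw [hx] at hy
  have hpi : ∀ c d : ℝ, ENNReal.ofReal (exp (-c) / (2 * π)) * ENNReal.ofReal (exp (c + d)) =
      ENNReal.ofReal (1 / (2 * π)) * ENNReal.ofReal (exp d) := by
    intro c d
    rw [← ENNReal.ofReal_mul (by positivity), ← ENNReal.ofReal_mul (by positivity), exp_add]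
    congr 1
    have : exp (-c) * exp c = 1 := by rw [← exp_add]; simp
    linear_combination (1 / (2 * π) * exp d) * this
  set Q := ∫⁻ z : ({i // i ≠ x} → ℝ) × ({i // i ≠ x} → ℝ),
      ENNReal.ofReal (pinDens G β x z.1 z.2 * treeSum G β x (ext0 x z.1)) *
        ENNReal.ofReal (exp (ext0 x z.1 y)) with hQ
  have hl : ∫⁻ w : ℝ × ℝ, ∫⁻ z : ({i // i ≠ x} → ℝ) × ({i // i ≠ x} → ℝ),
        ENNReal.ofReal (exp (-w.1) / (2 * π)) *
          ENNReal.ofReal (pinDens G β x z.1 z.2 * W (ext0 x z.1)) *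
        F (fun i => w.1 + ext0 x z.1 i, fun i => w.2 + exp (-w.1) * ext0 x z.2 i) =
        ENNReal.ofReal (1 / (2 * π)) * Q := by
    have hqm : Measurable fun z : ({i // i ≠ x} → ℝ) × ({i // i ≠ x} → ℝ) =>
      ENNReal.ofReal (pinDens G β x z.1 z.2 * treeSum G β x (ext0 x z.1)) *
        ENNReal.ofReal (exp (ext0 x z.1 y)) :=
      (measurable_pinW G β x _ (measurable_treeSum G β x)).ennreal_ofReal.mul
        (((measurable_ext0 x y).comp measurable_fst).exp.ennreal_ofReal)
    calc _ = ∫⁻ w : ℝ × ℝ, ψ w * (ENNReal.ofReal (1 / (2 * π)) * Q) := by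
          refine lintegral_congr fun w => ?_
          rw [hQ, ← lintegral_const_mul' _ _ ENNReal.ofReal_ne_top,
            ← lintegral_const_mul _ (hqm.const_mul _)]
          refine lintegral_congr fun z => ?_
          simp only [hF, ext0_self, mul_zero, add_zero]
          rw [show ENNReal.ofReal (exp (-w.1) / (2 * π)) *
            ENNReal.ofReal (pinDens G β x z.1 z.2 * W (ext0 x z.1)) *
            (ENNReal.ofReal (exp (w.1 + ext0 x z.1 y)) * ψ (w.1, w.2)) =
            (ENNReal.ofReal (exp (-w.1) / (2 * π)) * ENNReal.ofReal (exp (w.1 + ext0 x z.1 y))) *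
            ENNReal.ofReal (pinDens G β x z.1 z.2 * W (ext0 x z.1)) * ψ (w.1, w.2) by ring, hpi]
          ring
      _ = _ := by rw [lintegral_mul_const _ hψm, hψ1, one_mul]
  have hr : ∫⁻ w : ℝ × ℝ, ∫⁻ z : ({i // i ≠ y} → ℝ) × ({i // i ≠ y} → ℝ),
        ENNReal.ofReal (exp (-w.1) / (2 * π)) *
          ENNReal.ofReal (pinDens G β y z.1 z.2 * W (ext0 y z.1)) *
        F (fun i => w.1 + ext0 y z.1 i, fun i => w.2 + exp (-w.1) * ext0 y z.2 i) ≤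
        ENNReal.ofReal (1 / (2 * π)) := by
    set q : ({i // i ≠ y} → ℝ) × ({i // i ≠ y} → ℝ) → ENNReal := fun z =>
      ENNReal.ofReal (pinDens G β y z.1 z.2 * treeSum G β y (ext0 y z.1)) with hq
    have hqm : Measurable q := (measurable_pinW G β y _ (measurable_treeSum G β y)).ennreal_ofReal
    have e1 := measurable_ext0 y x
    calc _ ≤ ∫⁻ w : ℝ × ℝ, ∫⁻ z : ({i // i ≠ y} → ℝ) × ({i // i ≠ y} → ℝ),
          ENNReal.ofReal (1 / (2 * π)) * (q z *
            ψ (w.1 + ext0 y z.1 x, w.2 + exp (-w.1) * ext0 y z.2 x)) := by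
          refine lintegral_mono fun w => lintegral_mono fun z => ?_
          simp only [hF, ext0_self]
          rw [show ENNReal.ofReal (exp (-w.1) / (2 * π)) *
            ENNReal.ofReal (pinDens G β y z.1 z.2 * W (ext0 y z.1)) *
            (ENNReal.ofReal (exp (w.1 + 0)) *
              ψ (w.1 + ext0 y z.1 x, w.2 + exp (-w.1) * ext0 y z.2 x)) =
            (ENNReal.ofReal (exp (-w.1) / (2 * π)) * ENNReal.ofReal (exp (w.1 + 0))) *
            (ENNReal.ofReal (pinDens G β y z.1 z.2 * W (ext0 y z.1)) *
              ψ (w.1 + ext0 y z.1 x, w.2 + exp (-w.1) * ext0 y z.2 x)) by ring, hpi, exp_zero,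
            ENNReal.ofReal_one, mul_one]
          refine mul_le_mul' le_rfl (mul_le_mul' (ENNReal.ofReal_le_ofReal ?_) le_rfl)
          exact mul_le_mul_of_nonneg_left (treeSum_le_treeSum G β hβ hβpos x y _)
            (pinDens_pos G β y _ _).le
      _ = ∫⁻ z : ({i // i ≠ y} → ℝ) × ({i // i ≠ y} → ℝ), ∫⁻ w : ℝ × ℝ,
          ENNReal.ofReal (1 / (2 * π)) * (q z *
            ψ (w.1 + ext0 y z.1 x, w.2 + exp (-w.1) * ext0 y z.2 x)) := by
          refine lintegral_lintegral_swap (Measurable.aemeasurable ?_)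
          refine Measurable.const_mul ((hqm.comp measurable_snd).mul (hψm.comp ?_)) _
          have h1 := e1.comp (f := fun a : (ℝ × ℝ) × (({i // i ≠ y} → ℝ) × ({i // i ≠ y} → ℝ)) =>
            a.2.1) (by fun_prop)
          have h2 := e1.comp (f := fun a : (ℝ × ℝ) × (({i // i ≠ y} → ℝ) × ({i // i ≠ y} → ℝ)) =>
            a.2.2) (by fun_prop)
          simp only [Function.comp_def] at h1 h2
          fun_prop
      _ = ∫⁻ z, ENNReal.ofReal (1 / (2 * π)) * q z := by
          refine lintegral_congr fun z => ?_
          have hmm : Measurable fun w : ℝ × ℝ =>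
              ψ (w.1 + ext0 y z.1 x, w.2 + exp (-w.1) * ext0 y z.2 x) :=
            hψm.comp (by fun_prop)
          rw [lintegral_const_mul' _ _ ENNReal.ofReal_ne_top, lintegral_const_mul _ hmm]
          congr 1
          suffices h : ∫⁻ w : ℝ × ℝ, ψ (w.1 + ext0 y z.1 x, w.2 + exp (-w.1) * ext0 y z.2 x) = 1 by
            rw [h, mul_one]
          rw [Measure.volume_eq_prod, lintegral_prod _ hmm.aemeasurable]
          simp only
          have : ∀ c : ℝ, ∫⁻ a : ℝ, ψ (c + ext0 y z.1 x, a + exp (-c) * ext0 y z.2 x) =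
              ∫⁻ a : ℝ, ψ (c + ext0 y z.1 x, a) := fun c =>
            lintegral_add_right_eq_self (fun a => ψ (c + ext0 y z.1 x, a)) _
          simp_rw [this]
          rw [lintegral_add_right_eq_self (fun c => ∫⁻ a, ψ (c, a)) (ext0 y z.1 x),
            ← lintegral_prod _ hψm.aemeasurable, ← Measure.volume_eq_prod, hψ1]
      _ ≤ ENNReal.ofReal (1 / (2 * π)) * 1 := by
          rw [lintegral_const_mul' _ _ ENNReal.ofReal_ne_top]
          exact mul_le_mul' le_rfl (mass_le_one G hG β hβ hβpos y)
      _ = _ := mul_one _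
  rw [hl] at hy
  rw [← hy] at hr
  have hpos : ENNReal.ofReal (1 / (2 * π)) ≠ 0 := by
    rw [ne_eq, ENNReal.ofReal_eq_zero, not_le]; positivity
  have h3 : ENNReal.ofReal (1 / (2 * π)) * Q ≤ ENNReal.ofReal (1 / (2 * π)) * 1 := by
    rwa [mul_one]
  exact (ENNReal.mul_le_mul_iff_right hpos ENNReal.ofReal_ne_top).1 h3

/-! ### The zero mode integral -/

lemma lintegral_zero_a {b : ℝ} (hb : 0 < b) :
    ∫⁻ a : ℝ, ENNReal.ofReal (exp (-(b / 2 * a ^ 2))) = ENNReal.ofReal (√(2 * π / b)) := by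
  have h := integral_gaussian (b / 2)
  have hi := integrable_exp_neg_mul_sq (b := b / 2) (by positivity)
  simp only [neg_mul] at h hi
  rw [← ofReal_integral_eq_lintegral_ofReal hi (ae_of_all _ fun a => (exp_pos _).le), h]
  congr 2
  field_simp

/-- The square root weight compensates for the pinning of `a` by `k` in place of `S`. -/
lemma lintegral_zeroMode_sqrt {k S : ℝ} (hk : 0 < k) (hS : 0 < S) :
    ∫⁻ w : ℝ × ℝ, ENNReal.ofReal (k / (2 * π) * exp w.1 *
        (√(k / S) * exp (-(k / 2 * exp w.1 * w.2 ^ 2) - S / 2 * exp w.1))) =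
      ∫⁻ w : ℝ × ℝ, ENNReal.ofReal (k / (2 * π) * exp w.1 *
        exp (-(S / 2 * exp w.1 * (1 + w.2 ^ 2)))) := by
  rw [Measure.volume_eq_prod, lintegral_prod _ (by fun_prop), lintegral_prod _ (by fun_prop)]
  refine lintegral_congr fun r => ?_
  have h1 : ∀ a : ℝ, ENNReal.ofReal (k / (2 * π) * exp r *
      (√(k / S) * exp (-(k / 2 * exp r * a ^ 2) - S / 2 * exp r))) =
      ENNReal.ofReal (k / (2 * π) * exp r * √(k / S) * exp (-(S / 2 * exp r))) *
        ENNReal.ofReal (exp (-(k * exp r / 2 * a ^ 2))) := by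
    intro a
    rw [← ENNReal.ofReal_mul (by positivity), sub_eq_add_neg, exp_add]
    congr 1
    rw [show k / 2 * exp r * a ^ 2 = k * exp r / 2 * a ^ 2 by ring]; ring
  have h2 : ∀ a : ℝ, ENNReal.ofReal (k / (2 * π) * exp r *
      exp (-(S / 2 * exp r * (1 + a ^ 2)))) =
      ENNReal.ofReal (k / (2 * π) * exp r * exp (-(S / 2 * exp r))) *
        ENNReal.ofReal (exp (-(S * exp r / 2 * a ^ 2))) := by
    intro a
    rw [← ENNReal.ofReal_mul (by positivity), mul_assoc _ (exp (-(S / 2 * exp r))), ← exp_add]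
    congr 3; ring
  simp_rw [h1, h2]
  rw [lintegral_const_mul' _ _ ENNReal.ofReal_ne_top, lintegral_const_mul' _ _ ENNReal.ofReal_ne_top,
    lintegral_zero_a (by positivity), lintegral_zero_a (by positivity),
    ← ENNReal.ofReal_mul (by positivity), ← ENNReal.ofReal_mul (by positivity)]
  congr 1
  have : √(2 * π / (S * exp r)) = √(k / S) * √(2 * π / (k * exp r)) := by
    rw [← Real.sqrt_mul (by positivity)]
    congr 1
    field_simp
  rw [this]; ring

lemma lintegral_zeroMode_eq {k S : ℝ} (hk : 0 < k) (hS : 0 < S) :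
    ∫⁻ w : ℝ × ℝ, ENNReal.ofReal (k / (2 * π) * exp w.1 *
        exp (-(S / 2 * exp w.1 * (1 + w.2 ^ 2)))) = ENNReal.ofReal (k / S) := by
  rw [Measure.volume_eq_prod, lintegral_prod_symm _ (by fun_prop)]
  have h1 : ∀ a : ℝ, ∫⁻ r : ℝ, ENNReal.ofReal (k / (2 * π) * exp r *
      exp (-(S / 2 * exp r * (1 + a ^ 2)))) =
      ENNReal.ofReal (k / (π * S)) * ENNReal.ofReal ((1 + a ^ 2)⁻¹) := by
    intro a
    have hb : 0 < S / 2 * (1 + a ^ 2) := by positivity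
    have h := lintegral_Ioi_exp_subst
      (fun c => ENNReal.ofReal (k / (2 * π)) * ENNReal.ofReal (exp (-(S / 2 * (1 + a ^ 2)) * c)))
    have h' : ∀ r : ℝ, ENNReal.ofReal (k / (2 * π) * exp r *
      exp (-(S / 2 * exp r * (1 + a ^ 2)))) = ENNReal.ofReal (exp r) *
        (ENNReal.ofReal (k / (2 * π)) * ENNReal.ofReal (exp (-(S / 2 * (1 + a ^ 2)) * exp r))) := by
      intro r
      rw [← ENNReal.ofReal_mul (by positivity), ← ENNReal.ofReal_mul (by positivity)]
      congr 1
      rw [show -(S / 2 * exp r * (1 + a ^ 2)) = -(S / 2 * (1 + a ^ 2)) * exp r by ring]; ring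
    simp_rw [h']
    rw [← h, lintegral_const_mul' _ _ ENNReal.ofReal_ne_top,
      ← ofReal_integral_eq_lintegral_ofReal (integrableOn_exp_mul_Ioi (by linarith) 0)
        (ae_of_all _ fun a => (exp_pos _).le),
      integral_exp_mul_Ioi (by linarith) 0, ← ENNReal.ofReal_mul (by positivity),
      ← ENNReal.ofReal_mul (by positivity)]
    congr 1
    rw [mul_zero, exp_zero]
    field_simp
  simp_rw [h1]
  rw [lintegral_const_mul' _ _ ENNReal.ofReal_ne_top,
    ← ofReal_integral_eq_lintegral_ofReal integrable_inv_one_add_sq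
      (ae_of_all _ fun a => by positivity), integral_univ_inv_one_add_sq,
    ← ENNReal.ofReal_mul (by positivity)]
  congr 1
  field_simp

/-! ### Rescaling the zero mode and the limit `ε ↓ 0` -/

/-- The translation invariant part of the observable, `e^{û_y} / (π_x + π_y e^{û_y})`. -/
noncomputable def obsRed {V : Type*} [DecidableEq V] (pv : V → ℝ) (x y : V)
    (u : {i // i ≠ x} → ℝ) : ℝ :=
  exp (ext0 x u y) / (pv x + pv y * exp (ext0 x u y))

/-- The point `(t, s)` with rescaled coordinates `q = ((r, a), (u, v))`, where `t_x = r - log ε`. -/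
noncomputable def zc {V : Type*} [DecidableEq V] (x : V) (ε : ℝ)
    (q : (ℝ × ℝ) × (({i // i ≠ x} → ℝ) × ({i // i ≠ x} → ℝ))) : (V → ℝ) × (V → ℝ) :=
  (fun i => q.1.1 - log ε + ext0 x q.2.1 i, fun i => q.1.2 + ε * exp (-q.1.1) * ext0 x q.2.2 i)

lemma measurable_zc {V : Type*} [Fintype V] [DecidableEq V] (x : V) (ε : ℝ) :
    Measurable (zc (V := V) x ε) := by
  unfold zc
  refine Measurable.prodMk (measurable_pi_lambda _ fun i => ?_) (measurable_pi_lambda _ fun i => ?_)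
  · have h1 := (measurable_ext0 x i).comp (f := fun q : (ℝ × ℝ) × (({i // i ≠ x} → ℝ) ×
      ({i // i ≠ x} → ℝ)) => q.2.1) (by fun_prop)
    simp only [Function.comp_def] at h1
    fun_prop
  · have h1 := (measurable_ext0 x i).comp (f := fun q : (ℝ × ℝ) × (({i // i ≠ x} → ℝ) ×
      ({i // i ≠ x} → ℝ)) => q.2.2) (by fun_prop)
    simp only [Function.comp_def] at h1
    fun_prop

lemma measurable_obsRed {V : Type*} [Fintype V] [DecidableEq V] (pv : V → ℝ) (x y : V) :
    Measurable (obsRed pv x y) := by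
  unfold obsRed
  have := measurable_ext0 x y
  fun_prop

lemma obsRed_pos {V : Type*} [DecidableEq V] (pv : V → ℝ) (x y : V)
    (hpx : 0 < pv x) (hpy : 0 < pv y) (u : {i // i ≠ x} → ℝ) : 0 < obsRed pv x y u := by
  unfold obsRed; positivity

lemma obsRed_le_inv {V : Type*} [DecidableEq V] (pv : V → ℝ) (x y : V)
    (hpx : 0 < pv x) (hpy : 0 < pv y) (u : {i // i ≠ x} → ℝ) : obsRed pv x y u ≤ (pv y)⁻¹ := by
  unfold obsRed
  rw [div_le_iff₀ (by positivity), mul_add, inv_mul_cancel_left₀ hpy.ne']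
  have : 0 < (pv y)⁻¹ * pv x := by positivity
  linarith

lemma obsRed_le_exp {V : Type*} [DecidableEq V] (pv : V → ℝ) (x y : V)
    (hpx : 0 < pv x) (hpy : 0 < pv y) (u : {i // i ≠ x} → ℝ) :
    obsRed pv x y u ≤ (pv x)⁻¹ * exp (ext0 x u y) := by
  unfold obsRed
  rw [div_le_iff₀ (by positivity)]
  have h1 : (pv x)⁻¹ * exp (ext0 x u y) * (pv x + pv y * exp (ext0 x u y)) =
    exp (ext0 x u y) + (pv x)⁻¹ * exp (ext0 x u y) * (pv y * exp (ext0 x u y)) := by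
    field_simp
  rw [h1]
  have : 0 < (pv x)⁻¹ * exp (ext0 x u y) * (pv y * exp (ext0 x u y)) := by positivity
  linarith

/-- Expectations in rescaled coordinates: the factor `ε` of the root edge is absorbed by the shift
`c = r - log ε` of the zero mode. -/
lemma lintegral_rescaled {V : Type*} [Fintype V] [DecidableEq V] (G : SimpleGraph V)
    (β : V → V → ℝ) (x y : V) (pv : V → ℝ) (hpx : 0 < pv x) (hpy : 0 < pv y)
    (W : (V → ℝ) → ℝ) (hW : Homog x W) (hWm : Measurable W)
    (hW0 : ∀ t, 0 ≤ W t) (Y : (V → ℝ) × (V → ℝ) → ℝ) (hY : Measurable Y) {ε : ℝ} (hε : 0 < ε) :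
    ∫⁻ p : (V → ℝ) × (V → ℝ), ENNReal.ofReal (freeDens G β W p) *
        ENNReal.ofReal (pv x * ε * exp (p.1 x) *
          (exp (p.1 x + p.1 y) / (pv x * exp (p.1 x) + pv y * exp (p.1 y)) * Y p)) =
      ∫⁻ q : (ℝ × ℝ) × (({i // i ≠ x} → ℝ) × ({i // i ≠ x} → ℝ)),
        ENNReal.ofReal (pinDens G β x q.2.1 q.2.2 * W (ext0 x q.2.1) * obsRed pv x y q.2.1) *
        ENNReal.ofReal (pv x / (2 * π) * exp q.1.1 * Y (zc x ε q)) := by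
  set F : (V → ℝ) × (V → ℝ) → ENNReal := fun p => ENNReal.ofReal (pv x * ε * exp (p.1 x) *
          (exp (p.1 x + p.1 y) / (pv x * exp (p.1 x) + pv y * exp (p.1 y)) * Y p)) with hF
  have hFm : Measurable F := by rw [hF]; fun_prop
  rw [lintegral_freeDens G β x W hW hWm F hFm]
  have hm : Measurable fun q : (ℝ × ℝ) × (({i // i ≠ x} → ℝ) × ({i // i ≠ x} → ℝ)) =>
        ENNReal.ofReal (pinDens G β x q.2.1 q.2.2 * W (ext0 x q.2.1) * obsRed pv x y q.2.1) *
        ENNReal.ofReal (pv x / (2 * π) * exp q.1.1 * Y (zc x ε q)) := by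
    have h1 := (measurable_pinW G β x W hWm).comp (f := fun q : (ℝ × ℝ) × (({i // i ≠ x} → ℝ) ×
      ({i // i ≠ x} → ℝ)) => q.2) (by fun_prop)
    have h2 := (measurable_obsRed pv x y).comp (f := fun q : (ℝ × ℝ) × (({i // i ≠ x} → ℝ) ×
      ({i // i ≠ x} → ℝ)) => q.2.1) (by fun_prop)
    have h3 := hY.comp (measurable_zc x ε)
    simp only [Function.comp_def] at h1 h2 h3
    exact (h1.mul h2).ennreal_ofReal.mul (Measurable.ennreal_ofReal (Measurable.mul (by fun_prop) h3))
  rw [Measure.volume_eq_prod (ℝ × ℝ), lintegral_prod _ hm.aemeasurable,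
    ← lintegral_sub_right_eq_self _ ((log ε, 0) : ℝ × ℝ)]
  refine lintegral_congr fun w => lintegral_congr fun z => ?_
  have hp := pinDens_pos G β x z.1 z.2
  have hg := obsRed_pos pv x y hpx hpy z.1
  have hε1 : exp (-(w.1 - log ε)) = ε * exp (-w.1) := by
    rw [show -(w.1 - log ε) = log ε + -w.1 by ring, exp_add, exp_log hε]
  have hε2 : exp (w.1 - log ε) = exp w.1 / ε := by rw [exp_sub, exp_log hε]
  have e : ENNReal.ofReal (exp (-(w - (log ε, (0 : ℝ))).1) / (2 * π)) *
      F (fun i => (w - (log ε, (0 : ℝ))).1 + ext0 x z.1 i, fun i => (w - (log ε, (0 : ℝ))).2 +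
        exp (-(w - (log ε, (0 : ℝ))).1) * ext0 x z.2 i) =
      ENNReal.ofReal (obsRed pv x y z.1) *
        ENNReal.ofReal (pv x / (2 * π) * exp w.1 * Y (zc x ε (w, z))) := by
    rw [hF, ← ENNReal.ofReal_mul (by positivity), ← ENNReal.ofReal_mul hg.le]
    congr 1
    simp only [Prod.fst_sub, Prod.snd_sub, sub_zero, hε1, ext0_self, add_zero, zc, obsRed]
    simp only [exp_add, hε2, exp_neg]
    generalize Y _ = Y'
    have := exp_pos w.1
    have := exp_pos (ext0 x z.1 y)
    field_simp
  rw [mul_comm (ENNReal.ofReal (exp _ / _)), mul_assoc, e, ← mul_assoc,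
    ENNReal.ofReal_mul (mul_nonneg hp.le (hW0 _))]

lemma lintegral_split {α γ : Type*} [MeasureSpace α] [MeasureSpace γ]
    [SFinite (volume : Measure α)] [SFinite (volume : Measure γ)] (f : γ → ENNReal)
    (h : α × γ → ENNReal) (hf : Measurable f) (hh : Measurable h) :
    ∫⁻ q : α × γ, f q.2 * h q = ∫⁻ z, f z * ∫⁻ w, h (w, z) := by
  rw [Measure.volume_eq_prod,
    lintegral_prod_symm (fun q : α × γ => f q.2 * h q) ((hf.comp measurable_snd).mul hh).aemeasurable]
  refine lintegral_congr fun z => ?_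
  exact lintegral_const_mul (f z) (f := fun w => h (w, z)) (hh.comp measurable_prodMk_right)

lemma measurable_pinWg {V : Type*} [Fintype V] [DecidableEq V] (G : SimpleGraph V)
    (β : V → V → ℝ) (x y : V) (pv : V → ℝ) (W : (V → ℝ) → ℝ) (hWm : Measurable W) :
    Measurable fun z : ({i // i ≠ x} → ℝ) × ({i // i ≠ x} → ℝ) =>
      ENNReal.ofReal (pinDens G β x z.1 z.2 * W (ext0 x z.1) * obsRed pv x y z.1) :=
  ((measurable_pinW G β x W hWm).mul ((measurable_obsRed pv x y).comp measurable_fst)).ennreal_ofReal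

lemma lintegral_pinWg_le {V : Type*} [Fintype V] [DecidableEq V] (G : SimpleGraph V)
    (β : V → V → ℝ) (x y : V) (pv : V → ℝ) (hpx : 0 < pv x) (hpy : 0 < pv y) (W : (V → ℝ) → ℝ)
    (hW0 : ∀ t, 0 ≤ W t)
    (hmass : ∫⁻ z : ({i // i ≠ x} → ℝ) × ({i // i ≠ x} → ℝ),
      ENNReal.ofReal (pinDens G β x z.1 z.2 * W (ext0 x z.1)) ≤ 1) :
    ∫⁻ z : ({i // i ≠ x} → ℝ) × ({i // i ≠ x} → ℝ),
      ENNReal.ofReal (pinDens G β x z.1 z.2 * W (ext0 x z.1) * obsRed pv x y z.1) ≤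
      ENNReal.ofReal (pv y)⁻¹ := by
  calc _ ≤ ∫⁻ z : ({i // i ≠ x} → ℝ) × ({i // i ≠ x} → ℝ), ENNReal.ofReal (pv y)⁻¹ *
        ENNReal.ofReal (pinDens G β x z.1 z.2 * W (ext0 x z.1)) := by
        refine lintegral_mono fun z => ?_
        rw [← ENNReal.ofReal_mul (by positivity), mul_comm (pv y)⁻¹]
        exact ENNReal.ofReal_le_ofReal (mul_le_mul_of_nonneg_left (obsRed_le_inv pv x y hpx hpy _)
          (mul_nonneg (pinDens_pos G β x _ _).le (hW0 _)))
    _ ≤ ENNReal.ofReal (pv y)⁻¹ * 1 := by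
        rw [lintegral_const_mul' _ _ ENNReal.ofReal_ne_top]
        exact mul_le_mul' le_rfl hmass
    _ = _ := mul_one _

/-- Dominated convergence in the rescaled coordinates; the bound on `Y` is integrable against the zero
mode factor because `π_x > 0`. -/
lemma tendsto_rescaled {V : Type*} [Fintype V] [DecidableEq V] (G : SimpleGraph V)
    (β : V → V → ℝ) (x y : V) (pv : V → ℝ) (hpx : 0 < pv x) (hpy : 0 < pv y)
    (W : (V → ℝ) → ℝ) (hWm : Measurable W) (hW0 : ∀ t, 0 ≤ W t)
    (hmass : ∫⁻ z : ({i // i ≠ x} → ℝ) × ({i // i ≠ x} → ℝ),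
      ENNReal.ofReal (pinDens G β x z.1 z.2 * W (ext0 x z.1)) ≤ 1)
    (Y : ℝ → (V → ℝ) × (V → ℝ) → ℝ) (hY : ∀ ε, Measurable (Y ε)) (C : ℝ)
    (Y0 : (ℝ × ℝ) × (({i // i ≠ x} → ℝ) × ({i // i ≠ x} → ℝ)) → ℝ)
    (hYC : ∀ ε, 0 < ε → ε < 1 → ∀ q, Y ε (zc x ε q) ≤
      C * exp (-(pv x / 2 * exp q.1.1 * (1 + q.1.2 ^ 2))))
    (hlim : ∀ q, Tendsto (fun ε => Y ε (zc x ε q)) (𝓝[>] 0) (𝓝 (Y0 q))) :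
    Tendsto (fun ε => ∫⁻ q : (ℝ × ℝ) × (({i // i ≠ x} → ℝ) × ({i // i ≠ x} → ℝ)),
        ENNReal.ofReal (pinDens G β x q.2.1 q.2.2 * W (ext0 x q.2.1) * obsRed pv x y q.2.1) *
        ENNReal.ofReal (pv x / (2 * π) * exp q.1.1 * Y ε (zc x ε q))) (𝓝[>] 0)
      (𝓝 (∫⁻ q : (ℝ × ℝ) × (({i // i ≠ x} → ℝ) × ({i // i ≠ x} → ℝ)),
        ENNReal.ofReal (pinDens G β x q.2.1 q.2.2 * W (ext0 x q.2.1) * obsRed pv x y q.2.1) *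
        ENNReal.ofReal (pv x / (2 * π) * exp q.1.1 * Y0 q))) := by
  have hpm := measurable_pinWg G β x y pv W hWm
  refine tendsto_lintegral_filter_of_dominated_convergence
    (fun q => ENNReal.ofReal (pinDens G β x q.2.1 q.2.2 * W (ext0 x q.2.1) * obsRed pv x y q.2.1) *
      (ENNReal.ofReal (pv x / (2 * π) * exp q.1.1 *
        exp (-(pv x / 2 * exp q.1.1 * (1 + q.1.2 ^ 2)))) * ENNReal.ofReal C)) ?_ ?_ ?_ ?_
  · refine Eventually.of_forall fun ε => (hpm.comp measurable_snd).mul ?_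
    exact Measurable.ennreal_ofReal (Measurable.mul (by fun_prop) ((hY ε).comp (measurable_zc x ε)))
  · filter_upwards [Ioo_mem_nhdsGT (show (0 : ℝ) < 1 by norm_num)] with ε hε
    refine ae_of_all _ fun q => mul_le_mul' le_rfl ?_
    rw [← ENNReal.ofReal_mul (by positivity)]
    refine ENNReal.ofReal_le_ofReal ?_
    rw [mul_assoc _ _ C, mul_comm _ C]
    exact mul_le_mul_of_nonneg_left (hYC ε hε.1 hε.2 q) (by positivity)
  · rw [lintegral_split (fun z : ({i // i ≠ x} → ℝ) × ({i // i ≠ x} → ℝ) =>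
      ENNReal.ofReal (pinDens G β x z.1 z.2 * W (ext0 x z.1) * obsRed pv x y z.1))
      (fun q : (ℝ × ℝ) × (({i // i ≠ x} → ℝ) × ({i // i ≠ x} → ℝ)) =>
        ENNReal.ofReal (pv x / (2 * π) * exp q.1.1 *
        exp (-(pv x / 2 * exp q.1.1 * (1 + q.1.2 ^ 2)))) * ENNReal.ofReal C) hpm (by fun_prop)]
    simp only
    rw [lintegral_mul_const _ hpm, lintegral_mul_const _ (by fun_prop),
      lintegral_zeroMode_eq hpx hpx]
    refine ENNReal.mul_ne_top (ne_top_of_le_ne_top ENNReal.ofReal_ne_top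
      (lintegral_pinWg_le G β x y pv hpx hpy W hW0 hmass)) ?_
    exact ENNReal.mul_ne_top ENNReal.ofReal_ne_top ENNReal.ofReal_ne_top
  · refine ae_of_all _ fun q => ?_
    refine ENNReal.Tendsto.const_mul (ENNReal.tendsto_ofReal ((hlim q).const_mul _))
      (Or.inr ENNReal.ofReal_ne_top)

/-! ### Limits of expectations -/

/-- The exponent of the pinning factor at a single vertex. -/
noncomputable def pinTerm {V : Type*} (p : (V → ℝ) × (V → ℝ)) (i : V) : ℝ :=
  cosh (p.1 i) - 1 + 1 / 2 * p.2 i ^ 2 * exp (p.1 i)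

lemma measurable_pinTerm {V : Type*} [Fintype V] (i : V) :
    Measurable fun p : (V → ℝ) × (V → ℝ) => pinTerm p i := by
  have : Continuous fun p : (V → ℝ) × (V → ℝ) => pinTerm p i := by unfold pinTerm; fun_prop
  exact this.measurable

lemma treeProd_le_treeSum {V : Type*} [Fintype V] [DecidableEq V] (G : SimpleGraph V)
    (β : V → V → ℝ) (hβpos : ∀ i j, G.Adj i j → 0 < β i j) (x : V)
    {T : Finset (Sym2 (Option V))} (hT : T ∈ treesAt G x) (t : V → ℝ) :
    treeProd G β x T t ≤ treeSum G β x t := by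
  rw [treeSum_eq]
  exact Finset.single_le_sum (f := fun T => treeProd G β x T t)
    (fun T hT => (treeProd_pos G β hβpos x hT t).le) hT

lemma mass_treeProd_le {V : Type*} [Fintype V] [DecidableEq V] (G : SimpleGraph V)
    (hG : G.Connected) (β : V → V → ℝ) (hβ : ∀ i j, β i j = β j i)
    (hβpos : ∀ i j, G.Adj i j → 0 < β i j) (x : V)
    {T : Finset (Sym2 (Option V))} (hT : T ∈ treesAt G x) :
    ∫⁻ z : ({i // i ≠ x} → ℝ) × ({i // i ≠ x} → ℝ),
      ENNReal.ofReal (pinDens G β x z.1 z.2 * treeProd G β x T (ext0 x z.1)) ≤ 1 := by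
  refine le_trans (lintegral_mono fun z => ENNReal.ofReal_le_ofReal ?_)
    (mass_le_one G hG β hβ hβpos x)
  exact mul_le_mul_of_nonneg_left (treeProd_le_treeSum G β hβpos x hT _) (pinDens_pos G β x _ _).le

/-- The contribution of one tree with the single root `x`, split into the unpinned density, the factor
of the root edge, the observable, the pinning factor and the test function `E`. -/
lemma integral_tree {V : Type*} [Fintype V] [DecidableEq V] (G : SimpleGraph V)
    (β : V → V → ℝ) (hβ : ∀ i j, β i j = β j i)
    (hβpos : ∀ i j, G.Adj i j → 0 < β i j) (x y : V) (pv : V → ℝ) (hpx : 0 < pv x) (hpy : 0 < pv y)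
    {T : Finset (Sym2 (Option V))} (hT : T ∈ treesAt G x) {ε : ℝ} (hε : 0 < ε)
    (η : V → ℝ) (hη : η x = pv x * ε) (E : (V → ℝ) × (V → ℝ) → ℝ) (hE : Measurable E)
    (hE0 : ∀ p, 0 ≤ E p) :
    ∫ p : (V → ℝ) × (V → ℝ), dens G β η p.1 p.2 T * (obs pv x y p.1 T * E p) =
      (∫⁻ p : (V → ℝ) × (V → ℝ), ENNReal.ofReal (freeDens G β (treeProd G β x T) p) *
        ENNReal.ofReal (pv x * ε * exp (p.1 x) *
          (exp (p.1 x + p.1 y) / (pv x * exp (p.1 x) + pv y * exp (p.1 y)) *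
            (exp (-∑ i, η i * pinTerm p i) * E p)))).toReal := by
  have hroot : rootEdge x ∈ T := by
    have h := ((mem_treesAt).1 hT).2
    have h2 : x ∈ roots T := by rw [h]; exact Finset.mem_singleton_self x
    simpa [roots] using h2
  have hobs : ∀ t, obs pv x y t T =
      exp (t x + t y) / (pv x * exp (t x) + pv y * exp (t y)) := by
    intro t
    rw [obs, if_pos ⟨hroot, connIn_of_treesAt hT y⟩, mul_one]
  have hd : ∀ p : (V → ℝ) × (V → ℝ), dens G β η p.1 p.2 T * (obs pv x y p.1 T * E p) =
      freeDens G β (treeProd G β x T) p * (pv x * ε * exp (p.1 x) *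
          (exp (p.1 x + p.1 y) / (pv x * exp (p.1 x) + pv y * exp (p.1 y)) *
            (exp (-∑ i, η i * pinTerm p i) * E p))) := by
    intro p
    rw [dens, prod_gibbs G β hβ, prod_tree β hβ η p.1 hT, hobs, hη, freeDens, sub_eq_add_neg,
      exp_add, treeProd]
    simp only [pinTerm]
    ring
  have hf0 : ∀ p, 0 ≤ freeDens G β (treeProd G β x T) p := by
    intro p
    have h1 := (treeProd_pos G β hβpos x hT p.1).le
    have h2 : ∀ j, 0 ≤ exp (-p.1 j) / (2 * π) := fun j => by positivity
    exact mul_nonneg (mul_nonneg (Finset.prod_nonneg fun j _ => h2 j) (exp_pos _).le) h1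
  simp_rw [hd]
  have hpm := fun i : V => measurable_pinTerm i
  have hfm := measurable_freeDens G β _ (measurable_treeProd G β x T)
  rw [integral_eq_lintegral_of_nonneg_ae]
  · congr 1
    refine lintegral_congr fun p => ?_
    rw [ENNReal.ofReal_mul (hf0 p)]
  · refine ae_of_all _ fun p => mul_nonneg (hf0 p) ?_
    have := hE0 p
    positivity
  · refine Measurable.aestronglyMeasurable (hfm.mul ?_)
    fun_prop

/-- The limit of a pinned expectation supported on the trees with the single root `x`, as an integral
over the variables that remain once the zero mode is integrated out; `ρ` is the zero mode integral. -/
noncomputable def limVal {V : Type*} [Fintype V] [DecidableEq V] (G : SimpleGraph V)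
    (β : V → V → ℝ) (x y : V) (pv : V → ℝ) (ρ : ({i // i ≠ x} → ℝ) → ℝ)
    (T : Finset (Sym2 (Option V))) : ENNReal :=
  ∫⁻ z : ({i // i ≠ x} → ℝ) × ({i // i ≠ x} → ℝ),
    ENNReal.ofReal (pinDens G β x z.1 z.2 * treeProd G β x T (ext0 x z.1) * obsRed pv x y z.1) *
      ENNReal.ofReal (ρ z.1)

lemma limVal_le {V : Type*} [Fintype V] [DecidableEq V] (G : SimpleGraph V)
    (β : V → V → ℝ) (x y : V) (pv : V → ℝ) {ρ ρ' : ({i // i ≠ x} → ℝ) → ℝ} (h : ∀ u, ρ u ≤ ρ' u)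
    (T : Finset (Sym2 (Option V))) : limVal G β x y pv ρ T ≤ limVal G β x y pv ρ' T :=
  lintegral_mono fun z => mul_le_mul' le_rfl (ENNReal.ofReal_le_ofReal (h z.1))

lemma limVal_ne_top {V : Type*} [Fintype V] [DecidableEq V] (G : SimpleGraph V)
    (hG : G.Connected) (β : V → V → ℝ) (hβ : ∀ i j, β i j = β j i)
    (hβpos : ∀ i j, G.Adj i j → 0 < β i j) (x y : V) (pv : V → ℝ) (hpx : 0 < pv x) (hpy : 0 < pv y)
    {T : Finset (Sym2 (Option V))} (hT : T ∈ treesAt G x) {ρ : ({i // i ≠ x} → ℝ) → ℝ}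
    (h : ∀ u, ρ u ≤ 1) : limVal G β x y pv ρ T ≠ ⊤ := by
  refine ne_top_of_le_ne_top (ENNReal.ofReal_ne_top (r := (pv y)⁻¹))
    ((limVal_le G β x y pv h T).trans ?_)
  unfold limVal
  simp only [ENNReal.ofReal_one, mul_one]
  exact lintegral_pinWg_le G β x y pv hpx hpy _ (fun t => (treeProd_pos G β hβpos x hT t).le)
    (mass_treeProd_le G hG β hβ hβpos x hT)

/-- The common form of the three limits: `Y0` is the limit of the pinning factor times the weight `E` in
rescaled coordinates, and `ρ` is its zero mode integral. -/
lemma tendsto_expect {V : Type*} [Fintype V] [DecidableEq V] (G : SimpleGraph V)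
    (hG : G.Connected) (β : V → V → ℝ) (hβ : ∀ i j, β i j = β j i)
    (hβpos : ∀ i j, G.Adj i j → 0 < β i j) (x y : V) (pv : V → ℝ) (hpx : 0 < pv x) (hpy : 0 < pv y)
    (η : ℝ → V → ℝ) (hη : ∀ ε, η ε x = pv x * ε)
    (f : ℝ → (V → ℝ) → (V → ℝ) → Finset (Sym2 (Option V)) → ℝ)
    (E : ℝ → (V → ℝ) × (V → ℝ) → ℝ) (hE : ∀ ε, Measurable (E ε)) (hE0 : ∀ ε p, 0 ≤ E ε p)
    (hf : ∀ ε t s T, T ∈ treesAt G x → f ε t s T = obs pv x y t T * E ε (t, s))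
    (hf0 : ∀ ε t s T, T ∈ STrees (aug G) → T ∉ treesAt G x → dens G β (η ε) t s T * f ε t s T = 0)
    (C : ℝ) (Y0 : (ℝ × ℝ) × (({i // i ≠ x} → ℝ) × ({i // i ≠ x} → ℝ)) → ℝ) (hY0 : Measurable Y0)
    (hYC : ∀ ε, 0 < ε → ε < 1 → ∀ q,
      exp (-∑ i, η ε i * pinTerm (zc x ε q) i) * E ε (zc x ε q) ≤
      C * exp (-(pv x / 2 * exp q.1.1 * (1 + q.1.2 ^ 2))))
    (hlim : ∀ q, Tendsto (fun ε => exp (-∑ i, η ε i * pinTerm (zc x ε q) i) * E ε (zc x ε q))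
      (𝓝[>] 0) (𝓝 (Y0 q)))
    (ρ : ({i // i ≠ x} → ℝ) → ℝ) (hρ1 : ∀ u, ρ u ≤ 1)
    (hρ : ∀ u v, ∫⁻ w : ℝ × ℝ, ENNReal.ofReal (pv x / (2 * π) * exp w.1 * Y0 (w, (u, v))) =
      ENNReal.ofReal (ρ u)) :
    Tendsto (fun ε => expect G β (η ε) (f ε)) (𝓝[>] 0)
      (𝓝 (∑ T ∈ treesAt G x, (limVal G β x y pv ρ T).toReal)) := by
  have hsum : ∀ ε, expect G β (η ε) (f ε) = ∑ T ∈ treesAt G x,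
      ∫ p : (V → ℝ) × (V → ℝ), dens G β (η ε) p.1 p.2 T * (obs pv x y p.1 T * E ε p) := by
    intro ε
    unfold expect
    rw [← Finset.sum_subset (s₁ := treesAt G x) (Finset.filter_subset _ _)]
    · refine Finset.sum_congr rfl fun T hT => integral_congr_ae (ae_of_all _ fun p => ?_)
      simp only [hf ε p.1 p.2 T hT]
    · intro T hT hT'
      simp only [hf0 ε _ _ T hT hT', integral_zero]
  simp_rw [hsum]
  refine tendsto_finsetSum _ fun T hT => ?_
  have hpm := fun i : V => measurable_pinTerm i
  set Y : ℝ → (V → ℝ) × (V → ℝ) → ℝ := fun ε p => exp (-∑ i, η ε i * pinTerm p i) * E ε p with hYdef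
  have hYm : ∀ ε, Measurable (Y ε) := fun ε => by
    have := hE ε
    simp only [hYdef]; fun_prop
  have hW0 := fun t => (treeProd_pos G β hβpos x hT t).le
  have hWm := measurable_treeProd G β x T
  have key := tendsto_rescaled G β x y pv hpx hpy (treeProd G β x T) hWm
    hW0 (mass_treeProd_le G hG β hβ hβpos x hT) Y hYm C Y0 hYC hlim
  rw [lintegral_split (fun z : ({i // i ≠ x} → ℝ) × ({i // i ≠ x} → ℝ) =>
      ENNReal.ofReal (pinDens G β x z.1 z.2 * treeProd G β x T (ext0 x z.1) * obsRed pv x y z.1))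
      (fun q : (ℝ × ℝ) × (({i // i ≠ x} → ℝ) × ({i // i ≠ x} → ℝ)) =>
        ENNReal.ofReal (pv x / (2 * π) * exp q.1.1 * Y0 q))
      (measurable_pinWg G β x y pv _ hWm) (by fun_prop)] at key
  simp only [hρ] at key
  have key2 := (ENNReal.tendsto_toReal
    (limVal_ne_top G hG β hβ hβpos x y pv hpx hpy hT hρ1)).comp key
  refine key2.congr' ?_
  filter_upwards [self_mem_nhdsWithin] with ε hε
  rw [integral_tree G β hβ hβpos x y pv hpx hpy hT hε (η ε) (hη ε) (E ε) (hE ε) (hE0 ε),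
    lintegral_rescaled G β x y pv hpx hpy _ (homog_treeProd G β x x T) hWm hW0 (Y ε) (hYm ε) hε]
  rfl

/-! ### The three pinnings -/

/-- `∑_i π_i e^{û_i}`. -/
noncomputable def totS {V : Type*} [Fintype V] [DecidableEq V] (pv : V → ℝ) (x : V)
    (u : {i // i ≠ x} → ℝ) : ℝ := ∑ i, pv i * exp (ext0 x u i)

lemma le_totS {V : Type*} [Fintype V] [DecidableEq V] (pv : V → ℝ) (hpv : ∀ i, 0 ≤ pv i) (x : V)
    (u : {i // i ≠ x} → ℝ) : pv x ≤ totS pv x u := by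
  have := Finset.single_le_sum (f := fun i => pv i * exp (ext0 x u i))
    (fun i _ => mul_nonneg (hpv i) (exp_pos _).le) (Finset.mem_univ x)
  simpa [totS] using this

lemma measurable_totS {V : Type*} [Fintype V] [DecidableEq V] (pv : V → ℝ) (x : V) :
    Measurable (totS pv x) := by
  unfold totS
  have := fun i => measurable_ext0 x i
  fun_prop

lemma exp_zc {V : Type*} [DecidableEq V] (x : V) {ε : ℝ} (hε : 0 < ε)
    (q : (ℝ × ℝ) × (({i // i ≠ x} → ℝ) × ({i // i ≠ x} → ℝ))) (i : V) :
    exp ((zc x ε q).1 i) = exp q.1.1 * exp (ext0 x q.2.1 i) / ε := by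
  simp only [zc]
  rw [sub_add_eq_add_sub, exp_sub, exp_log hε, exp_add]

lemma pinTerm_zc {V : Type*} [DecidableEq V] (x : V) {ε : ℝ} (hε : 0 < ε)
    (q : (ℝ × ℝ) × (({i // i ≠ x} → ℝ) × ({i // i ≠ x} → ℝ))) (i : V) :
    ε * pinTerm (zc x ε q) i = 1 / 2 * (exp q.1.1 * exp (ext0 x q.2.1 i)) *
        (1 + (q.1.2 + ε * exp (-q.1.1) * ext0 x q.2.2 i) ^ 2) +
      1 / 2 * ε ^ 2 * (exp q.1.1 * exp (ext0 x q.2.1 i))⁻¹ - ε := by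
  have h := exp_zc x hε q i
  have hs : (zc x ε q).2 i = q.1.2 + ε * exp (-q.1.1) * ext0 x q.2.2 i := rfl
  rw [pinTerm, hs, cosh_eq, exp_neg, h]
  have := exp_pos q.1.1
  have := exp_pos (ext0 x q.2.1 i)
  field_simp
  ring

lemma pinTerm_zc_ge {V : Type*} [DecidableEq V] (x : V) {ε : ℝ} (hε : 0 < ε) (hε1 : ε < 1)
    (q : (ℝ × ℝ) × (({i // i ≠ x} → ℝ) × ({i // i ≠ x} → ℝ))) (i : V) :
    1 / 2 * (exp q.1.1 * exp (ext0 x q.2.1 i)) *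
        (1 + (q.1.2 + ε * exp (-q.1.1) * ext0 x q.2.2 i) ^ 2) - 1 ≤ ε * pinTerm (zc x ε q) i := by
  rw [pinTerm_zc x hε]
  have : 0 < 1 / 2 * ε ^ 2 * (exp q.1.1 * exp (ext0 x q.2.1 i))⁻¹ := by positivity
  linarith

lemma tendsto_pinTerm_zc {V : Type*} [DecidableEq V] (x : V)
    (q : (ℝ × ℝ) × (({i // i ≠ x} → ℝ) × ({i // i ≠ x} → ℝ))) (i : V) :
    Tendsto (fun ε => ε * pinTerm (zc x ε q) i) (𝓝[>] 0)
      (𝓝 (1 / 2 * (exp q.1.1 * exp (ext0 x q.2.1 i)) * (1 + q.1.2 ^ 2))) := by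
  have hc : Continuous fun ε : ℝ => 1 / 2 * (exp q.1.1 * exp (ext0 x q.2.1 i)) *
        (1 + (q.1.2 + ε * exp (-q.1.1) * ext0 x q.2.2 i) ^ 2) +
      1 / 2 * ε ^ 2 * (exp q.1.1 * exp (ext0 x q.2.1 i))⁻¹ - ε := by fun_prop
  have h := (hc.tendsto 0).mono_left (nhdsWithin_le_nhds (s := Set.Ioi 0))
  simp only [zero_mul, add_zero, mul_zero, ne_eq, OfNat.ofNat_ne_zero, not_false_eq_true, zero_pow,
    sub_zero] at h
  refine h.congr' ?_
  filter_upwards [self_mem_nhdsWithin] with ε hε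
  rw [pinTerm_zc x hε]

lemma sum_singlePin {V : Type*} [Fintype V] [DecidableEq V] (x : V) (c : ℝ) (F : V → ℝ) :
    ∑ i, singlePin x c i * F i = c * F x := by
  simp [singlePin]

/-- With pinning at `x` only, a tree with a further root has weight zero, and the observable vanishes on
a tree that does not contain the root edge at `x`. -/
lemma dens_singlePin {V : Type*} [Fintype V] [DecidableEq V] (G : SimpleGraph V)
    (β : V → V → ℝ) (x y : V) (pv : V → ℝ) (c : ℝ) (t s : V → ℝ) {T : Finset (Sym2 (Option V))}
    (hT : T ∈ STrees (aug G)) (hT' : T ∉ treesAt G x) :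
    dens G β (singlePin x c) t s T * obs pv x y t T = 0 := by
  by_cases hx : rootEdge x ∈ T
  · have hr : roots T ≠ {x} := by
      intro h
      refine hT' (mem_treesAt.2 ⟨?_, h⟩)
      simpa [STrees] using hT
    have hxr : x ∈ roots T := by simp [roots, hx]
    obtain ⟨z, hz, hzx⟩ : ∃ z ∈ roots T, z ≠ x := by
      by_contra! h
      exact hr (Finset.eq_singleton_iff_unique_mem.2 ⟨hxr, h⟩)
    have hzT : rootEdge z ∈ T := by simpa [roots] using hz
    rw [dens, Finset.prod_eq_zero hzT (by rw [treeW_rootEdge]; simp [singlePin, hzx])]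
    simp
  · simp [obs, hx]

lemma tendsto_all {V : Type*} [Fintype V] [DecidableEq V] (G : SimpleGraph V)
    (hG : G.Connected) (β : V → V → ℝ) (hβ : ∀ i j, β i j = β j i)
    (hβpos : ∀ i j, G.Adj i j → 0 < β i j) (x y : V) (pv : V → ℝ) (hpv : ∀ i, 0 ≤ pv i)
    (hpx : 0 < pv x) (hpy : 0 < pv y) :
    Tendsto (fun ε : ℝ => expect G β (pinOf pv ε)
        (fun t _ T => obs pv x y t T * (if roots T = {x} then 1 else 0))) (𝓝[>] (0 : ℝ))
      (𝓝 (∑ T ∈ treesAt G x, (limVal G β x y pv (fun u => pv x / totS pv x u) T).toReal)) := by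
  have hS := fun u => hpx.trans_le (le_totS pv hpv x u)
  have hSm := measurable_totS pv x
  refine tendsto_expect G hG β hβ hβpos x y pv hpx hpy (fun ε => pinOf pv ε) (fun ε => rfl)
    (fun _ t _ T => obs pv x y t T * (if roots T = {x} then 1 else 0)) (fun _ _ => 1)
    (fun _ => measurable_const) (fun _ _ => zero_le_one) ?_ ?_ (exp (∑ i, pv i))
    (fun q => exp (-(totS pv x q.2.1 / 2 * exp q.1.1 * (1 + q.1.2 ^ 2)))) (by fun_prop) ?_ ?_
    (fun u => pv x / totS pv x u) (fun u => (div_le_one (hS u)).2 (le_totS pv hpv x u)) ?_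
  · intro ε t s T hT
    rw [if_pos (mem_treesAt.1 hT).2]
  · intro ε t s T hT hT'
    have hr : roots T ≠ {x} := fun h => hT' (mem_treesAt.2 ⟨by simpa [STrees] using hT, h⟩)
    simp [hr]
  · intro ε hε hε1 q
    rw [mul_one, ← exp_add, exp_le_exp]
    have h1 : ∀ i, pv i * (1 / 2 * (exp q.1.1 * exp (ext0 x q.2.1 i)) *
        (1 + (q.1.2 + ε * exp (-q.1.1) * ext0 x q.2.2 i) ^ 2) - 1) ≤
        pinOf pv ε i * pinTerm (zc x ε q) i := by
      intro i
      rw [pinOf, mul_assoc (pv i) ε]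
      exact mul_le_mul_of_nonneg_left (pinTerm_zc_ge x hε hε1 q i) (hpv i)
    have h2 := Finset.sum_le_sum fun i (_ : i ∈ Finset.univ) => h1 i
    simp only [mul_sub, mul_one, Finset.sum_sub_distrib] at h2
    have h3 := Finset.single_le_sum (f := fun i => pv i * (1 / 2 * (exp q.1.1 *
      exp (ext0 x q.2.1 i)) * (1 + (q.1.2 + ε * exp (-q.1.1) * ext0 x q.2.2 i) ^ 2)))
      (fun i _ => mul_nonneg (hpv i) (by positivity)) (Finset.mem_univ x)
    simp only [ext0_self, exp_zero, mul_one, mul_zero, add_zero] at h3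
    linarith
  · intro q
    simp only [mul_one, pinOf, mul_assoc]
    refine (Real.continuous_exp.tendsto _).comp (Tendsto.neg ?_)
    have h := tendsto_finsetSum Finset.univ fun i (_ : i ∈ Finset.univ) =>
      (tendsto_pinTerm_zc x q i).const_mul (pv i)
    convert h using 2
    rw [totS, Finset.sum_div, Finset.sum_mul]
    exact Finset.sum_congr rfl fun i _ => by ring
  · intro u v
    exact lintegral_zeroMode_eq hpx (hS u)

lemma tendsto_single {V : Type*} [Fintype V] [DecidableEq V] (G : SimpleGraph V)
    (hG : G.Connected) (β : V → V → ℝ) (hβ : ∀ i j, β i j = β j i)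
    (hβpos : ∀ i j, G.Adj i j → 0 < β i j) (x y : V) (pv : V → ℝ)
    (hpx : 0 < pv x) (hpy : 0 < pv y) :
    Tendsto (fun ε : ℝ => expect G β (singlePin x (pv x * ε)) (fun t _ T => obs pv x y t T))
      (𝓝[>] (0 : ℝ)) (𝓝 (∑ T ∈ treesAt G x, (limVal G β x y pv (fun _ => 1) T).toReal)) := by
  refine tendsto_expect G hG β hβ hβpos x y pv hpx hpy (fun ε => singlePin x (pv x * ε))
    (fun ε => by simp [singlePin])
    (fun _ t _ T => obs pv x y t T) (fun _ _ => 1)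
    (fun _ => measurable_const) (fun _ _ => zero_le_one) ?_ ?_ (exp (pv x))
    (fun q => exp (-(pv x / 2 * exp q.1.1 * (1 + q.1.2 ^ 2)))) (by fun_prop) ?_ ?_
    (fun u => 1) (fun u => le_rfl) ?_
  · intro ε t s T hT
    rw [mul_one]
  · intro ε t s T hT hT'
    exact dens_singlePin G β x y pv _ t s hT hT'
  · intro ε hε hε1 q
    rw [mul_one, ← exp_add, exp_le_exp, sum_singlePin]
    have h1 := mul_le_mul_of_nonneg_left (pinTerm_zc_ge x hε hε1 q x) hpx.le
    simp only [ext0_self, exp_zero, mul_one, mul_zero, add_zero] at h1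
    linarith
  · intro q
    simp only [mul_one, sum_singlePin, mul_assoc]
    refine (Real.continuous_exp.tendsto _).comp (Tendsto.neg ?_)
    have h := (tendsto_pinTerm_zc x q x).const_mul (pv x)
    convert h using 2
    rw [ext0_self, exp_zero]; ring
  · intro u v
    have h := lintegral_zeroMode_eq hpx hpx
    rwa [div_self hpx.ne'] at h

lemma tendsto_weighted {V : Type*} [Fintype V] [DecidableEq V] (G : SimpleGraph V)
    (hG : G.Connected) (β : V → V → ℝ) (hβ : ∀ i j, β i j = β j i)
    (hβpos : ∀ i j, G.Adj i j → 0 < β i j) (x y : V) (pv : V → ℝ) (hpv : ∀ i, 0 ≤ pv i)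
    (hpx : 0 < pv x) (hpy : 0 < pv y) :
    Tendsto (fun ε : ℝ => expect G β (singlePin x (pv x * ε))
          (fun t _ T => obs pv x y t T *
            Real.sqrt (pv x * Real.exp (t x) / ∑ i, pv i * Real.exp (t i)) *
            ∏ i ∈ Finset.univ.erase x, Real.exp (-(1 / 2) * ε * pv i * Real.exp (t i))))
      (𝓝[>] (0 : ℝ))
      (𝓝 (∑ T ∈ treesAt G x, (limVal G β x y pv (fun u => pv x / totS pv x u) T).toReal)) := by
  have hS := fun u => hpx.trans_le (le_totS pv hpv x u)
  have hSm := measurable_totS pv x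
  have hE1 : ∀ ε, 0 < ε → ∀ t : V → ℝ,
      √(pv x * exp (t x) / ∑ i, pv i * exp (t i)) *
        ∏ i ∈ Finset.univ.erase x, exp (-(1 / 2) * ε * pv i * exp (t i)) ≤ 1 := by
    intro ε hε t
    have h1 := Finset.single_le_sum (f := fun i => pv i * exp (t i))
      (fun i _ => mul_nonneg (hpv i) (exp_pos _).le) (Finset.mem_univ x)
    have h2 : 0 < pv x * exp (t x) := by positivity
    refine mul_le_one₀ (Real.sqrt_le_one.2 ((div_le_one (h2.trans_le h1)).2 h1))
      (Finset.prod_nonneg fun i _ => (exp_pos _).le)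
      (Finset.prod_le_one (fun i _ => (exp_pos _).le) fun i _ => ?_)
    rw [exp_le_one_iff]
    have : 0 ≤ ε * pv i * exp (t i) := by have := hpv i; positivity
    linarith
  have hEzc : ∀ ε, 0 < ε → ∀ q : (ℝ × ℝ) × (({i // i ≠ x} → ℝ) × ({i // i ≠ x} → ℝ)),
      √(pv x * exp ((zc x ε q).1 x) / ∑ i, pv i * exp ((zc x ε q).1 i)) *
        ∏ i ∈ Finset.univ.erase x, exp (-(1 / 2) * ε * pv i * exp ((zc x ε q).1 i)) =
      √(pv x / totS pv x q.2.1) * exp (-(1 / 2 * exp q.1.1 * (totS pv x q.2.1 - pv x))) := by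
    intro ε hε q
    have hSq := hS q.2.1
    congr 1
    · have h1 : ∑ i, pv i * exp ((zc x ε q).1 i) = exp q.1.1 / ε * totS pv x q.2.1 := by
        rw [totS, Finset.mul_sum]
        exact Finset.sum_congr rfl fun i _ => by rw [exp_zc x hε]; ring
      rw [h1, exp_zc x hε, ext0_self, exp_zero, mul_one]
      congr 1
      field_simp
    · rw [← exp_sum]
      congr 1
      have h1 : totS pv x q.2.1 - pv x = ∑ i ∈ Finset.univ.erase x, pv i * exp (ext0 x q.2.1 i) := by
        rw [totS, ← Finset.add_sum_erase _ _ (Finset.mem_univ x)]; simp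
      rw [h1, Finset.mul_sum, ← Finset.sum_neg_distrib]
      refine Finset.sum_congr rfl fun i _ => ?_
      rw [exp_zc x hε]
      field_simp
  refine tendsto_expect G hG β hβ hβpos x y pv hpx hpy (fun ε => singlePin x (pv x * ε))
    (fun ε => by simp [singlePin])
    (fun ε t _ T => obs pv x y t T *
            √(pv x * exp (t x) / ∑ i, pv i * exp (t i)) *
            ∏ i ∈ Finset.univ.erase x, exp (-(1 / 2) * ε * pv i * exp (t i)))
    (fun ε p => √(pv x * exp (p.1 x) / ∑ i, pv i * exp (p.1 i)) *
        ∏ i ∈ Finset.univ.erase x, exp (-(1 / 2) * ε * pv i * exp (p.1 i)))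
    (fun _ => by fun_prop)
    (fun _ _ => mul_nonneg (Real.sqrt_nonneg _) (Finset.prod_nonneg fun i _ => (exp_pos _).le))
    ?_ ?_ (exp (pv x))
    (fun q => √(pv x / totS pv x q.2.1) *
      exp (-(pv x / 2 * exp q.1.1 * q.1.2 ^ 2) - totS pv x q.2.1 / 2 * exp q.1.1)) (by fun_prop) ?_ ?_
    (fun u => pv x / totS pv x u) (fun u => (div_le_one (hS u)).2 (le_totS pv hpv x u)) ?_
  · intro ε t s T hT
    exact mul_assoc _ _ _
  · intro ε t s T hT hT'
    rw [mul_assoc (obs pv x y t T), ← mul_assoc, dens_singlePin G β x y pv _ t s hT hT', zero_mul]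
  · intro ε hε hε1 q
    refine (mul_le_of_le_one_right (exp_pos _).le (hE1 ε hε _)).trans ?_
    rw [← exp_add, exp_le_exp, sum_singlePin]
    have h1 := mul_le_mul_of_nonneg_left (pinTerm_zc_ge x hε hε1 q x) hpx.le
    simp only [ext0_self, exp_zero, mul_one, mul_zero, add_zero] at h1
    linarith
  · intro q
    have h := ((Real.continuous_exp.tendsto _).comp
      ((tendsto_pinTerm_zc x q x).const_mul (pv x)).neg).mul_const
      (√(pv x / totS pv x q.2.1) * exp (-(1 / 2 * exp q.1.1 * (totS pv x q.2.1 - pv x))))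
    have hv : exp (-(pv x * (1 / 2 * (exp q.1.1 * exp (ext0 x q.2.1 x)) * (1 + q.1.2 ^ 2)))) *
        (√(pv x / totS pv x q.2.1) * exp (-(1 / 2 * exp q.1.1 * (totS pv x q.2.1 - pv x)))) =
        √(pv x / totS pv x q.2.1) *
          exp (-(pv x / 2 * exp q.1.1 * q.1.2 ^ 2) - totS pv x q.2.1 / 2 * exp q.1.1) := by
      rw [mul_left_comm, ← exp_add, ext0_self, exp_zero]
      congr 2; ring
    rw [hv] at h
    refine h.congr' ?_
    filter_upwards [self_mem_nhdsWithin] with ε hε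
    rw [hEzc ε hε, sum_singlePin, mul_assoc (pv x)]
    rfl
  · intro u v
    exact (lintegral_zeroMode_sqrt hpx (hS u)).trans (lintegral_zeroMode_eq hpx (hS u))

lemma limVal_pos {V : Type*} [Fintype V] [DecidableEq V] (G : SimpleGraph V)
    (β : V → V → ℝ) (hβpos : ∀ i j, G.Adj i j → 0 < β i j) (x y : V) (pv : V → ℝ)
    (hpx : 0 < pv x) (hpy : 0 < pv y)
    {T : Finset (Sym2 (Option V))} (hT : T ∈ treesAt G x) {ρ : ({i // i ≠ x} → ℝ) → ℝ}
    (hρm : Measurable ρ) (hρ : ∀ u, 0 < ρ u) : limVal G β x y pv ρ T ≠ 0 := by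
  intro h
  unfold limVal at h
  have hm : Measurable fun z : ({i // i ≠ x} → ℝ) × ({i // i ≠ x} → ℝ) =>
      ENNReal.ofReal (pinDens G β x z.1 z.2 * treeProd G β x T (ext0 x z.1) * obsRed pv x y z.1) *
        ENNReal.ofReal (ρ z.1) :=
    (measurable_pinWg G β x y pv _ (measurable_treeProd G β x T)).mul
      ((hρm.comp measurable_fst).ennreal_ofReal)
  rw [lintegral_eq_zero_iff hm] at h
  obtain ⟨z, hz⟩ := h.exists
  simp only [Pi.zero_apply, mul_eq_zero, ENNReal.ofReal_eq_zero] at hz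
  have h1 := mul_pos (mul_pos (pinDens_pos G β x z.1 z.2) (treeProd_pos G β hβpos x hT (ext0 x z.1)))
    (obsRed_pos pv x y hpx hpy z.1)
  rcases hz with hz | hz
  · exact absurd hz (not_le.2 h1)
  · exact absurd hz (not_le.2 (hρ _))

lemma sum_limVal_le {V : Type*} [Fintype V] [DecidableEq V] (G : SimpleGraph V)
    (hG : G.Connected) (β : V → V → ℝ) (hβ : ∀ i j, β i j = β j i)
    (hβpos : ∀ i j, G.Adj i j → 0 < β i j) (x y : V) (pv : V → ℝ) (hpx : 0 < pv x) (hpy : 0 < pv y) :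
    ∑ T ∈ treesAt G x, (limVal G β x y pv (fun _ => 1) T).toReal ≤ min (pv x)⁻¹ (pv y)⁻¹ := by
  have hW0 : ∀ t, 0 ≤ treeSum G β x t := fun t => Finset.sum_nonneg fun T _ =>
    Finset.prod_nonneg fun i _ => cond_nonneg G β hβpos _ _ _
  rw [← ENNReal.toReal_sum fun T hT =>
    limVal_ne_top G hG β hβ hβpos x y pv hpx hpy hT (fun _ => le_rfl)]
  have hs : ∑ T ∈ treesAt G x, limVal G β x y pv (fun _ => 1) T =
      ∫⁻ z : ({i // i ≠ x} → ℝ) × ({i // i ≠ x} → ℝ),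
      ENNReal.ofReal (pinDens G β x z.1 z.2 * treeSum G β x (ext0 x z.1) * obsRed pv x y z.1) := by
    simp only [limVal, ENNReal.ofReal_one, mul_one]
    rw [← lintegral_finsetSum _ fun T _ =>
      measurable_pinWg G β x y pv _ (measurable_treeProd G β x T)]
    refine lintegral_congr fun z => ?_
    rw [← ENNReal.ofReal_sum_of_nonneg fun T hT => (mul_pos (mul_pos (pinDens_pos G β x _ _)
      (treeProd_pos G β hβpos x hT _)) (obsRed_pos pv x y hpx hpy _)).le, treeSum_eq,
      Finset.mul_sum, Finset.sum_mul]
  rw [hs]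
  refine le_min ?_ ?_
  · refine ENNReal.toReal_le_of_le_ofReal (by positivity) ?_
    calc _ ≤ ∫⁻ z : ({i // i ≠ x} → ℝ) × ({i // i ≠ x} → ℝ), ENNReal.ofReal (pv x)⁻¹ *
          (ENNReal.ofReal (pinDens G β x z.1 z.2 * treeSum G β x (ext0 x z.1)) *
            ENNReal.ofReal (exp (ext0 x z.1 y))) := by
          refine lintegral_mono fun z => ?_
          have hp := mul_nonneg (pinDens_pos G β x z.1 z.2).le (hW0 (ext0 x z.1))
          rw [← ENNReal.ofReal_mul hp, ← ENNReal.ofReal_mul (by positivity)]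
          refine ENNReal.ofReal_le_ofReal ?_
          rw [mul_left_comm]
          exact mul_le_mul_of_nonneg_left (obsRed_le_exp pv x y hpx hpy _) hp
      _ ≤ ENNReal.ofReal (pv x)⁻¹ * 1 := by
          rw [lintegral_const_mul' _ _ ENNReal.ofReal_ne_top]
          exact mul_le_mul' le_rfl (lintegral_tilt_le G hG β hβ hβpos x y)
      _ = _ := mul_one _
  · exact ENNReal.toReal_le_of_le_ofReal (by positivity)
      (lintegral_pinWg_le G β x y pv hpx hpy _ hW0 (mass_le_one G hG β hβ hβpos x))

/-! ### Conclusion -/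

/-- contribution of one root, limits: with pinning `ε = (π_i ε)_{i∈V}`,
the limits as `ε ↓ 0` of
`E_{μ^ε}[O^π_{xy} 1{R(T)={x}}]`,
`E_{μ^{ε_xδ_x}}[O^π_{xy} √(π_x e^{t_x}/Σ_i π_i e^{t_i}) Π_{i≠x} e^{−½επ_i e^{t_i}}]` and
`E_{μ^{ε_xδ_x}}[O^π_{xy}]` all exist and satisfy
`0 < L₁ = L₂ ≤ L₃ ≤ min{1/π_x, 1/π_y}`. -/
theorem stmt_9 {V : Type*} [Fintype V] [DecidableEq V]
    (G : SimpleGraph V) (hG : G.Connected)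
    (β : V → V → ℝ) (hβsymm : ∀ i j, β i j = β j i)
    (hβpos : ∀ i j, G.Adj i j → 0 < β i j)
    (x y : V) (hxy : x ≠ y)
    (pv : V → ℝ) (hpv : ∀ i, 0 ≤ pv i) (hpx : 0 < pv x) (hpy : 0 < pv y) :
    ∃ L₁ L₂ L₃ : ℝ,
      Filter.Tendsto
        (fun ε : ℝ => expect G β (pinOf pv ε)
          (fun t _ T => obs pv x y t T * (if roots T = {x} then 1 else 0)))
        (𝓝[>] (0 : ℝ)) (𝓝 L₁) ∧
      Filter.Tendsto
        (fun ε : ℝ => expect G β (singlePin x (pv x * ε))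
          (fun t _ T => obs pv x y t T *
            Real.sqrt (pv x * Real.exp (t x) / ∑ i, pv i * Real.exp (t i)) *
            ∏ i ∈ Finset.univ.erase x, Real.exp (-(1 / 2) * ε * pv i * Real.exp (t i))))
        (𝓝[>] (0 : ℝ)) (𝓝 L₂) ∧
      Filter.Tendsto
        (fun ε : ℝ => expect G β (singlePin x (pv x * ε)) (fun t _ T => obs pv x y t T))
        (𝓝[>] (0 : ℝ)) (𝓝 L₃) ∧
      0 < L₁ ∧ L₁ = L₂ ∧ L₂ ≤ L₃ ∧ L₃ ≤ min (pv x)⁻¹ (pv y)⁻¹ := by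
  have hρ : ∀ u, pv x / totS pv x u ≤ 1 := fun u =>
    (div_le_one (hpx.trans_le (le_totS pv hpv x u))).2 (le_totS pv hpv x u)
  refine ⟨_, _, _, tendsto_all G hG β hβsymm hβpos x y pv hpv hpx hpy,
    tendsto_weighted G hG β hβsymm hβpos x y pv hpv hpx hpy,
    tendsto_single G hG β hβsymm hβpos x y pv hpx hpy, ?_, rfl, ?_,
    sum_limVal_le G hG β hβsymm hβpos x y pv hpx hpy⟩
  · exact Finset.sum_pos (fun T hT => ENNReal.toReal_pos
      (limVal_pos G β hβpos x y pv hpx hpy hT (measurable_const.div (measurable_totS pv x))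
        fun u => div_pos hpx (hpx.trans_le (le_totS pv hpv x u)))
      (limVal_ne_top G hG β hβsymm hβpos x y pv hpx hpy hT hρ)) (treesAt_nonempty hG x)
  · exact Finset.sum_le_sum fun T hT => ENNReal.toReal_mono
      (limVal_ne_top G hG β hβsymm hβpos x y pv hpx hpy hT fun _ => le_rfl)
      (limVal_le G β x y pv hρ T)

end H22
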